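/- arXiv:1712.04016 — 2 statements merged into one kernel-verified Lean document; each statement's English description precedes it below -/
import Mathlib

section
/- Let k be a field, e ≥ 3 an integer, 𝓠 = k[X₁, …, X_e] the polynomial ring, and Q the localization of 𝓠 at the maximal ideal (X₁, …, X_e). Let Φ be a 3 × 3 symmetric matrix whose entries are linear forms (homogeneous polynomials of degree 1) in 𝓠, let 𝓘 be the ideal of 𝓠 generated by the 2 × 2 minors of Φ, and assume that 𝓘 contains a 𝓠-regular sequence of length 3. Then the extension I of 𝓘 to Q is a grade 3 perfect ideal of resolution format (1, 6, 8, 3), and I is not licci. -/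
/-- An ideal `I` in a commutative Noetherian local ring `Q` has **resolution format**
`(1, m, m+n-1, n)` if the minimal free resolution of `Q/I` over `Q` is
`0 → Q^n → Q^{m+n-1} → Q^m → Q`, i.e. there is an exact complex of free modules of the
indicated ranks augmented by `Q → Q/I → 0`, which is minimal in the sense that each
differential maps into `𝔫` times the target (`𝔫` the maximal ideal).  Equivalently, the
`i`-th entry of the format is the Betti number `dim_k Tor_i^Q(Q/I, k)`. -/
def HasResolutionFormat {Q : Type*} [CommRing Q] [IsLocalRing Q]
    (I : Ideal Q) (m n : ℕ) : Prop :=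
  ∃ (d1 : (Fin m → Q) →ₗ[Q] Q)
    (d2 : (Fin (m + n - 1) → Q) →ₗ[Q] (Fin m → Q))
    (d3 : (Fin n → Q) →ₗ[Q] (Fin (m + n - 1) → Q)),
    LinearMap.range d1 = I ∧
    LinearMap.range d2 = LinearMap.ker d1 ∧
    LinearMap.range d3 = LinearMap.ker d2 ∧
    LinearMap.ker d3 = ⊥ ∧
    I ≤ IsLocalRing.maximalIdeal Q ∧
    LinearMap.range d2 ≤ (IsLocalRing.maximalIdeal Q) • (⊤ : Submodule Q (Fin m → Q)) ∧
    LinearMap.range d3 ≤ (IsLocalRing.maximalIdeal Q) • (⊤ : Submodule Q (Fin (m + n - 1) → Q))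

/-- `I` is a grade `3` perfect ideal of resolution format `(1, m, m+n-1, n)`:
`I` contains a `Q`-regular sequence of length `3`, one has `m ≥ 3` and `n ≥ 1`, and the
minimal free resolution of `Q/I` has the format `(1, m, m+n-1, n)` (in particular `Q/I`
has projective dimension `3` as a `Q`-module, since `n ≥ 1`). -/
def IsGrade3PerfectOfFormat {Q : Type*} [CommRing Q] [IsLocalRing Q]
    (I : Ideal Q) (m n : ℕ) : Prop :=
  (∃ x y z : Q, x ∈ I ∧ y ∈ I ∧ z ∈ I ∧ RingTheory.Sequence.IsRegular Q [x, y, z]) ∧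
  3 ≤ m ∧ 1 ≤ n ∧ HasResolutionFormat I m n

/-- `J` is **directly linked** to `I` if there is a `Q`-regular sequence `x₁, x₂, x₃` of
elements of `I` with `J = (x₁, x₂, x₃) : I`. -/
def DirectlyLinked {Q : Type*} [CommRing Q] (I J : Ideal Q) : Prop :=
  ∃ x y z : Q, x ∈ I ∧ y ∈ I ∧ z ∈ I ∧ RingTheory.Sequence.IsRegular Q [x, y, z] ∧
    J = Submodule.colon (Ideal.span {x, y, z}) I

/-- `J` is **linked** to `I` if there is a finite chain of ideals
`I = J₀, J₁, …, J_r = J` in which `J_{i+1}` is directly linked to `J_i` for every `i`. -/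
def Linked {Q : Type*} [CommRing Q] (I J : Ideal Q) : Prop :=
  Relation.ReflTransGen (fun A B => DirectlyLinked A B) I J

/-- `I` is **licci** if it is linked to an ideal generated by a `Q`-regular sequence of
length `3`, i.e. `I` is in the linkage class of a complete intersection ideal. -/
def Licci {Q : Type*} [CommRing Q] (I : Ideal Q) : Prop :=
  ∃ C : Ideal Q, Linked I C ∧
    ∃ x y z : Q, RingTheory.Sequence.IsRegular Q [x, y, z] ∧ C = Ideal.span {x, y, z}

/-- The ideal of `2 × 2` minors of a matrix `Φ` over a commutative ring: the ideal
generated by the determinants of all `2 × 2` submatrices of `Φ`. -/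
def minors2 {R : Type*} [CommRing R] {p q : ℕ}
    (Φ : Matrix (Fin p) (Fin q) R) : Ideal R :=
  Ideal.span { d : R | ∃ (r : Fin 2 → Fin p) (c : Fin 2 → Fin q),
    Function.Injective r ∧ Function.Injective c ∧ d = (Φ.submatrix r c).det }


section PartG0
open RingTheory.Sequence
open scoped Pointwise

def GoodSeq {R : Type*} [CommRing R] : List R → Ideal R → Prop
  | [], _ => True
  | a :: t, I => (∀ r, a * r ∈ I → r ∈ I) ∧ GoodSeq t (I ⊔ Ideal.span {a})

lemma goodSeq_iff {R : Type*} [CommRing R] (l : List R) : ∀ (I : Ideal R),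
    GoodSeq l I ↔ IsWeaklyRegular (R ⧸ I) l := by
  induction l with
  | nil => intro I; simp [GoodSeq]
  | cons a t ih =>
    intro I
    rw [isWeaklyRegular_cons_iff, GoodSeq, ih]
    have h1 : (∀ r, a * r ∈ I → r ∈ I) ↔ IsSMulRegular (R ⧸ I) a := by
      rw [isSMulRegular_iff_right_eq_zero_of_smul]
      constructor
      · intro h m hm
        obtain ⟨r, rfl⟩ := Ideal.Quotient.mk_surjective m
        rw [Ideal.Quotient.eq_zero_iff_mem]
        apply h
        rw [← Ideal.Quotient.eq_zero_iff_mem, ← hm]; rfl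
      · intro h r hr
        rw [← Ideal.Quotient.eq_zero_iff_mem]
        apply h
        rw [← Ideal.Quotient.eq_zero_iff_mem] at hr
        rw [← hr]; rfl
    rw [h1]
    apply and_congr Iff.rfl
    have h2 : (a • (⊤ : Submodule R (R ⧸ I))) = Submodule.map I.mkQ (Ideal.span {a}) := by
      ext z
      constructor
      · intro hz
        obtain ⟨y, -, rfl⟩ := hz
        obtain ⟨r, rfl⟩ := Ideal.Quotient.mk_surjective y
        exact ⟨a * r, Ideal.mul_mem_right _ _ (Ideal.mem_span_singleton_self a), rfl⟩
      · rintro ⟨w, hw, rfl⟩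
        obtain ⟨r, rfl⟩ := Ideal.mem_span_singleton'.mp hw
        exact ⟨Ideal.Quotient.mk I r, trivial, by
          change Ideal.Quotient.mk I (a * r) = Ideal.Quotient.mk I (r * a)
          rw [mul_comm]⟩
    exact (LinearEquiv.isWeaklyRegular_congr
      ((Submodule.quotEquivOfEq _ _ h2).trans
        (Submodule.quotientQuotientEquivQuotientSup I (Ideal.span {a}))) t).symm

lemma goodSeq_bot {R : Type*} [CommRing R] (l : List R) :
    GoodSeq l ⊥ ↔ IsWeaklyRegular R l := by
  rw [goodSeq_iff]
  exact LinearEquiv.isWeaklyRegular_congr (Submodule.quotEquivOfEqBot ⊥ rfl) l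

lemma goodSeq_append {R : Type*} [CommRing R] (l l' : List R) : ∀ (I : Ideal R),
    GoodSeq (l ++ l') I ↔ GoodSeq l I ∧ GoodSeq l' (I ⊔ Ideal.ofList l) := by
  induction l with
  | nil => intro I; simp [GoodSeq]
  | cons a t ih =>
    intro I
    rw [List.cons_append, GoodSeq, ih, GoodSeq, Ideal.ofList_cons, sup_assoc, and_assoc]

end PartG0

section PartA
variable {T : Type*} [CommRing T]

def symD1 (a b c d f g : T) : (Fin 6 → T) →ₗ[T] T where
  toFun s := (d*g-f*f) * s 0 + (c*f-b*g) * s 1 + (b*f-c*d) * s 2 + (a*g-c*c) * s 3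
    + (b*c-a*f) * s 4 + (a*d-b*b) * s 5
  map_add' s t := by simp only [Pi.add_apply]; ring
  map_smul' r s := by simp only [Pi.smul_apply, smul_eq_mul, RingHom.id_apply]; ring

def symD2 (a b c d f g : T) : (Fin 8 → T) →ₗ[T] (Fin 6 → T) where
  toFun s := ![b * s 0 + c * s 1 + a * s 6,
    d * s 0 + f * s 1 + a * s 2 + c * s 3 + b * s 7,
    f * s 0 + g * s 1 + a * s 4 + b * s 5 + c * s 6 - c * s 7,
    b * s 2 + f * s 3 - d * s 6 + d * s 7,
    c * s 2 + g * s 3 + b * s 4 + d * s 5 - f * s 6,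
    c * s 4 + f * s 5 - g * s 7]
  map_add' s t := by
    funext i; fin_cases i <;> simp <;> ring
  map_smul' r s := by
    funext i; fin_cases i <;> simp <;> ring

def symD3 (a b c d f g : T) : (Fin 3 → T) →ₗ[T] (Fin 8 → T) where
  toFun s := ![a * s 0 - c * s 2, a * s 1 + b * s 2, - d * s 0 - f * s 1, b * s 1 + d * s 2,
    - f * s 0 - g * s 1, c * s 0 - g * s 2, - b * s 0 - c * s 1, - c * s 1 - f * s 2]
  map_add' s t := by
    funext i; fin_cases i <;> simp <;> ring
  map_smul' r s := by
    funext i; fin_cases i <;> simp <;> ring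

lemma symD1_apply (a b c d f g : T) (s) : symD1 a b c d f g s =
    (d*g-f*f) * s 0 + (c*f-b*g) * s 1 + (b*f-c*d) * s 2 + (a*g-c*c) * s 3
    + (b*c-a*f) * s 4 + (a*d-b*b) * s 5 := rfl
lemma symD2_apply (a b c d f g : T) (s) : symD2 a b c d f g s =
    ![b * s 0 + c * s 1 + a * s 6,
    d * s 0 + f * s 1 + a * s 2 + c * s 3 + b * s 7,
    f * s 0 + g * s 1 + a * s 4 + b * s 5 + c * s 6 - c * s 7,
    b * s 2 + f * s 3 - d * s 6 + d * s 7,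
    c * s 2 + g * s 3 + b * s 4 + d * s 5 - f * s 6,
    c * s 4 + f * s 5 - g * s 7] := rfl
lemma symD3_apply (a b c d f g : T) (s) : symD3 a b c d f g s =
    ![a * s 0 - c * s 2, a * s 1 + b * s 2, - d * s 0 - f * s 1, b * s 1 + d * s 2,
    - f * s 0 - g * s 1, c * s 0 - g * s 2, - b * s 0 - c * s 1, - c * s 1 - f * s 2] := rfl

lemma symD1_D2 (a b c d f g : T) (s) : symD1 a b c d f g (symD2 a b c d f g s) = 0 := by
  rw [symD1_apply, symD2_apply]; simp; ring
lemma symD2_D3 (a b c d f g : T) (s) : symD2 a b c d f g (symD3 a b c d f g s) = 0 := by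
  rw [symD2_apply, symD3_apply]; funext i; fin_cases i <;> simp <;> ring

def symHtpy (a b c d f g δ : T) : Prop :=
  (∀ s, symD1 a b c d f g s = 0 → ∃ t, symD2 a b c d f g t = δ • s) ∧
  (∀ s, symD2 a b c d f g s = 0 → ∃ t, symD3 a b c d f g t = δ • s) ∧
  (∀ s, symD3 a b c d f g s = 0 → δ • s = 0)

lemma symHtpy_0 (a b c d f g : T) : symHtpy a b c d f g (d*g - f*f) := by
  refine ⟨fun s h => ⟨![(g)*s 1 + (-f)*s 2 + (-c)*s 4 + (b)*s 5, (-f)*s 1 + (d)*s 2 + (c)*s 3, 0, (-f)*s 3 + (d)*s 4, 0, (-f)*s 5, (-g)*s 3 + (f)*s 4 + (-d)*s 5, (-d)*s 5], ?_⟩,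
    fun s h => ⟨![(-g)*s 2 + (f)*s 4, (f)*s 2 + (-d)*s 4, (-c)*s 2 + (-d)*s 5 + (f)*s 7], ?_⟩, fun s h => ?_⟩
  · rw [symD1_apply] at h
    rw [symD2_apply]; funext i; fin_cases i <;> simp
    · linear_combination -h
    · ring
    · ring
    · ring
    · ring
    · ring
  · rw [symD2_apply] at h
    have h0 := congrFun h 0
    have h1 := congrFun h 1
    have h2 := congrFun h 2
    have h3 := congrFun h 3
    have h4 := congrFun h 4
    have h5 := congrFun h 5
    simp at h0 h1 h2 h3 h4 h5
    rw [symD3_apply]; funext i; fin_cases i <;> simp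
    · linear_combination (-g)*h1 + (f)*h2 + (c)*h4 + (-b)*h5
    · linear_combination (f)*h1 + (-d)*h2 + (-c)*h3
    · linear_combination (0:T)
    · linear_combination (f)*h3 + (-d)*h4
    · linear_combination (0:T)
    · linear_combination (f)*h5
    · linear_combination (g)*h3 + (-f)*h4 + (d)*h5
    · linear_combination (d)*h5
  · rw [symD3_apply] at h
    have h0 := congrFun h 0
    have h1 := congrFun h 1
    have h2 := congrFun h 2
    have h3 := congrFun h 3
    have h4 := congrFun h 4
    have h5 := congrFun h 5
    have h6 := congrFun h 6
    have h7 := congrFun h 7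
    simp at h0 h1 h2 h3 h4 h5 h6 h7
    funext i; fin_cases i <;> simp
    · linear_combination (-g)*h2 + (f)*h4
    · linear_combination (f)*h2 + (-d)*h4
    · linear_combination (-c)*h2 + (-d)*h5 + (f)*h7

lemma symHtpy_1 (a b c d f g : T) : symHtpy a b c d f g (-b*g + c*f) := by
  refine ⟨fun s h => ⟨![(-g)*s 0 + (c)*s 2, (f)*s 0 + (-b)*s 2, (-g)*s 3 + (f)*s 4 + (-d)*s 5, (c)*s 3 + (-b)*s 4, 0, (c)*s 5, 0, (b)*s 5], ?_⟩,
    fun s h => ⟨![(-c)*s 4 + (g)*s 6, (b)*s 4 + (-f)*s 6, (b)*s 5 + (c)*s 6 + (-c)*s 7], ?_⟩, fun s h => ?_⟩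
  · rw [symD1_apply] at h
    rw [symD2_apply]; funext i; fin_cases i <;> simp
    · ring
    · linear_combination -h
    · ring
    · ring
    · ring
    · ring
  · rw [symD2_apply] at h
    have h0 := congrFun h 0
    have h1 := congrFun h 1
    have h2 := congrFun h 2
    have h3 := congrFun h 3
    have h4 := congrFun h 4
    have h5 := congrFun h 5
    simp at h0 h1 h2 h3 h4 h5
    rw [symD3_apply]; funext i; fin_cases i <;> simp
    · linear_combination (g)*h0 + (-c)*h2
    · linear_combination (-f)*h0 + (b)*h2
    · linear_combination (g)*h3 + (-f)*h4 + (d)*h5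
    · linear_combination (-c)*h3 + (b)*h4
    · linear_combination (0:T)
    · linear_combination (-c)*h5
    · linear_combination (0:T)
    · linear_combination (-b)*h5
  · rw [symD3_apply] at h
    have h0 := congrFun h 0
    have h1 := congrFun h 1
    have h2 := congrFun h 2
    have h3 := congrFun h 3
    have h4 := congrFun h 4
    have h5 := congrFun h 5
    have h6 := congrFun h 6
    have h7 := congrFun h 7
    simp at h0 h1 h2 h3 h4 h5 h6 h7
    funext i; fin_cases i <;> simp
    · linear_combination (-c)*h4 + (g)*h6
    · linear_combination (b)*h4 + (-f)*h6
    · linear_combination (b)*h5 + (c)*h6 + (-c)*h7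

lemma symHtpy_2 (a b c d f g : T) : symHtpy a b c d f g (b*f - c*d) := by
  refine ⟨fun s h => ⟨![(f)*s 0 + (-c)*s 1, (-d)*s 0 + (b)*s 1 + (-a)*s 3, (f)*s 3, 0, (f)*s 4 + (-d)*s 5, (-c)*s 4 + (b)*s 5, (c)*s 3, 0], ?_⟩,
    fun s h => ⟨![(c)*s 2 + (-f)*s 6, (f)*s 3 + (d)*s 7, (-c)*s 3 + (-b)*s 7], ?_⟩, fun s h => ?_⟩
  · rw [symD1_apply] at h
    rw [symD2_apply]; funext i; fin_cases i <;> simp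
    · ring
    · ring
    · linear_combination -h
    · ring
    · ring
    · ring
  · rw [symD2_apply] at h
    have h0 := congrFun h 0
    have h1 := congrFun h 1
    have h2 := congrFun h 2
    have h3 := congrFun h 3
    have h4 := congrFun h 4
    have h5 := congrFun h 5
    simp at h0 h1 h2 h3 h4 h5
    rw [symD3_apply]; funext i; fin_cases i <;> simp
    · linear_combination (-f)*h0 + (c)*h1
    · linear_combination (d)*h0 + (-b)*h1 + (a)*h3
    · linear_combination (-f)*h3
    · linear_combination (0:T)
    · linear_combination (-f)*h4 + (d)*h5
    · linear_combination (c)*h4 + (-b)*h5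
    · linear_combination (-c)*h3
    · linear_combination (0:T)
  · rw [symD3_apply] at h
    have h0 := congrFun h 0
    have h1 := congrFun h 1
    have h2 := congrFun h 2
    have h3 := congrFun h 3
    have h4 := congrFun h 4
    have h5 := congrFun h 5
    have h6 := congrFun h 6
    have h7 := congrFun h 7
    simp at h0 h1 h2 h3 h4 h5 h6 h7
    funext i; fin_cases i <;> simp
    · linear_combination (c)*h2 + (-f)*h6
    · linear_combination (f)*h3 + (d)*h7
    · linear_combination (-c)*h3 + (-b)*h7

lemma symHtpy_3 (a b c d f g : T) : symHtpy a b c d f g (a*g - c*c) := by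
  refine ⟨fun s h => ⟨![0, (-c)*s 0 + (a)*s 2, (g)*s 1 + (-f)*s 2 + (-c)*s 4 + (b)*s 5, (f)*s 0 + (-c)*s 1 + (a)*s 4, (-c)*s 5, 0, (g)*s 0 + (-c)*s 2, (-a)*s 5], ?_⟩,
    fun s h => ⟨![(g)*s 0 + (-c)*s 5, (-f)*s 0 + (-a)*s 4 + (c)*s 7, (c)*s 0 + (-a)*s 5], ?_⟩, fun s h => ?_⟩
  · rw [symD1_apply] at h
    rw [symD2_apply]; funext i; fin_cases i <;> simp
    · ring
    · ring
    · ring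
    · linear_combination -h
    · ring
    · ring
  · rw [symD2_apply] at h
    have h0 := congrFun h 0
    have h1 := congrFun h 1
    have h2 := congrFun h 2
    have h3 := congrFun h 3
    have h4 := congrFun h 4
    have h5 := congrFun h 5
    simp at h0 h1 h2 h3 h4 h5
    rw [symD3_apply]; funext i; fin_cases i <;> simp
    · linear_combination (0:T)
    · linear_combination (c)*h0 + (-a)*h2
    · linear_combination (-g)*h1 + (f)*h2 + (c)*h4 + (-b)*h5
    · linear_combination (-f)*h0 + (c)*h1 + (-a)*h4
    · linear_combination (c)*h5
    · linear_combination (0:T)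
    · linear_combination (-g)*h0 + (c)*h2
    · linear_combination (a)*h5
  · rw [symD3_apply] at h
    have h0 := congrFun h 0
    have h1 := congrFun h 1
    have h2 := congrFun h 2
    have h3 := congrFun h 3
    have h4 := congrFun h 4
    have h5 := congrFun h 5
    have h6 := congrFun h 6
    have h7 := congrFun h 7
    simp at h0 h1 h2 h3 h4 h5 h6 h7
    funext i; fin_cases i <;> simp
    · linear_combination (g)*h0 + (-c)*h5
    · linear_combination (-f)*h0 + (-a)*h4 + (c)*h7
    · linear_combination (c)*h0 + (-a)*h5

lemma symHtpy_4 (a b c d f g : T) : symHtpy a b c d f g (-a*f + b*c) := by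
  refine ⟨fun s h => ⟨![(c)*s 0, 0, (-f)*s 1 + (c)*s 3, (-d)*s 0 + (b)*s 1 + (-a)*s 3, (-f)*s 2 + (b)*s 5, (c)*s 2 + (-a)*s 5, (-f)*s 0, 0], ?_⟩,
    fun s h => ⟨![(-f)*s 0 + (-c)*s 6 + (c)*s 7, (-f)*s 1 + (-b)*s 7, (c)*s 1 + (a)*s 7], ?_⟩, fun s h => ?_⟩
  · rw [symD1_apply] at h
    rw [symD2_apply]; funext i; fin_cases i <;> simp
    · ring
    · ring
    · ring
    · ring
    · linear_combination -h
    · ring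
  · rw [symD2_apply] at h
    have h0 := congrFun h 0
    have h1 := congrFun h 1
    have h2 := congrFun h 2
    have h3 := congrFun h 3
    have h4 := congrFun h 4
    have h5 := congrFun h 5
    simp at h0 h1 h2 h3 h4 h5
    rw [symD3_apply]; funext i; fin_cases i <;> simp
    · linear_combination (-c)*h0
    · linear_combination (0:T)
    · linear_combination (f)*h1 + (-c)*h3
    · linear_combination (d)*h0 + (-b)*h1 + (a)*h3
    · linear_combination (f)*h2 + (-b)*h5
    · linear_combination (-c)*h2 + (a)*h5
    · linear_combination (f)*h0
    · linear_combination (0:T)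
  · rw [symD3_apply] at h
    have h0 := congrFun h 0
    have h1 := congrFun h 1
    have h2 := congrFun h 2
    have h3 := congrFun h 3
    have h4 := congrFun h 4
    have h5 := congrFun h 5
    have h6 := congrFun h 6
    have h7 := congrFun h 7
    simp at h0 h1 h2 h3 h4 h5 h6 h7
    funext i; fin_cases i <;> simp
    · linear_combination (-f)*h0 + (-c)*h6 + (c)*h7
    · linear_combination (-f)*h1 + (-b)*h7
    · linear_combination (c)*h1 + (a)*h7

lemma symHtpy_5 (a b c d f g : T) : symHtpy a b c d f g (a*d - b*b) := by
  refine ⟨fun s h => ⟨![(-b)*s 0, 0, (d)*s 1 + (-b)*s 3, 0, (d)*s 2 + (c)*s 3 + (-b)*s 4, (f)*s 0 + (-c)*s 1 + (-b)*s 2 + (a)*s 4, (d)*s 0, (d)*s 0 + (-b)*s 1 + (a)*s 3], ?_⟩,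
    fun s h => ⟨![(d)*s 0 + (c)*s 3 + (b)*s 6, (d)*s 1 + (-b)*s 3, (-b)*s 1 + (a)*s 3], ?_⟩, fun s h => ?_⟩
  · rw [symD1_apply] at h
    rw [symD2_apply]; funext i; fin_cases i <;> simp
    · ring
    · ring
    · ring
    · ring
    · ring
    · linear_combination -h
  · rw [symD2_apply] at h
    have h0 := congrFun h 0
    have h1 := congrFun h 1
    have h2 := congrFun h 2
    have h3 := congrFun h 3
    have h4 := congrFun h 4
    have h5 := congrFun h 5
    simp at h0 h1 h2 h3 h4 h5
    rw [symD3_apply]; funext i; fin_cases i <;> simp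
    · linear_combination (b)*h0
    · linear_combination (0:T)
    · linear_combination (-d)*h1 + (b)*h3
    · linear_combination (0:T)
    · linear_combination (-d)*h2 + (-c)*h3 + (b)*h4
    · linear_combination (-f)*h0 + (c)*h1 + (b)*h2 + (-a)*h4
    · linear_combination (-d)*h0
    · linear_combination (-d)*h0 + (b)*h1 + (-a)*h3
  · rw [symD3_apply] at h
    have h0 := congrFun h 0
    have h1 := congrFun h 1
    have h2 := congrFun h 2
    have h3 := congrFun h 3
    have h4 := congrFun h 4
    have h5 := congrFun h 5
    have h6 := congrFun h 6
    have h7 := congrFun h 7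
    simp at h0 h1 h2 h3 h4 h5 h6 h7
    funext i; fin_cases i <;> simp
    · linear_combination (d)*h0 + (c)*h3 + (b)*h6
    · linear_combination (d)*h1 + (-b)*h3
    · linear_combination (-b)*h1 + (a)*h3

end PartA

section PartA2
variable {T : Type*} [CommRing T]

def symI (a b c d f g : T) : Ideal T :=
  Ideal.span {d*g-f*f, c*f-b*g, b*f-c*d, a*g-c*c, b*c-a*f, a*d-b*b}

lemma symHtpy_mem (a b c d f g x : T) (hx : x ∈ symI a b c d f g) : symHtpy a b c d f g x := by
  have hz : symHtpy a b c d f g 0 :=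
    ⟨fun s _ => ⟨0, by simp⟩, fun s _ => ⟨0, by simp⟩, fun s _ => by simp⟩
  refine Submodule.span_induction ?_ hz ?_ ?_ hx
  · rintro y hy
    simp only [Set.mem_insert_iff, Set.mem_singleton_iff] at hy
    rcases hy with rfl | rfl | rfl | rfl | rfl | rfl
    · exact symHtpy_0 a b c d f g
    · convert symHtpy_1 a b c d f g using 1; ring
    · exact symHtpy_2 a b c d f g
    · exact symHtpy_3 a b c d f g
    · convert symHtpy_4 a b c d f g using 1; ring
    · exact symHtpy_5 a b c d f g
  · rintro x y - - ⟨h1, h2, h3⟩ ⟨k1, k2, k3⟩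
    refine ⟨fun s hs => ?_, fun s hs => ?_, fun s hs => ?_⟩
    · obtain ⟨t, ht⟩ := h1 s hs; obtain ⟨t', ht'⟩ := k1 s hs
      exact ⟨t + t', by rw [map_add, ht, ht', add_smul]⟩
    · obtain ⟨t, ht⟩ := h2 s hs; obtain ⟨t', ht'⟩ := k2 s hs
      exact ⟨t + t', by rw [map_add, ht, ht', add_smul]⟩
    · rw [add_smul, h3 s hs, k3 s hs, add_zero]
  · rintro r x - ⟨h1, h2, h3⟩
    refine ⟨fun s hs => ?_, fun s hs => ?_, fun s hs => ?_⟩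
    · obtain ⟨t, ht⟩ := h1 s hs
      exact ⟨r • t, by rw [map_smul, ht, smul_smul, smul_eq_mul]⟩
    · obtain ⟨t, ht⟩ := h2 s hs
      exact ⟨r • t, by rw [map_smul, ht, smul_smul, smul_eq_mul]⟩
    · rw [smul_eq_mul, mul_smul, h3 s hs, smul_zero]

lemma good3 {x y z : T} (h : GoodSeq [x, y, z] (⊥ : Ideal T)) :
    (∀ r, x * r = 0 → r = 0) ∧ (∀ r s, y * r = x * s → ∃ t, r = x * t) ∧
    (∀ r s t, z * r = x * s + y * t → ∃ u v, r = x * u + y * v) := by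
  simp only [GoodSeq, bot_sup_eq, Ideal.mem_bot, and_true] at h
  obtain ⟨h1, h2, h3⟩ := h
  refine ⟨h1, fun r s hr => ?_, fun r s t hr => ?_⟩
  · obtain ⟨u, hu⟩ := Ideal.mem_span_singleton'.mp
      (h2 r (by rw [hr]; exact Ideal.mul_mem_right _ _ (Ideal.mem_span_singleton_self x)))
    exact ⟨u, by rw [← hu, mul_comm]⟩
  · have := h3 r (by
      rw [hr]
      exact Submodule.add_mem_sup (Ideal.mul_mem_right _ _ (Ideal.mem_span_singleton_self x))
        (Ideal.mul_mem_right _ _ (Ideal.mem_span_singleton_self y)))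
    obtain ⟨p, hp, q, hq, hpq⟩ := Submodule.mem_sup.mp this
    obtain ⟨u, rfl⟩ := Ideal.mem_span_singleton'.mp hp
    obtain ⟨v, rfl⟩ := Ideal.mem_span_singleton'.mp hq
    exact ⟨u, v, by rw [← hpq]; ring⟩

theorem symExact (a b c d f g : T) {x y z : T} (hx : x ∈ symI a b c d f g)
    (hy : y ∈ symI a b c d f g) (hz : z ∈ symI a b c d f g)
    (h : GoodSeq [x, y, z] (⊥ : Ideal T)) :
    (∀ s, symD1 a b c d f g s = 0 → ∃ t, symD2 a b c d f g t = s) ∧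
    (∀ s, symD2 a b c d f g s = 0 → ∃ t, symD3 a b c d f g t = s) ∧
    (∀ s, symD3 a b c d f g s = 0 → s = 0) := by
  obtain ⟨r1, r2, r3⟩ := good3 h
  obtain ⟨x1, x2, x3⟩ := symHtpy_mem a b c d f g x hx
  obtain ⟨y1, y2, y3⟩ := symHtpy_mem a b c d f g y hy
  obtain ⟨z1, z2, z3⟩ := symHtpy_mem a b c d f g z hz
  have R1 : ∀ {n : ℕ} (p q : Fin n → T), x • p = x • q → p = q := by
    intro n p q hpq
    funext i
    have := congrFun hpq i
    simp only [Pi.smul_apply, smul_eq_mul] at this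
    exact sub_eq_zero.mp (r1 _ (by rw [mul_sub, this, sub_self]))
  have R2 : ∀ {n : ℕ} (p q : Fin n → T), y • p = x • q → ∃ t, p = x • t := by
    intro n p q hpq
    have : ∀ i, ∃ t, p i = x * t := fun i => r2 _ _ (congrFun hpq i)
    choose t ht using this
    exact ⟨t, funext ht⟩
  have R3 : ∀ {n : ℕ} (p q r : Fin n → T), z • p = x • q + y • r → ∃ u v, p = x • u + y • v := by
    intro n p q r hpq
    have : ∀ i, ∃ u v, p i = x * u + y * v := fun i => r3 _ _ _ (congrFun hpq i)
    choose u v ht using this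
    exact ⟨u, v, funext ht⟩
  have E3 : ∀ s, symD3 a b c d f g s = 0 → s = 0 := fun s hs =>
    R1 _ _ (by rw [x3 s hs, smul_zero])
  have E3' : ∀ s t, symD3 a b c d f g s = symD3 a b c d f g t → s = t := fun s t hst =>
    sub_eq_zero.mp (E3 _ (by rw [map_sub, hst, sub_self]))
  have E2 : ∀ s, symD2 a b c d f g s = 0 → ∃ t, symD3 a b c d f g t = s := by
    intro s hs
    obtain ⟨p, hp⟩ := x2 s hs
    obtain ⟨q, hq⟩ := y2 s hs
    obtain ⟨t, rfl⟩ := R2 p q (E3' _ _ (by rw [map_smul, map_smul, hp, hq, smul_comm]))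
    exact ⟨t, R1 _ _ (by rw [← hp, map_smul])⟩
  refine ⟨fun s hs => ?_, E2, E3⟩
  obtain ⟨f1, h1⟩ := x1 s hs
  obtain ⟨f2, h2⟩ := y1 s hs
  obtain ⟨f3, h3⟩ := z1 s hs
  obtain ⟨g12, k12⟩ := E2 (y • f1 - x • f2) (by
    rw [map_sub, map_smul, map_smul, h1, h2, smul_comm, sub_self])
  obtain ⟨g13, k13⟩ := E2 (z • f1 - x • f3) (by
    rw [map_sub, map_smul, map_smul, h1, h3, smul_comm, sub_self])
  obtain ⟨g23, k23⟩ := E2 (z • f2 - y • f3) (by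
    rw [map_sub, map_smul, map_smul, h2, h3, smul_comm, sub_self])
  obtain ⟨u, v, huv⟩ := R3 g12 (-g23) g13 (E3' _ _ (by
    rw [map_add, map_smul, map_smul, map_smul, map_neg, k12, k13, k23]
    module))
  have key : y • (f1 - symD3 a b c d f g v) = x • (f2 + symD3 a b c d f g u) := by
    rw [huv, map_add, map_smul, map_smul] at k12
    rw [smul_sub, smul_add, sub_eq_iff_eq_add, add_assoc, k12]; module
  obtain ⟨t, ht⟩ := R2 _ _ key
  refine ⟨t, R1 _ _ ?_⟩
  rw [← map_smul, ← ht, map_sub, symD2_D3, sub_zero, h1]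

lemma range_symD1 (a b c d f g : T) : LinearMap.range (symD1 a b c d f g) = symI a b c d f g := by
  apply le_antisymm
  · rintro _ ⟨s, rfl⟩
    rw [symD1_apply]
    have : ∀ w ∈ ({d*g-f*f, c*f-b*g, b*f-c*d, a*g-c*c, b*c-a*f, a*d-b*b} : Set T), ∀ r,
      w * r ∈ symI a b c d f g := fun w hw r => Ideal.mul_mem_right _ _ (Ideal.subset_span hw)
    refine add_mem (add_mem (add_mem (add_mem (add_mem ?_ ?_) ?_) ?_) ?_) ?_ <;>
      exact this _ (by simp) _
  · rw [symI, Ideal.span_le]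
    rintro w hw
    simp only [Set.mem_insert_iff, Set.mem_singleton_iff] at hw
    rcases hw with rfl | rfl | rfl | rfl | rfl | rfl
    · exact ⟨![1,0,0,0,0,0], by simp [symD1_apply]⟩
    · exact ⟨![0,1,0,0,0,0], by simp [symD1_apply]⟩
    · exact ⟨![0,0,1,0,0,0], by simp [symD1_apply]⟩
    · exact ⟨![0,0,0,1,0,0], by simp [symD1_apply]⟩
    · exact ⟨![0,0,0,0,1,0], by simp [symD1_apply]⟩
    · exact ⟨![0,0,0,0,0,1], by simp [symD1_apply]⟩

lemma map_symI {T' : Type*} [CommRing T'] (φ : T →+* T') (a b c d f g : T) :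
    (symI a b c d f g).map φ = symI (φ a) (φ b) (φ c) (φ d) (φ f) (φ g) := by
  rw [symI, Ideal.map_span, symI]
  congr 1
  simp [Set.image_insert_eq]

end PartA2

section PartA3
variable {T : Type*} [CommRing T]

lemma memOfEq {I : Ideal T} {x y : T} (h : y ∈ I) (e : x = y) : x ∈ I := e ▸ h

lemma minors2_eq_symI (Φ : Matrix (Fin 3) (Fin 3) T) (h : Φ.IsSymm) :
    minors2 Φ = symI (Φ 0 0) (Φ 0 1) (Φ 0 2) (Φ 1 1) (Φ 1 2) (Φ 2 2) := by
  have e1 : Φ 1 0 = Φ 0 1 := h.apply 0 1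
  have e2 : Φ 2 0 = Φ 0 2 := h.apply 0 2
  have e3 : Φ 2 1 = Φ 1 2 := h.apply 1 2
  apply le_antisymm
  · rw [minors2, Ideal.span_le]
    rintro _ ⟨r, c, hr, hc, rfl⟩
    rw [Matrix.det_fin_two]
    simp only [Matrix.submatrix_apply]
    have hr' : r 0 ≠ r 1 := fun h => by simpa using hr h
    have hc' : c 0 ≠ c 1 := fun h => by simpa using hc h
    generalize r 0 = i, r 1 = j, c 0 = k, c 1 = l at hr' hc'
    have base : ∀ i j k l : Fin 3, i < j → k < l →
        Φ i k * Φ j l - Φ i l * Φ j k ∈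
          symI (Φ 0 0) (Φ 0 1) (Φ 0 2) (Φ 1 1) (Φ 1 2) (Φ 2 2) := by
      have sp := @Ideal.subset_span T _ {Φ 1 1*Φ 2 2-Φ 1 2*Φ 1 2, Φ 0 2*Φ 1 2-Φ 0 1*Φ 2 2,
        Φ 0 1*Φ 1 2-Φ 0 2*Φ 1 1, Φ 0 0*Φ 2 2-Φ 0 2*Φ 0 2, Φ 0 1*Φ 0 2-Φ 0 0*Φ 1 2,
        Φ 0 0*Φ 1 1-Φ 0 1*Φ 0 1}
      have q0 := @sp (Φ 1 1*Φ 2 2-Φ 1 2*Φ 1 2) (by simp)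
      have q1 := @sp (Φ 0 2*Φ 1 2-Φ 0 1*Φ 2 2) (by simp)
      have q2 := @sp (Φ 0 1*Φ 1 2-Φ 0 2*Φ 1 1) (by simp)
      have q3 := @sp (Φ 0 0*Φ 2 2-Φ 0 2*Φ 0 2) (by simp)
      have q4 := @sp (Φ 0 1*Φ 0 2-Φ 0 0*Φ 1 2) (by simp)
      have q5 := @sp (Φ 0 0*Φ 1 1-Φ 0 1*Φ 0 1) (by simp)
      intro i j k l hij hkl
      unfold symI
      fin_cases i <;> fin_cases j <;> (try exact absurd hij (by decide)) <;>
        fin_cases k <;> fin_cases l <;> (try exact absurd hkl (by decide)) <;>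
        simp only [Fin.mk_one, Fin.zero_eta, Fin.reduceFinMk, Fin.isValue, e1, e2, e3] <;>
        first
        | exact memOfEq (q0) (by ring1) | exact memOfEq (neg_mem q1) (by ring1)
        | exact memOfEq (q2) (by ring1) | exact memOfEq (q3) (by ring1)
        | exact memOfEq (neg_mem q4) (by ring1) | exact memOfEq (q5) (by ring1)
    rcases lt_or_gt_of_ne hr' with h1 | h1 <;> rcases lt_or_gt_of_ne hc' with h2 | h2
    · exact base i j k l h1 h2
    · exact memOfEq (neg_mem (base i j l k h1 h2)) (by ring1)
    · exact memOfEq (neg_mem (base j i k l h1 h2)) (by ring1)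
    · exact memOfEq ((base j i l k h1 h2)) (by ring1)
  · rw [symI, Ideal.span_le]
    have key : ∀ i j k l : Fin 3, i ≠ j → k ≠ l →
        Φ i k * Φ j l - Φ i l * Φ j k ∈ minors2 Φ := by
      intro i j k l hij hkl
      apply Ideal.subset_span
      refine ⟨![i, j], ![k, l], ?_, ?_, ?_⟩
      · intro p q hpq; fin_cases p <;> fin_cases q <;> simp_all
      · intro p q hpq; fin_cases p <;> fin_cases q <;> simp_all
      · rw [Matrix.det_fin_two]; rfl
    rintro w hw
    simp only [Set.mem_insert_iff, Set.mem_singleton_iff] at hw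
    rcases hw with rfl | rfl | rfl | rfl | rfl | rfl
    · exact memOfEq (key 1 2 1 2 (by decide) (by decide)) (by simp only [e1, e2, e3]; try ring1)
    · exact memOfEq (key 0 2 2 1 (by decide) (by decide)) (by simp only [e1, e2, e3]; try ring1)
    · exact memOfEq (key 0 1 1 2 (by decide) (by decide)) (by simp only [e1, e2, e3]; try ring1)
    · exact memOfEq (key 0 2 0 2 (by decide) (by decide)) (by simp only [e1, e2, e3]; try ring1)
    · exact memOfEq (key 0 1 2 0 (by decide) (by decide)) (by simp only [e1, e2, e3]; try ring1)
    · exact memOfEq (key 0 1 0 1 (by decide) (by decide)) (by simp only [e1, e2, e3]; try ring1)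

lemma mem_ideal_smul_top_pi {n : ℕ} (J : Ideal T) (v : Fin n → T) (h : ∀ i, v i ∈ J) :
    v ∈ J • (⊤ : Submodule T (Fin n → T)) := by
  rw [← Finset.univ_sum_single v]
  refine Submodule.sum_mem _ fun i _ => ?_
  have : Pi.single i (v i) = v i • (Pi.single i 1 : Fin n → T) := by
    ext j; by_cases hj : j = i
    · subst hj; simp
    · simp [Pi.single_eq_of_ne hj]
  rw [this]
  exact Submodule.smul_mem_smul (h i) trivial

lemma symD2_mem (J : Ideal T) (a b c d f g : T) (ha : a ∈ J) (hb : b ∈ J) (hc : c ∈ J)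
    (hd : d ∈ J) (hf : f ∈ J) (hg : g ∈ J) (s) (i) : symD2 a b c d f g s i ∈ J := by
  have L : ∀ {w : T} (_ : w ∈ J) (r : T), w * r ∈ J := fun hw r => Ideal.mul_mem_right _ _ hw
  rw [symD2_apply]
  fin_cases i <;> simp <;>
    repeat first | exact L ‹_› _ | apply add_mem | apply sub_mem

lemma symD3_mem (J : Ideal T) (a b c d f g : T) (ha : a ∈ J) (hb : b ∈ J) (hc : c ∈ J)
    (hd : d ∈ J) (hf : f ∈ J) (hg : g ∈ J) (s) (i) : symD3 a b c d f g s i ∈ J := by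
  have L : ∀ {w : T} (_ : w ∈ J) (r : T), w * r ∈ J := fun hw r => Ideal.mul_mem_right _ _ hw
  rw [symD3_apply]
  fin_cases i <;> simp only [neg_mul] <;> simp <;>
    repeat first | exact L ‹_› _ | exact neg_mem (L ‹_› _) | apply add_mem | apply sub_mem

theorem symI_format [IsLocalRing T] (a b c d f g : T) (hm : ∀ w ∈ ({a, b, c, d, f, g} : Set T),
      w ∈ IsLocalRing.maximalIdeal T)
    (h : ∃ x y z : T, x ∈ symI a b c d f g ∧ y ∈ symI a b c d f g ∧ z ∈ symI a b c d f g ∧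
      RingTheory.Sequence.IsRegular T [x, y, z]) :
    IsGrade3PerfectOfFormat (symI a b c d f g) 6 3 := by
  refine ⟨h, by norm_num, by norm_num, ?_⟩
  obtain ⟨x, y, z, hx, hy, hz, hr⟩ := h
  obtain ⟨E1, E2, E3⟩ := symExact a b c d f g hx hy hz ((goodSeq_bot _).mpr hr.1)
  have ha := hm a (by simp)
  have hb := hm b (by simp)
  have hc := hm c (by simp)
  have hd := hm d (by simp)
  have hf := hm f (by simp)
  have hg := hm g (by simp)
  have L : ∀ {w : T} (_ : w ∈ IsLocalRing.maximalIdeal T) (r : T),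
    w * r ∈ IsLocalRing.maximalIdeal T := fun hw r => Ideal.mul_mem_right _ _ hw
  refine ⟨symD1 a b c d f g, symD2 a b c d f g, symD3 a b c d f g, range_symD1 .., ?_, ?_, ?_,
    ?_, ?_, ?_⟩
  · ext s
    exact ⟨fun ⟨t, ht⟩ => by rw [LinearMap.mem_ker, ← ht, symD1_D2], fun hs => E1 s hs⟩
  · ext s
    exact ⟨fun ⟨t, ht⟩ => by rw [LinearMap.mem_ker, ← ht, symD2_D3], fun hs => E2 s hs⟩
  · rw [LinearMap.ker_eq_bot']; exact E3
  · rw [symI, Ideal.span_le]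
    intro w hw
    simp only [Set.mem_insert_iff, Set.mem_singleton_iff] at hw
    rcases hw with rfl | rfl | rfl | rfl | rfl | rfl <;> exact sub_mem (L ‹_› _) (L ‹_› _)
  · rintro _ ⟨s, rfl⟩
    exact mem_ideal_smul_top_pi (n := 6) _ _ fun i => symD2_mem _ _ _ _ _ _ _ ha hb hc hd hf hg _ _
  · rintro _ ⟨s, rfl⟩
    exact mem_ideal_smul_top_pi (n := 8) _ _ fun i => symD3_mem _ _ _ _ _ _ _ ha hb hc hd hf hg _ _

end PartA3

section PartB
open RingTheory.Sequence
variable {R : Type*} [CommRing R]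

/-- regular modulo an ideal -/
def RegMod (a : R) (I : Ideal R) : Prop := ∀ r, a * r ∈ I → r ∈ I

lemma exists_primes_regMod [IsNoetherianRing R] (c : Ideal R) :
    ∃ S : Set (Ideal R), S.Finite ∧ (∀ P ∈ S, P.IsPrime ∧ ∃ r, r ∉ c ∧ ∀ p ∈ P, p * r ∈ c) ∧
      ∀ a, (∀ P ∈ S, a ∉ P) → RegMod a c := by
  refine ⟨associatedPrimes R (R ⧸ c), associatedPrimes.finite R (R ⧸ c), fun P hP => ?_,
    fun a ha r hr => ?_⟩
  · rw [AssociatedPrimes.mem_iff, isAssociatedPrime_iff] at hP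
    obtain ⟨hP, x, rfl⟩ := hP
    obtain ⟨r, rfl⟩ := Ideal.Quotient.mk_surjective x
    refine ⟨hP, r, fun hr => hP.ne_top ?_, fun p hp => ?_⟩
    · rw [Ideal.Quotient.eq_zero_iff_mem.mpr hr]; simp
    · rw [Submodule.mem_colon_singleton] at hp
      rw [← Ideal.Quotient.eq_zero_iff_mem]
      exact hp
  · by_contra hrc
    have : a ∈ ⋃ p ∈ associatedPrimes R (R ⧸ c), (p : Set R) := by
      rw [biUnion_associatedPrimes_eq_zero_divisors]
      exact ⟨Ideal.Quotient.mk c r, by rwa [Ne, Ideal.Quotient.eq_zero_iff_mem], by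
        rw [← Ideal.Quotient.eq_zero_iff_mem] at hr; exact hr⟩
    simp only [Set.mem_iUnion] at this
    obtain ⟨P, hP, haP⟩ := this
    exact ha P hP haP

lemma exists_regMod_two [IsNoetherianRing R] (I c1 c2 : Ideal R) {a b : R} (ha : a ∈ I)
    (hb : b ∈ I) (hac : RegMod a c1) (hbc : RegMod b c2) :
    ∃ z ∈ I, RegMod z c1 ∧ RegMod z c2 := by
  obtain ⟨S, hS, hS1, hS2⟩ := exists_primes_regMod c1
  obtain ⟨S', hS', hS1', hS2'⟩ := exists_primes_regMod c2
  by_contra hcon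
  have hsub : (I : Set R) ⊆ ⋃ P ∈ S ∪ S', (P : Set R) := by
    intro z hz
    by_contra hz'
    simp only [Set.mem_iUnion, not_exists] at hz'
    exact hcon ⟨z, hz, hS2 z fun P hP => hz' P (Or.inl hP), hS2' z fun P hP => hz' P (Or.inr hP)⟩
  obtain ⟨P, hP, hIP⟩ := (I.subset_union_prime_finite (hS.union hS') (f := id) 0 0 (by
    rintro P (hP | hP) - -
    · exact (hS1 P hP).1
    · exact (hS1' P hP).1)).1 hsub
  rcases hP with hP | hP
  · obtain ⟨-, r, hr, h⟩ := hS1 P hP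
    exact hr (hac r (h a (hIP ha)))
  · obtain ⟨-, r, hr, h⟩ := hS1' P hP
    exact hr (hbc r (h b (hIP hb)))

/-- the submodule `(c : I)/c` of `R/c` -/
def Wq (I c : Ideal R) : Submodule R (R ⧸ c) :=
  Submodule.map (Submodule.mkQ c) (Submodule.colon c (I : Set R))

lemma mem_colon_iff (I c : Ideal R) (r : R) :
    r ∈ Submodule.colon c (I : Set R) ↔ ∀ i ∈ I, r * i ∈ c := Submodule.mem_colon

lemma mk_mem_Wq (I c : Ideal R) (r : R) :
    c.mkQ r ∈ Wq I c ↔ ∀ i ∈ I, r * i ∈ c := by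
  rw [← mem_colon_iff]
  constructor
  · rintro ⟨s, hs, hsr⟩
    have h1 : s - r ∈ c := (Submodule.Quotient.eq c).mp hsr
    have h2 : r = s - (s - r) := by ring
    rw [h2]
    refine sub_mem hs ((mem_colon_iff _ _ _).mpr fun i _ => Ideal.mul_mem_right _ _ h1)
  · intro h; exact ⟨r, h, rfl⟩

lemma Wq_exchange (I c : Ideal R) {a b : R} (ha : a ∈ I) (hb : b ∈ I) (hac : RegMod a c)
    (hbc : RegMod b c) :
    Nonempty (Wq I (c ⊔ Ideal.span {a}) ≃ₗ[R] Wq I (c ⊔ Ideal.span {b})) := by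
  have ms : ∀ (a r : R), r ∈ c ⊔ Ideal.span {a} ↔ ∃ t, r - a * t ∈ c := by
    intro a r
    rw [Submodule.mem_sup]
    constructor
    · rintro ⟨y, hy, z, hz, rfl⟩
      obtain ⟨t, rfl⟩ := Ideal.mem_span_singleton'.mp hz
      exact ⟨t, by convert hy using 1; ring⟩
    · rintro ⟨t, ht⟩
      exact ⟨_, ht, a * t, Ideal.mul_mem_right _ _ (Ideal.mem_span_singleton_self a), by ring⟩
  let Z : Submodule R (R × R) :=
    { carrier := {p | b * p.1 - a * p.2 ∈ c ∧ ∀ i ∈ I, p.1 * i ∈ c ⊔ Ideal.span {a}}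
      add_mem' := by
        rintro p q ⟨h1, h2⟩ ⟨h3, h4⟩
        refine ⟨?_, fun i hi => ?_⟩
        · have := add_mem h1 h3
          convert this using 1
          simp only [Prod.fst_add, Prod.snd_add]; ring
        · rw [Prod.fst_add, add_mul]; exact add_mem (h2 i hi) (h4 i hi)
      zero_mem' := by simp
      smul_mem' := by
        rintro r p ⟨h1, h2⟩
        refine ⟨?_, fun i hi => ?_⟩
        · have := Ideal.mul_mem_left _ r h1
          convert this using 1
          simp only [Prod.smul_fst, Prod.smul_snd, smul_eq_mul]; ring
        · rw [Prod.smul_fst, smul_eq_mul, mul_assoc]; exact Ideal.mul_mem_left _ r (h2 i hi) }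
  let α : Z →ₗ[R] (R ⧸ (c ⊔ Ideal.span {a})) :=
    (c ⊔ Ideal.span {a}).mkQ ∘ₗ LinearMap.fst R R R ∘ₗ Z.subtype
  let β : Z →ₗ[R] (R ⧸ (c ⊔ Ideal.span {b})) :=
    (c ⊔ Ideal.span {b}).mkQ ∘ₗ LinearMap.snd R R R ∘ₗ Z.subtype
  have hk : LinearMap.ker α = LinearMap.ker β := by
    ext ⟨⟨p, q⟩, h1, h2⟩
    have e1 : (⟨⟨p, q⟩, h1, h2⟩ : Z) ∈ LinearMap.ker α ↔ p ∈ c ⊔ Ideal.span {a} := by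
      rw [LinearMap.mem_ker]; exact Submodule.Quotient.mk_eq_zero _
    have e2 : (⟨⟨p, q⟩, h1, h2⟩ : Z) ∈ LinearMap.ker β ↔ q ∈ c ⊔ Ideal.span {b} := by
      rw [LinearMap.mem_ker]; exact Submodule.Quotient.mk_eq_zero _
    rw [e1, e2, ms, ms]
    simp only at h1
    constructor
    · rintro ⟨t, ht⟩
      refine ⟨t, hac _ ?_⟩
      have := sub_mem (Ideal.mul_mem_left _ b ht) h1
      convert this using 1; ring
    · rintro ⟨t, ht⟩
      refine ⟨t, hbc _ ?_⟩
      have := add_mem (Ideal.mul_mem_left _ a ht) h1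
      convert this using 1; ring
  have hra : LinearMap.range α = Wq I (c ⊔ Ideal.span {a}) := by
    apply le_antisymm
    · rintro _ ⟨⟨⟨p, q⟩, h1, h2⟩, rfl⟩
      exact (mk_mem_Wq _ _ p).mpr h2
    · intro w hw
      obtain ⟨p, rfl⟩ := Submodule.mkQ_surjective _ w
      rw [mk_mem_Wq] at hw
      have := hw b hb
      rw [ms] at this
      obtain ⟨q, hq⟩ := this
      exact ⟨⟨⟨p, q⟩, by simpa [mul_comm] using hq, hw⟩, rfl⟩
  have hrb : LinearMap.range β = Wq I (c ⊔ Ideal.span {b}) := by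
    apply le_antisymm
    · rintro _ ⟨⟨⟨p, q⟩, h1, h2⟩, rfl⟩
      refine (mk_mem_Wq _ _ q).mpr fun i hi => ?_
      have := h2 i hi
      rw [ms] at this ⊢
      obtain ⟨t, ht⟩ := this
      simp only at h1 ht
      refine ⟨t, hac _ ?_⟩
      have := sub_mem (Ideal.mul_mem_left _ b ht) (Ideal.mul_mem_left _ i h1)
      convert this using 1; ring
    · intro w hw
      obtain ⟨q, rfl⟩ := Submodule.mkQ_surjective _ w
      rw [mk_mem_Wq] at hw
      have := hw a ha
      rw [ms] at this
      obtain ⟨p, hp⟩ := this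
      have h1 : b * p - a * q ∈ c := by
        have := neg_mem hp
        convert this using 1; ring
      refine ⟨⟨⟨p, q⟩, h1, fun i hi => ?_⟩, rfl⟩
      have := hw i hi
      rw [ms] at this ⊢
      obtain ⟨t, ht⟩ := this
      refine ⟨t, hbc _ ?_⟩
      have := add_mem (Ideal.mul_mem_left _ a ht) (Ideal.mul_mem_left _ i h1)
      simp only
      convert this using 1; ring
  exact ⟨(LinearEquiv.ofEq _ _ hra).symm.trans (α.quotKerEquivRange.symm.trans
    ((Submodule.quotEquivOfEq _ _ hk).trans (β.quotKerEquivRange.trans (LinearEquiv.ofEq _ _ hrb))))⟩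

lemma goodSeq_perm [IsLocalRing R] [IsNoetherianRing R] {l l' : List R} (c : Ideal R)
    (h : GoodSeq l c) (hp : l.Perm l') (hm : ∀ r ∈ l, r ∈ IsLocalRing.maximalIdeal R) :
    GoodSeq l' c := by
  rw [goodSeq_iff] at *
  exact IsLocalRing.isWeaklyRegular_of_perm_of_subset_maximalIdeal h hp hm

theorem Wq_equiv [IsLocalRing R] [IsNoetherianRing R] (I : Ideal R)
    (hI : I ≤ IsLocalRing.maximalIdeal R) (n : ℕ) : ∀ (c : Ideal R) (xs ys : List R),
    xs.length = n → ys.length = n → (∀ x ∈ xs, x ∈ I) → (∀ y ∈ ys, y ∈ I) →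
    GoodSeq xs c → GoodSeq ys c →
    Nonempty (Wq I (c ⊔ Ideal.ofList xs) ≃ₗ[R] Wq I (c ⊔ Ideal.ofList ys)) := by
  induction n with
  | zero =>
    intro c xs ys hx hy _ _ _ _
    rw [List.length_eq_zero_iff] at hx hy
    subst hx; subst hy
    exact ⟨LinearEquiv.refl _ _⟩
  | succ n ih =>
    rintro c (_ | ⟨a, xs⟩) (_ | ⟨b, ys⟩) hx hy hxI hyI hxg hyg
    · simp at hx
    · simp at hx
    · simp at hy
    have step : ∀ (a : R) (xs : List R), (∀ x ∈ a :: xs, x ∈ I) → GoodSeq (a :: xs) c →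
        GoodSeq xs c ∧ RegMod a (c ⊔ Ideal.ofList xs) := by
      intro a xs h1 h2
      have h3 := goodSeq_perm c h2 (l' := xs ++ [a])
        (by simpa using (List.perm_append_singleton a xs).symm) (fun r hr => hI (h1 r hr))
      rw [goodSeq_append] at h3
      exact ⟨h3.1, h3.2.1⟩
    have step2 : ∀ (z : R) (xs : List R), z ∈ I → (∀ x ∈ xs, x ∈ I) → GoodSeq xs c →
        RegMod z (c ⊔ Ideal.ofList xs) → GoodSeq xs (c ⊔ Ideal.span {z}) := by
      intro z xs hz h1 h2 h3
      have h4 : GoodSeq (xs ++ [z]) c := by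
        rw [goodSeq_append]; exact ⟨h2, h3, trivial⟩
      have h5 := goodSeq_perm c h4 (l' := z :: xs) (List.perm_append_singleton z xs) (by
        intro r hr
        rw [List.mem_append, List.mem_singleton] at hr
        rcases hr with hr | rfl
        · exact hI (h1 r hr)
        · exact hI hz)
      exact h5.2
    obtain ⟨hx1, hx2⟩ := step a xs hxI hxg
    obtain ⟨hy1, hy2⟩ := step b ys hyI hyg
    have haI := hxI a (by simp)
    have hbI := hyI b (by simp)
    have hxI' : ∀ x ∈ xs, x ∈ I := fun x hx => hxI x (by simp [hx])
    have hyI' : ∀ x ∈ ys, x ∈ I := fun x hx => hyI x (by simp [hx])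
    obtain ⟨z, hzI, hz1, hz2⟩ := exists_regMod_two I _ _ haI hbI hx2 hy2
    obtain ⟨e1⟩ := Wq_exchange I _ haI hzI hx2 hz1
    obtain ⟨e2⟩ := Wq_exchange I _ hbI hzI hy2 hz2
    obtain ⟨e3⟩ := ih (c ⊔ Ideal.span {z}) xs ys (by simpa using hx) (by simpa using hy) hxI' hyI'
      (step2 z xs hzI hxI' hx1 hz1) (step2 z ys hzI hyI' hy1 hz2)
    have q : ∀ (a : R) xs, c ⊔ Ideal.ofList (a :: xs) = c ⊔ Ideal.ofList xs ⊔ Ideal.span {a} := by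
      intro a xs
      rw [Ideal.ofList_cons, sup_comm (Ideal.span {a}), sup_assoc]
    have q' : ∀ (a : R) xs, c ⊔ Ideal.span {a} ⊔ Ideal.ofList xs =
        c ⊔ Ideal.ofList xs ⊔ Ideal.span {a} := by
      intro a xs
      rw [sup_right_comm]
    rw [q' z, q' z] at e3
    rw [q, q]
    exact ⟨e1.trans (e3.trans e2.symm)⟩

end PartB

section PartC
variable {R : Type*} [CommRing R]

lemma enat_add_ne_top {a b : ℕ∞} (h : a + b ≠ ⊤) : a ≠ ⊤ ∧ b ≠ ⊤ := WithTop.add_ne_top.mp h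

lemma enat_cancel {a b c : ℕ∞} (hc : c ≠ ⊤) (h : a + c = b + c) : a = b := by
  lift c to ℕ using hc
  induction a using ENat.recTopCoe with
  | top =>
    induction b using ENat.recTopCoe with
    | top => rfl
    | coe b => rw [top_add] at h; exact absurd h.symm (ENat.natCast_ne_top _)
  | coe a =>
    induction b using ENat.recTopCoe with
    | top => rw [top_add] at h; exact absurd h (ENat.natCast_ne_top _)
    | coe b =>
      norm_cast at h ⊢
      omega

lemma enat_lt {a b c d : ℕ∞} (hc : c ≠ ⊤) (h : a < b) (h' : c ≤ d) : a + c < b + d :=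
  lt_of_lt_of_le (WithTop.add_lt_add_right hc h) (add_le_add_right h' b)

lemma len_sub_quot {M : Type*} [AddCommGroup M] [Module R M] (N : Submodule R M) :
    Module.length R M = Module.length R N + Module.length R (M ⧸ N) :=
  Module.length_eq_add_of_exact N.subtype N.mkQ N.injective_subtype N.mkQ_surjective
    (by simpa using LinearMap.exact_subtype_mkQ N)

lemma len_ker_range {M M' : Type*} [AddCommGroup M] [Module R M] [AddCommGroup M'] [Module R M']
    (f : M →ₗ[R] M') :
    Module.length R M = Module.length R (LinearMap.ker f) +
      Module.length R (LinearMap.range f) := by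
  rw [len_sub_quot (LinearMap.ker f), f.quotKerEquivRange.length_eq]

lemma eq_top_of_len {M : Type*} [AddCommGroup M] [Module R M] (N : Submodule R M)
    (hM : Module.length R M ≠ ⊤) (h : Module.length R M ≤ Module.length R N) : N = ⊤ := by
  by_contra hN
  rw [Module.length_ne_top_iff, isFiniteLength_iff_isNoetherian_isArtinian] at hM
  obtain ⟨_, _⟩ := hM
  exact absurd (Submodule.length_lt hN) (not_lt.mpr h)

lemma len_hom_le [IsLocalRing R] (c : Ideal R)
    (hW : Module.length R (Wq (IsLocalRing.maximalIdeal R) c) ≤ 1)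
    {N : Type*} [AddCommGroup N] [Module R N] (hN : IsFiniteLength R N) :
    Module.length R (N →ₗ[R] (R ⧸ c)) ≤ Module.length R N := by
  induction hN with
  | of_subsingleton => rw [Module.length_eq_zero]; exact zero_le
  | @of_simple_quotient M _ _ N hs hN ih =>
    let f : (M →ₗ[R] (R ⧸ c)) →ₗ[R] (N →ₗ[R] (R ⧸ c)) := LinearMap.lcomp R (R ⧸ c) N.subtype
    rw [len_ker_range f, len_sub_quot N, add_comm]
    refine add_le_add ((Module.length_le_of_injective (LinearMap.range f).subtype
      (Submodule.injective_subtype _)).trans ih) ?_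
    rw [Module.length_eq_one (R := R) (M := M ⧸ N)]
    refine le_trans ?_ hW
    have hco : IsCoatom N := isSimpleModule_iff_isCoatom.mp hs
    obtain ⟨v, hv⟩ : ∃ v, v ∉ N := by
      by_contra hcon
      push Not at hcon
      exact hco.1 (eq_top_iff.mpr fun x _ => hcon x)
    have htop : N ⊔ Submodule.span R {v} = ⊤ := by
      apply hco.2
      refine lt_of_le_of_ne le_sup_left fun h => hv ?_
      rw [h]; exact Submodule.mem_sup_right (Submodule.mem_span_singleton_self v)
    have hann : Module.annihilator R (M ⧸ N) = IsLocalRing.maximalIdeal R :=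
      IsLocalRing.eq_maximalIdeal (IsSimpleModule.annihilator_isMaximal (R := R) (M := M ⧸ N))
    have hmv : ∀ i ∈ IsLocalRing.maximalIdeal R, i • v ∈ N := by
      intro i hi
      rw [← hann, Module.mem_annihilator] at hi
      have := hi (N.mkQ v)
      rw [← map_smul] at this
      exact (Submodule.Quotient.mk_eq_zero N).mp this
    have hkN : ∀ φ ∈ LinearMap.ker f, ∀ n ∈ N, φ n = 0 := by
      intro φ hφ n hn
      exact LinearMap.congr_fun hφ (⟨n, hn⟩ : N)
    let ev : LinearMap.ker f →ₗ[R] (R ⧸ c) := (LinearMap.applyₗ v) ∘ₗ (LinearMap.ker f).subtype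
    have hev : ∀ φ, ev φ ∈ Wq (IsLocalRing.maximalIdeal R) c := by
      intro φ
      change (φ : M →ₗ[R] R ⧸ c) v ∈ _
      obtain ⟨r, hr⟩ := Submodule.mkQ_surjective c ((φ : M →ₗ[R] R ⧸ c) v)
      rw [← hr, mk_mem_Wq]
      intro i hi
      have h1 := hkN _ φ.2 _ (hmv i hi)
      rw [map_smul, ← hr, ← map_smul] at h1
      rw [mul_comm]
      exact (Submodule.Quotient.mk_eq_zero c).mp h1
    refine Module.length_le_of_injective (ev.codRestrict _ hev) ?_
    rw [injective_iff_map_eq_zero]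
    intro φ hφ'
    have hφ : ev φ = 0 := congrArg Subtype.val hφ'
    apply Subtype.ext
    have h0 : (φ : M →ₗ[R] R ⧸ c) v = 0 := hφ
    have : N ⊔ Submodule.span R {v} ≤ LinearMap.ker (φ : M →ₗ[R] R ⧸ c) := by
      rw [sup_le_iff, Submodule.span_singleton_le_iff_mem]
      exact ⟨fun n hn => hkN _ φ.2 n hn, h0⟩
    rw [htop, top_le_iff] at this
    exact LinearMap.ker_eq_top.mp this

/-- every map `I/c → R/c` is a multiplication -/
def ExtProp (c I : Ideal R) : Prop :=
  ∀ φ : I →ₗ[R] (R ⧸ c), (∀ i : I, (i : R) ∈ c → φ i = 0) →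
    ∃ r : R, ∀ i : I, φ i = c.mkQ (r * i)

lemma len_colon (c I : Ideal R) :
    Module.length R (R ⧸ c) = Module.length R (Wq I c) +
      Module.length R (R ⧸ (Submodule.colon c (I : Set R))) := by
  have hle : c ≤ Submodule.colon c (I : Set R) := fun r hr =>
    (mem_colon_iff _ _ _).mpr fun i _ => Ideal.mul_mem_right _ _ hr
  rw [len_sub_quot (Wq I c)]
  congr 1
  have e := Submodule.quotientQuotientEquivQuotient c _ hle
  exact e.length_eq

lemma len_ideal (c I : Ideal R) (h : c ≤ I) :
    Module.length R (R ⧸ c) = Module.length R (I ⧸ (Submodule.comap I.subtype c)) +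
      Module.length R (R ⧸ I) := by
  refine Module.length_eq_add_of_exact (Submodule.mapQ _ _ I.subtype le_rfl)
    (Submodule.mapQ c I LinearMap.id h) ?_ ?_ ?_
  · rw [← LinearMap.ker_eq_bot, LinearMap.ker_eq_bot']
    intro m hm
    obtain ⟨i, rfl⟩ := Submodule.mkQ_surjective _ m
    rw [Submodule.mkQ_apply, Submodule.mapQ_apply] at hm
    rw [Submodule.mkQ_apply, Submodule.Quotient.mk_eq_zero] at *
    exact hm
  · intro m
    obtain ⟨i, rfl⟩ := Submodule.mkQ_surjective _ m
    exact ⟨c.mkQ i, rfl⟩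
  · intro m
    obtain ⟨i, rfl⟩ := Submodule.mkQ_surjective _ m
    constructor
    · intro hm
      rw [Submodule.mkQ_apply, Submodule.mapQ_apply, Submodule.Quotient.mk_eq_zero] at hm
      exact ⟨Submodule.mkQ _ ⟨i, hm⟩, rfl⟩
    · rintro ⟨y, hy⟩
      obtain ⟨j, rfl⟩ := Submodule.mkQ_surjective _ y
      rw [← hy]
      rw [Submodule.mkQ_apply, Submodule.mapQ_apply, Submodule.mapQ_apply,
        Submodule.Quotient.mk_eq_zero]
      exact j.2

theorem gorenstein_main [IsLocalRing R] (c I : Ideal R) (hcI : c ≤ I)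
    (hW : Module.length R (Wq (IsLocalRing.maximalIdeal R) c) ≤ 1)
    (hA : Module.length R (R ⧸ c) ≠ ⊤) :
    ExtProp c I ∧ Module.length R (Wq I c) = Module.length R (R ⧸ I) := by
  have hA1 := hA
  have hA2 := hA
  rw [len_colon c I] at hA1
  rw [len_ideal c I hcI] at hA2
  have hfin1 := (enat_add_ne_top hA1)
  have hfin2 := (enat_add_ne_top hA2)
  set Nb := I ⧸ (Submodule.comap I.subtype c) with hNb
  -- K -> Hom(R/I, A)
  have hi : Module.length R (Wq I c) ≤ Module.length R (R ⧸ I) := by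
    refine le_trans ?_ (len_hom_le c hW (Module.length_ne_top_iff.mp hfin2.2))
    have hk : ∀ k : Wq I c, I ≤ LinearMap.ker (LinearMap.toSpanSingleton R (R ⧸ c) k) := by
      rintro ⟨k, hk⟩ i hi
      obtain ⟨r, rfl⟩ := Submodule.mkQ_surjective _ k
      rw [mk_mem_Wq] at hk
      rw [LinearMap.mem_ker, LinearMap.toSpanSingleton_apply]
      change i • c.mkQ r = 0
      rw [← map_smul]
      exact (Submodule.Quotient.mk_eq_zero c).mpr (by rw [smul_eq_mul, mul_comm]; exact hk i hi)
    let F : Wq I c →ₗ[R] ((R ⧸ I) →ₗ[R] (R ⧸ c)) :=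
      { toFun := fun k => I.liftQ (LinearMap.toSpanSingleton R (R ⧸ c) k) (hk k)
        map_add' := by
          intro x y
          apply Submodule.linearMap_qext
          ext
          change (1 : R) • ((x : R ⧸ c) + y) = (1 : R) • (x : R ⧸ c) + (1 : R) • (y : R ⧸ c)
          rw [smul_add]
        map_smul' := by
          intro x y
          apply Submodule.linearMap_qext
          ext
          change (1 : R) • (x • (y : R ⧸ c)) = x • ((1 : R) • (y : R ⧸ c))
          rw [smul_comm] }
    refine Module.length_le_of_injective F ?_
    rw [← LinearMap.ker_eq_bot, LinearMap.ker_eq_bot']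
    intro k hk0
    have h1 := LinearMap.congr_fun hk0 (I.mkQ 1)
    apply Subtype.ext
    have h2 : (1 : R) • (k : R ⧸ c) = 0 := h1
    rwa [one_smul] at h2
  -- R/(c:I) -> Hom(Nb, A)
  have hle2 : ∀ t : R, Submodule.comap I.subtype c ≤
      LinearMap.ker (c.mkQ ∘ₗ (t • (LinearMap.id : R →ₗ[R] R)) ∘ₗ I.subtype) := by
    intro t i hi
    rw [LinearMap.mem_ker]
    exact (Submodule.Quotient.mk_eq_zero c).mpr (Ideal.mul_mem_left _ _ hi)
  let G0 : R →ₗ[R] (Nb →ₗ[R] (R ⧸ c)) :=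
    { toFun := fun t => (Submodule.comap I.subtype c).liftQ _ (hle2 t)
      map_add' := by
        intro x y
        apply Submodule.linearMap_qext
        ext i
        change c.mkQ ((x + y) * i) = c.mkQ (x * i) + c.mkQ (y * i)
        rw [add_mul, map_add]
      map_smul' := by
        intro x y
        apply Submodule.linearMap_qext
        ext i
        change c.mkQ ((x * y) * i) = x • c.mkQ (y * i)
        rw [mul_assoc, ← smul_eq_mul, map_smul] }
  have hG0 : ∀ t (i : I), G0 t (Submodule.mkQ _ i) = c.mkQ (t * i) := fun t i => rfl
  have hkG : LinearMap.ker G0 = Submodule.colon c (I : Set R) := by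
    ext t
    rw [mem_colon_iff, LinearMap.mem_ker]
    constructor
    · intro h i hi
      have := hG0 t ⟨i, hi⟩
      rw [h] at this
      exact (Submodule.Quotient.mk_eq_zero c).mp this.symm
    · intro h
      apply Submodule.linearMap_qext
      ext i
      exact (Submodule.Quotient.mk_eq_zero c).mpr (h i i.2)
  have hii : Module.length R (R ⧸ (Submodule.colon c (I : Set R))) =
      Module.length R (LinearMap.range G0) := by
    rw [← hkG]; exact G0.quotKerEquivRange.length_eq
  have hhom := len_hom_le c hW (Module.length_ne_top_iff.mp hfin2.1)
  have hrl : Module.length R (LinearMap.range G0) ≤ Module.length R (Nb →ₗ[R] (R ⧸ c)) :=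
    Module.length_le_of_injective (LinearMap.range G0).subtype Subtype.val_injective
  have hsum := (len_colon c I).symm.trans (len_ideal c I hcI)
  rw [← hii] at hrl
  have e1 : Module.length R (Wq I c) = Module.length R (R ⧸ I) := by
    refine le_antisymm hi ?_
    by_contra hcon
    push Not at hcon
    have : Module.length R (Wq I c) + Module.length R (R ⧸ (Submodule.colon c (I : Set R))) <
      Module.length R (R ⧸ I) + Module.length R Nb :=
      enat_lt hfin1.2 hcon (hrl.trans hhom)
    rw [hsum, add_comm] at this
    exact lt_irrefl _ this
  have e2 : Module.length R (R ⧸ (Submodule.colon c (I : Set R))) = Module.length R Nb := by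
    rw [e1, add_comm] at hsum
    exact enat_cancel hfin2.2 hsum
  have hsurj : LinearMap.range G0 = ⊤ :=
    eq_top_of_len _ (ne_top_of_le_ne_top hfin2.1 hhom) (by rw [← hii, e2]; exact hhom)
  refine ⟨fun φ hφ => ?_, e1⟩
  let φ' : Nb →ₗ[R] (R ⧸ c) := (Submodule.comap I.subtype c).liftQ φ fun i hi => hφ i hi
  obtain ⟨t, ht⟩ := LinearMap.range_eq_top.mp hsurj φ'
  refine ⟨t, fun i => ?_⟩
  rw [← hG0, ht]; rfl

theorem gorenstein_double [IsLocalRing R] (c I : Ideal R) (hcI : c ≤ I)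
    (hW : Module.length R (Wq (IsLocalRing.maximalIdeal R) c) ≤ 1)
    (hA : Module.length R (R ⧸ c) ≠ ⊤) :
    Submodule.colon c ((Submodule.colon c (I : Set R) : Ideal R) : Set R) = I := by
  set J : Ideal R := Submodule.colon c (I : Set R) with hJ
  have hcJ : c ≤ J := fun r hr =>
    (mem_colon_iff _ _ _).mpr fun i _ => Ideal.mul_mem_right _ _ hr
  have hIJ : I ≤ Submodule.colon c (J : Set R) := fun r hr => (mem_colon_iff _ _ _).mpr
    fun j hj => by rw [mul_comm]; exact (mem_colon_iff _ _ _).mp hj r hr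
  have h1 := (gorenstein_main c I hcI hW hA).2
  have h2 := (gorenstein_main c J hcJ hW hA).2
  have h3 := len_colon c I
  have h4 := len_colon c J
  rw [← hJ] at h3
  rw [h3, h1] at h4
  rw [h2, add_comm] at h4
  have hf : Module.length R (R ⧸ J) ≠ ⊤ := by
    rw [h3] at hA; exact (enat_add_ne_top hA).2
  have hf' : Module.length R (R ⧸ I) ≠ ⊤ := by
    rw [h3, h1] at hA; exact (enat_add_ne_top hA).1
  have h5 : Module.length R (R ⧸ I) = Module.length R (R ⧸ (Submodule.colon c (J : Set R))) :=
    enat_cancel hf (by rw [add_comm, h4]; exact add_comm _ _)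
  refine le_antisymm ?_ hIJ
  -- surjection R/I -> R/(c:J) of equal length
  have h6 := len_sub_quot (Submodule.map I.mkQ (Submodule.colon c (J : Set R)))
  rw [(Submodule.quotientQuotientEquivQuotient I _ hIJ).length_eq, ← h5] at h6
  have h7 : Module.length R (Submodule.map I.mkQ (Submodule.colon c (J : Set R))) = 0 := by
    have : 0 + Module.length R (R ⧸ I) =
      Module.length R (Submodule.map I.mkQ (Submodule.colon c (J : Set R))) +
        Module.length R (R ⧸ I) := by rw [zero_add]; exact h6
    exact (enat_cancel hf' this).symm
  rw [Module.length_eq_zero_iff] at h7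
  intro r hr
  have : (⟨I.mkQ r, ⟨r, hr, rfl⟩⟩ : Submodule.map I.mkQ (Submodule.colon c (J : Set R))) = 0 :=
    Subsingleton.elim _ _
  exact (Submodule.Quotient.mk_eq_zero I).mp (congrArg Subtype.val this)

end PartC

section PartD
variable {R : Type*} [CommRing R]

lemma factor_surj {M N P : Type*} [AddCommGroup M] [Module R M] [AddCommGroup N] [Module R N]
    [AddCommGroup P] [Module R P] (f : M →ₗ[R] N) (hf : Function.Surjective f) (g : M →ₗ[R] P)
    (h : ∀ x, f x = 0 → g x = 0) : ∃ k : N →ₗ[R] P, ∀ x, k (f x) = g x := by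
  refine ⟨(LinearMap.ker f).liftQ g (fun x hx => h x hx) ∘ₗ
    (f.quotKerEquivOfSurjective hf).symm.toLinearMap, fun x => ?_⟩
  have : (f.quotKerEquivOfSurjective hf).symm (f x) = (LinearMap.ker f).mkQ x := by
    rw [LinearEquiv.symm_apply_eq]; rfl
  change (LinearMap.ker f).liftQ g (fun x hx => h x hx) ((f.quotKerEquivOfSurjective hf).symm (f x)) = _
  rw [this]; rfl

lemma factor_inj {M N P : Type*} [AddCommGroup M] [Module R M] [AddCommGroup N] [Module R N]
    [AddCommGroup P] [Module R P] (f : N →ₗ[R] P) (hf : Function.Injective f) (g : M →ₗ[R] P)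
    (h : ∀ x, ∃ y, f y = g x) : ∃ k : M →ₗ[R] N, ∀ x, f (k x) = g x := by
  refine ⟨(LinearEquiv.ofInjective f hf).symm.toLinearMap ∘ₗ
    g.codRestrict (LinearMap.range f) (fun x => h x), fun x => ?_⟩
  have := (LinearEquiv.ofInjective f hf).apply_symm_apply
    (g.codRestrict (LinearMap.range f) (fun x => h x) x)
  exact congrArg Subtype.val this

lemma mkQ_eq_zero_iff (c : Ideal R) (r : R) : c.mkQ r = 0 ↔ r ∈ c :=
  Submodule.Quotient.mk_eq_zero c

lemma mem_sup_span_iff (c : Ideal R) (l r : R) :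
    r ∈ c ⊔ Ideal.span {l} ↔ ∃ a ∈ c, ∃ s, r = a + l * s := by
  rw [Submodule.mem_sup]
  constructor
  · rintro ⟨y, hy, z, hz, rfl⟩
    obtain ⟨s, rfl⟩ := Ideal.mem_span_singleton'.mp hz
    exact ⟨y, hy, s, by ring⟩
  · rintro ⟨a, ha, s, rfl⟩
    exact ⟨a, ha, l * s, Ideal.mul_mem_right _ _ (Ideal.mem_span_singleton_self l), rfl⟩

/-- dividing by `l` -/
lemma div_map (c I : Ideal R) (l : R) (hl : RegMod l c) (φ : I →ₗ[R] (R ⧸ c))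
    (h : ∀ i : I, ∃ s : R, φ i = c.mkQ (l * s)) :
    ∃ ψ : I →ₗ[R] (R ⧸ c), ∀ i, φ i = l • ψ i := by
  have hinj : Function.Injective (l • (LinearMap.id : (R ⧸ c) →ₗ[R] (R ⧸ c))) := by
    rw [injective_iff_map_eq_zero]
    intro m hm
    obtain ⟨r, rfl⟩ := Submodule.mkQ_surjective _ m
    have hm' : l • c.mkQ r = 0 := hm
    rw [← map_smul, mkQ_eq_zero_iff] at hm'
    exact (mkQ_eq_zero_iff c r).mpr (hl r hm')
  obtain ⟨k, hk⟩ := factor_inj _ hinj φ (fun i => by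
    obtain ⟨s, hs⟩ := h i
    exact ⟨c.mkQ s, by rw [hs, ← smul_eq_mul, map_smul]; rfl⟩)
  exact ⟨k, fun i => (hk i).symm⟩

lemma regMod_smul (c : Ideal R) (l : R) (hl : RegMod l c) (m : R ⧸ c) (h : l • m = 0) : m = 0 := by
  obtain ⟨r, rfl⟩ := Submodule.mkQ_surjective _ m
  rw [← map_smul, mkQ_eq_zero_iff] at h
  exact (mkQ_eq_zero_iff c r).mpr (hl r h)

lemma extProp_of_reduction [IsLocalRing R] [IsNoetherianRing R] (c I : Ideal R) (hcI : c ≤ I)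
    (l : R) (hlm : l ∈ IsLocalRing.maximalIdeal R) (hc : RegMod l c) (hI : RegMod l I)
    (hE : ExtProp (c ⊔ Ideal.span {l}) (I ⊔ Ideal.span {l})) : ExtProp c I := by
  let H : Submodule R (I →ₗ[R] (R ⧸ c)) :=
    { carrier := {φ | ∀ i : I, (i : R) ∈ c → φ i = 0}
      add_mem' := by
        intro a b ha hb i hi
        rw [LinearMap.add_apply, ha i hi, hb i hi, add_zero]
      zero_mem' := fun i hi => rfl
      smul_mem' := by
        intro a b hb i hi
        rw [LinearMap.smul_apply, hb i hi, smul_zero] }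
  let mul : R →ₗ[R] (I →ₗ[R] (R ⧸ c)) :=
    { toFun := fun r => r • (c.mkQ ∘ₗ I.subtype)
      map_add' := fun a b => add_smul _ _ _
      map_smul' := fun a b => mul_smul _ _ _ }
  have hmul : ∀ r i, mul r i = c.mkQ (r * i) := by
    intro r i
    rw [← smul_eq_mul, map_smul]; rfl
  have key : H ≤ LinearMap.range mul ⊔ (Ideal.span {l}) • H := by
    intro φ hφ
    let f : (I × R) →ₗ[R] ↥(I ⊔ Ideal.span {l}) :=
      { toFun := fun p => ⟨p.1 + l * p.2, (mem_sup_span_iff _ _ _).mpr ⟨p.1, p.1.2, p.2, rfl⟩⟩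
        map_add' := by
          intro p q
          apply Subtype.ext
          change ((p.1 : R) + q.1) + l * (p.2 + q.2) = (p.1 + l * p.2) + (q.1 + l * q.2)
          ring
        map_smul' := by
          intro a q
          apply Subtype.ext
          change (a * (q.1 : R)) + l * (a * q.2) = a * (q.1 + l * q.2)
          ring }
    have hf : Function.Surjective f := by
      rintro ⟨r, hr⟩
      obtain ⟨a, ha, s, rfl⟩ := (mem_sup_span_iff _ _ _).mp hr
      exact ⟨(⟨a, ha⟩, s), rfl⟩
    have hle : c ≤ c ⊔ Ideal.span {l} := le_sup_left
    let p : (R ⧸ c) →ₗ[R] (R ⧸ (c ⊔ Ideal.span {l})) := Submodule.mapQ _ _ LinearMap.id hle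
    have hp : ∀ r, p (c.mkQ r) = (c ⊔ Ideal.span {l}).mkQ r := fun r => rfl
    have hpl : ∀ m, p (l • m) = 0 := by
      intro m
      obtain ⟨r, rfl⟩ := Submodule.mkQ_surjective _ m
      rw [← map_smul, hp, mkQ_eq_zero_iff]
      exact Submodule.mem_sup_right (Ideal.mul_mem_right _ _ (Ideal.mem_span_singleton_self l))
    obtain ⟨k, hk⟩ := factor_surj f hf (p ∘ₗ φ ∘ₗ LinearMap.fst R I R) (by
      rintro ⟨i, r⟩ h
      have h1 : (i : R) + l * r = 0 := congrArg Subtype.val h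
      have h2 : (i : R) = l * (-r) := by linear_combination h1
      have h3 : -r ∈ I := hI _ (h2 ▸ i.2)
      have h4 : i = l • (⟨-r, h3⟩ : I) := Subtype.ext h2
      change p (φ i) = 0
      rw [h4, map_smul, hpl])
    have hk' : ∀ (i : I) (r : R) (h), k ⟨i + l * r, h⟩ = p (φ i) := fun i r h => hk (i, r)
    obtain ⟨r, hr⟩ := hE k (by
      rintro ⟨x, hx⟩ hxc
      obtain ⟨a, ha, s, rfl⟩ := (mem_sup_span_iff _ _ _).mp hxc
      rw [hk' ⟨a, hcI ha⟩ s, hφ _ ha, map_zero])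
    have hdiff : ∀ i : I, ∃ s : R, (φ - mul r) i = c.mkQ (l * s) := by
      intro i
      have h1 := hr ⟨i + l * 0, (mem_sup_span_iff _ _ _).mpr ⟨i, i.2, 0, rfl⟩⟩
      rw [hk' i 0] at h1
      obtain ⟨t, ht⟩ := Submodule.mkQ_surjective c (φ i)
      rw [← ht, hp, ← sub_eq_zero, ← map_sub, mkQ_eq_zero_iff] at h1
      obtain ⟨a, ha, s, hs⟩ := (mem_sup_span_iff _ _ _).mp h1
      refine ⟨s, ?_⟩
      rw [LinearMap.sub_apply, hmul, ← ht, ← map_sub, ← sub_eq_zero, ← map_sub, mkQ_eq_zero_iff]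
      have hs' : t - r * (i + l * 0) = a + l * s := hs
      have : t - r * i - l * s = a := by linear_combination hs'
      rw [this]; exact ha
    obtain ⟨ψ, hψ⟩ := div_map c I l hc _ hdiff
    have hψH : ψ ∈ H := by
      intro i hi
      apply regMod_smul c l hc
      rw [← hψ, LinearMap.sub_apply, hφ i hi, hmul, zero_sub, neg_eq_zero, mkQ_eq_zero_iff]
      exact Ideal.mul_mem_left _ _ hi
    have : φ = mul r + l • ψ := by
      ext i
      rw [LinearMap.add_apply, LinearMap.smul_apply, ← hψ, LinearMap.sub_apply]
      abel
    rw [this]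
    exact Submodule.add_mem_sup ⟨r, rfl⟩
      (Submodule.smul_mem_smul (Ideal.mem_span_singleton_self l) hψH)
  have hfg : H.FG := IsNoetherian.noetherian H
  have := Submodule.le_of_le_smul_of_le_jacobson_bot (I := Ideal.span {l})
    (N := LinearMap.range mul) hfg (by
      rw [IsLocalRing.jacobson_eq_maximalIdeal ⊥ bot_ne_top, Ideal.span_singleton_le_iff_mem]
      exact hlm) key
  intro φ hφ
  obtain ⟨r, hr⟩ := this (show φ ∈ H from hφ)
  exact ⟨r, fun i => by rw [← hr, hmul]⟩

lemma colon_of_reduction (c I : Ideal R)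
    (l : R) (hc : RegMod l c) (hE : ExtProp c I) :
    Submodule.colon (c ⊔ Ideal.span {l}) ((I ⊔ Ideal.span {l} : Ideal R) : Set R) =
      Submodule.colon c (I : Set R) ⊔ Ideal.span {l} := by
  apply le_antisymm
  · intro r hr
    rw [mem_colon_iff] at hr
    have h1 : ∀ i : I, ∃ s : R, (r • (c.mkQ ∘ₗ I.subtype)) i = c.mkQ (l * s) := by
      intro i
      obtain ⟨a, ha, s, hs⟩ := (mem_sup_span_iff _ _ _).mp (hr i (Submodule.mem_sup_left i.2))
      refine ⟨s, ?_⟩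
      change r • c.mkQ i = _
      rw [← map_smul, smul_eq_mul, ← sub_eq_zero, ← map_sub, mkQ_eq_zero_iff, hs]
      simpa using ha
    obtain ⟨ψ, hψ⟩ := div_map c I l hc _ h1
    have hψ' : ∀ i : I, c.mkQ (r * i) = l • ψ i := fun i => by
      rw [← hψ, ← smul_eq_mul, map_smul]; rfl
    obtain ⟨s, hs⟩ := hE ψ (fun i hi => by
      apply regMod_smul c l hc
      rw [← hψ', mkQ_eq_zero_iff]
      exact Ideal.mul_mem_left _ _ hi)
    rw [mem_sup_span_iff]
    refine ⟨r - l * s, (mem_colon_iff _ _ _).mpr fun i hi => ?_, s, by ring⟩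
    have := hψ' ⟨i, hi⟩
    rw [hs, ← map_smul, ← sub_eq_zero, ← map_sub, mkQ_eq_zero_iff] at this
    have e : (r - l * s) * i = r * i - l • (s * i) := by rw [smul_eq_mul]; ring
    rw [e]; exact this
  · refine sup_le ?_ ?_
    · intro r hr
      rw [mem_colon_iff] at hr ⊢
      intro i hi
      obtain ⟨a, ha, s, rfl⟩ := (mem_sup_span_iff _ _ _).mp hi
      rw [mem_sup_span_iff]
      exact ⟨r * a, hr a ha, r * s, by ring⟩
    · rw [Ideal.span_singleton_le_iff_mem, mem_colon_iff]
      intro i hi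
      exact Submodule.mem_sup_right (Ideal.mul_mem_right _ _ (Ideal.mem_span_singleton_self l))

theorem reduction_list [IsLocalRing R] [IsNoetherianRing R] (ls : List R)
    (hls : ∀ l ∈ ls, l ∈ IsLocalRing.maximalIdeal R) : ∀ (c I : Ideal R), c ≤ I →
    GoodSeq ls c → GoodSeq ls I → ExtProp (c ⊔ Ideal.ofList ls) (I ⊔ Ideal.ofList ls) →
    ExtProp c I ∧
    Submodule.colon (c ⊔ Ideal.ofList ls) ((I ⊔ Ideal.ofList ls : Ideal R) : Set R) =
      Submodule.colon c (I : Set R) ⊔ Ideal.ofList ls ∧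
    GoodSeq ls (Submodule.colon c (I : Set R)) := by
  induction ls with
  | nil =>
    intro c I _ _ _ h
    rw [Ideal.ofList_nil, sup_bot_eq, sup_bot_eq] at h
    simp only [Ideal.ofList_nil, sup_bot_eq]
    exact ⟨h, trivial, trivial⟩
  | cons l t ih =>
    intro c I hcI hc hI h
    rw [Ideal.ofList_cons, ← sup_assoc, ← sup_assoc] at *
    obtain ⟨h1, h2, h3⟩ := ih (fun x hx => hls x (List.mem_cons_of_mem _ hx)) _ _
      (sup_le_sup_right hcI _) hc.2 hI.2 h
    have hlm := hls l List.mem_cons_self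
    have hE := extProp_of_reduction c I hcI l hlm hc.1 hI.1 h1
    have hcol := colon_of_reduction c I l hc.1 hE
    refine ⟨hE, ?_, ?_, ?_⟩
    · rw [h2, hcol, sup_assoc]
    · intro r hr
      rw [mem_colon_iff] at hr ⊢
      exact fun i hi => hc.1 _ (by rw [← mul_assoc]; exact hr i hi)
    · rw [← hcol]; exact h3
end PartD

section PartE
open scoped TensorProduct
variable {R : Type*} [CommRing R]

abbrev QI (c I : Ideal R) : Submodule R (R ⧸ c) := Submodule.map (Submodule.mkQ c) I

lemma len_QI (c I : Ideal R) (h : c ≤ I) :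
    Module.length R (R ⧸ c) = Module.length R (QI c I) + Module.length R (R ⧸ I) := by
  rw [len_sub_quot (QI c I)]
  congr 1
  exact (Submodule.quotientQuotientEquivQuotient c _ h).length_eq

def toQI (c I : Ideal R) : I →ₗ[R] QI c I :=
  ((Submodule.mkQ c) ∘ₗ I.subtype).codRestrict _ (fun i => ⟨i, i.2, rfl⟩)

lemma toQI_surj (c I : Ideal R) : Function.Surjective (toQI c I) := by
  rintro ⟨_, ⟨i, hi, rfl⟩⟩
  exact ⟨⟨i, hi⟩, rfl⟩

lemma toQI_eq_zero (c I : Ideal R) (i : I) : toQI c I i = 0 ↔ (i : R) ∈ c := by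
  rw [← mkQ_eq_zero_iff, ← Submodule.coe_eq_zero]; rfl

def WW (c I J : Ideal R) : Submodule R (I ⊗[R] J) :=
  Submodule.span R {t | ∃ (a : I) (b : J), (a : R) ∈ c ∧ (b : R) ∈ c ∧ t = a ⊗ₜ b}

lemma span3 (x y z r : R) : r ∈ Ideal.span {x, y, z} ↔ ∃ a b c, r = a * x + b * y + c * z := by
  rw [Ideal.mem_span_insert]
  constructor
  · rintro ⟨a, w, hw, rfl⟩
    obtain ⟨b, c, rfl⟩ := Ideal.mem_span_pair.mp hw
    exact ⟨a, b, c, by ring⟩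
  · rintro ⟨a, b, c, rfl⟩
    exact ⟨a, b * y + c * z, Ideal.mem_span_pair.mpr ⟨b, c, rfl⟩, by ring⟩

lemma span3_sq (x y z r : R) (h : r ∈ Ideal.span {x, y, z} * Ideal.span {x, y, z}) :
    ∃ a ∈ Ideal.span {x, y, z}, ∃ b ∈ Ideal.span {x, y, z}, ∃ c ∈ Ideal.span {x, y, z},
      r = a * x + b * y + c * z := by
  induction h using Submodule.mul_induction_on' with
  | mem_mul_mem m hm n hn =>
    obtain ⟨a, b, c, rfl⟩ := (span3 x y z n).mp hn
    exact ⟨m * a, Ideal.mul_mem_right _ _ hm, m * b, Ideal.mul_mem_right _ _ hm, m * c,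
      Ideal.mul_mem_right _ _ hm, by ring⟩
  | add r _ s _ h1 h2 =>
    obtain ⟨a, ha, b, hb, c, hc, rfl⟩ := h1
    obtain ⟨a', ha', b', hb', c', hc', rfl⟩ := h2
    exact ⟨a + a', add_mem ha ha', b + b', add_mem hb hb', c + c', add_mem hc hc', by ring⟩

lemma koszul3 {x y z : R} (h : GoodSeq [x, y, z] (⊥ : Ideal R)) {a b c : R}
    (e : a * x + b * y + c * z = 0) :
    a ∈ Ideal.span {x, y, z} ∧ b ∈ Ideal.span {x, y, z} ∧ c ∈ Ideal.span {x, y, z} := by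
  obtain ⟨h1, h2, h3, -⟩ := h
  rw [bot_sup_eq] at h2 h3
  obtain ⟨p, hp, q, hq⟩ := (mem_sup_span_iff _ _ _).mp (h3 c ((mem_sup_span_iff _ _ _).mpr
    ⟨-(a * x), by rw [neg_mem_iff]; exact Ideal.mul_mem_left _ _ (Ideal.mem_span_singleton_self x),
      -b, by linear_combination e⟩))
  obtain ⟨p', rfl⟩ := Ideal.mem_span_singleton'.mp hp
  have e2 : y * (b + q * z) = (-(a + p' * z)) * x := by rw [hq] at e; linear_combination e
  have h5 := h2 (b + q * z) (by
    rw [e2]; exact Ideal.mul_mem_left _ _ (Ideal.mem_span_singleton_self x))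
  obtain ⟨t, ht⟩ := Ideal.mem_span_singleton'.mp h5
  have e3 : x * (a + p' * z + t * y) = 0 := by linear_combination e2 + y * ht
  have h6 : a + p' * z + t * y = 0 := h1 _ (by rw [e3]; exact zero_mem _)
  refine ⟨(span3 _ _ _ _).mpr ⟨0, -t, -p', by linear_combination h6⟩,
    (span3 _ _ _ _).mpr ⟨t, 0, -q, by linear_combination -ht⟩,
    (span3 _ _ _ _).mpr ⟨p', q, 0, by rw [hq]; ring⟩⟩

lemma qreg3 {x y z : R} (h : GoodSeq [x, y, z] (⊥ : Ideal R)) {a b c : R}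
    (e : a * x + b * y + c * z ∈ Ideal.span {x, y, z} * Ideal.span {x, y, z}) :
    a ∈ Ideal.span {x, y, z} ∧ b ∈ Ideal.span {x, y, z} ∧ c ∈ Ideal.span {x, y, z} := by
  obtain ⟨a', ha', b', hb', c', hc', h'⟩ := span3_sq _ _ _ _ e
  have := koszul3 h (a := a - a') (b := b - b') (c := c - c') (by linear_combination h')
  refine ⟨?_, ?_, ?_⟩
  · simpa using add_mem this.1 ha'
  · simpa using add_mem this.2.1 hb'
  · simpa using add_mem this.2.2 hc'

theorem len_tensor (x y z : R) (h : GoodSeq [x, y, z] (⊥ : Ideal R)) (I J : Ideal R)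
    (hI : Ideal.span {x, y, z} ≤ I) (hJ : Ideal.span {x, y, z} ≤ J) :
    Module.length R ((I ⊗[R] J) ⧸ WW (Ideal.span {x, y, z}) I J) =
      3 * Module.length R (QI (Ideal.span {x, y, z}) I) +
        Module.length R (I ⊗[R] (QI (Ideal.span {x, y, z}) J)) := by
  set c := Ideal.span {x, y, z} with hc
  have hx : x ∈ c := Ideal.subset_span (by simp)
  have hy : y ∈ c := Ideal.subset_span (by simp)
  have hz : z ∈ c := Ideal.subset_span (by simp)
  let X : Fin 3 → J := ![⟨x, hJ hx⟩, ⟨y, hJ hy⟩, ⟨z, hJ hz⟩]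
  let P : (I ⊗[R] J) →ₗ[R] (I ⊗[R] J) ⧸ WW c I J := (WW c I J).mkQ
  let A0 : (Fin 3 → I) →ₗ[R] (I ⊗[R] J) ⧸ WW c I J :=
    P ∘ₗ ∑ i : Fin 3, ((TensorProduct.mk R I J).flip (X i)) ∘ₗ LinearMap.proj i
  have hA0 : ∀ a, A0 a = P (∑ i : Fin 3, a i ⊗ₜ X i) := by
    intro a
    change P _ = _
    congr 1
  let q : (Fin 3 → I) →ₗ[R] (Fin 3 → QI c I) :=
    LinearMap.pi fun i => toQI c I ∘ₗ LinearMap.proj i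
  have hq : ∀ a i, q a i = toQI c I (a i) := fun a i => rfl
  have hqs : Function.Surjective q := by
    intro b
    choose a ha using fun i => toQI_surj c I (b i)
    exact ⟨a, funext fun i => by rw [hq, ha]⟩
  have hXc : ∀ i, (X i : R) ∈ c := by
    intro i; fin_cases i
    · exact hx
    · exact hy
    · exact hz
  obtain ⟨A, hA⟩ := factor_surj q hqs A0 (by
    intro a ha
    rw [hA0]
    refine (Submodule.Quotient.mk_eq_zero _).mpr (Submodule.sum_mem _ fun i _ => ?_)
    refine Submodule.subset_span ⟨a i, X i, ?_, hXc i, rfl⟩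
    rw [← toQI_eq_zero c I, ← hq, ha]; rfl)
  let B0 : (I ⊗[R] J) →ₗ[R] I ⊗[R] (QI c J) := LinearMap.lTensor I (toQI c J)
  have hB0W : WW c I J ≤ LinearMap.ker B0 := by
    refine Submodule.span_le.mpr ?_
    rintro _ ⟨a, b, ha, hb, rfl⟩
    change a ⊗ₜ toQI c J b = 0
    rw [(toQI_eq_zero c J b).mpr hb, TensorProduct.tmul_zero]
  let B : ((I ⊗[R] J) ⧸ WW c I J) →ₗ[R] I ⊗[R] (QI c J) := (WW c I J).liftQ B0 hB0W
  let μ0 : (I ⊗[R] J) →ₗ[R] R ⧸ (c * c) := (Submodule.mkQ (c * c)) ∘ₗ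
    TensorProduct.lift ((LinearMap.mul R R).compl₁₂ I.subtype J.subtype)
  have hμ0 : ∀ (i : I) (j : J), μ0 (i ⊗ₜ j) = (Submodule.mkQ (c * c)) ((i : R) * j) :=
    fun i j => rfl
  have hμ0W : WW c I J ≤ LinearMap.ker μ0 := by
    refine Submodule.span_le.mpr ?_
    rintro _ ⟨a, b, ha, hb, rfl⟩
    change μ0 (a ⊗ₜ b) = 0
    rw [hμ0, mkQ_eq_zero_iff]
    exact Ideal.mul_mem_mul ha hb
  let μ : ((I ⊗[R] J) ⧸ WW c I J) →ₗ[R] R ⧸ (c * c) := (WW c I J).liftQ μ0 hμ0W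
  have h3 : Module.length R (Fin 3 → QI c I) = 3 * Module.length R (QI c I) := by
    rw [Module.length_pi_of_fintype]
    simp
  rw [← h3]
  refine Module.length_eq_add_of_exact A B ?_ ?_ ?_
  · rw [injective_iff_map_eq_zero]
    intro m hm
    obtain ⟨a, rfl⟩ := hqs m
    rw [hA, hA0] at hm
    have hm2 : μ0 (∑ i : Fin 3, a i ⊗ₜ X i) = 0 := congrArg μ hm
    rw [Fin.sum_univ_three, map_add, map_add, hμ0, hμ0, hμ0, ← map_add, ← map_add,
      mkQ_eq_zero_iff] at hm2
    have := qreg3 h (a := a 0) (b := a 1) (c := a 2) hm2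
    funext i
    rw [hq]
    change toQI c I (a i) = 0
    rw [toQI_eq_zero]
    fin_cases i
    · exact this.1
    · exact this.2.1
    · exact this.2.2
  · intro t
    obtain ⟨s, hs⟩ := LinearMap.lTensor_surjective I (toQI_surj c J) t
    exact ⟨P s, hs⟩
  · intro t
    constructor
    · intro ht
      obtain ⟨s, rfl⟩ := Submodule.mkQ_surjective _ t
      have hs : LinearMap.lTensor I (toQI c J) s = 0 := ht
      have hex : Function.Exact (LinearMap.ker (toQI c J)).subtype (toQI c J) :=
        LinearMap.exact_subtype_ker_map _
      obtain ⟨w, rfl⟩ := (lTensor_exact I hex (toQI_surj c J) s).mp hs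
      have key : ∀ w, ∃ m, A m = P (LinearMap.lTensor I (LinearMap.ker (toQI c J)).subtype w) := by
        intro w
        induction w using TensorProduct.induction_on with
        | zero => exact ⟨0, by simp⟩
        | add w1 w2 h1 h2 =>
          obtain ⟨m1, hm1⟩ := h1
          obtain ⟨m2, hm2⟩ := h2
          exact ⟨m1 + m2, by rw [map_add, hm1, hm2, map_add, map_add]⟩
        | tmul i j =>
          have hj : ((j : J) : R) ∈ c := (toQI_eq_zero c J _).mp j.2
          obtain ⟨u, v, w, huvw⟩ := (span3 _ _ _ _).mp hj
          refine ⟨q ![u • i, v • i, w • i], ?_⟩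
          rw [hA, hA0]
          congr 1
          have e : (j : J) = u • X 0 + v • X 1 + w • X 2 := Subtype.ext huvw
          rw [LinearMap.lTensor_tmul, Fin.sum_univ_three]
          change (u • i) ⊗ₜ X 0 + (v • i) ⊗ₜ X 1 + (w • i) ⊗ₜ X 2 = i ⊗ₜ (j : J)
          rw [e, TensorProduct.tmul_add, TensorProduct.tmul_add, TensorProduct.smul_tmul,
            TensorProduct.smul_tmul, TensorProduct.smul_tmul]
      exact key w
    · rintro ⟨m, rfl⟩
      obtain ⟨a, rfl⟩ := hqs m
      rw [hA, hA0]
      change B0 (∑ i : Fin 3, a i ⊗ₜ X i) = 0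
      rw [map_sum]
      refine Finset.sum_eq_zero fun i _ => ?_
      change a i ⊗ₜ toQI c J (X i) = 0
      rw [(toQI_eq_zero c J _).mpr (hXc i), TensorProduct.tmul_zero]

lemma WW_comm (c I J : Ideal R) :
    Module.length R ((I ⊗[R] J) ⧸ WW c I J) = Module.length R ((J ⊗[R] I) ⧸ WW c J I) := by
  refine (Submodule.Quotient.equiv _ _ (TensorProduct.comm R I J) ?_).length_eq
  rw [WW, WW, Submodule.map_span]
  congr 1
  ext t
  constructor
  · rintro ⟨_, ⟨a, b, ha, hb, rfl⟩, rfl⟩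
    exact ⟨b, a, hb, ha, rfl⟩
  · rintro ⟨b, a, hb, ha, rfl⟩
    exact ⟨a ⊗ₜ b, ⟨a, b, ha, hb, rfl⟩, rfl⟩

/-- the numerical property invariant under linkage -/
def PP (I : Ideal R) : Prop := ∀ x y z : R, x ∈ I → y ∈ I → z ∈ I →
  RingTheory.Sequence.IsRegular R [x, y, z] →
  Module.length R (I ⊗[R] (Wq I (Ideal.span {x, y, z}))) = 3 * Module.length R (R ⧸ I)

lemma ofList3 (x y z : R) : Ideal.ofList [x, y, z] = Ideal.span {x, y, z} := by
  rw [Ideal.ofList]; congr 1; ext; simp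

lemma good_of_regular {l : List R} (h : RingTheory.Sequence.IsRegular R l) : GoodSeq l ⊥ :=
  (goodSeq_bot l).mpr h.toIsWeaklyRegular

lemma PP_of_one [IsLocalRing R] [IsNoetherianRing R] (I : Ideal R) {x y z : R}
    (hx : x ∈ I) (hy : y ∈ I) (hz : z ∈ I)
    (hr : RingTheory.Sequence.IsRegular R [x, y, z])
    (h : Module.length R (I ⊗[R] (Wq I (Ideal.span {x, y, z}))) = 3 * Module.length R (R ⧸ I))
    (hI : I ≠ ⊤) : PP I := by
  intro x' y' z' hx' hy' hz' hr'
  obtain ⟨e⟩ := Wq_equiv I (IsLocalRing.le_maximalIdeal hI) 3 ⊥ [x, y, z] [x', y', z'] rfl rfl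
    (by simp [hx, hy, hz]) (by simp [hx', hy', hz']) (good_of_regular hr) (good_of_regular hr')
  rw [bot_sup_eq, bot_sup_eq, ofList3, ofList3] at e
  rw [← h]
  exact (TensorProduct.congr (LinearEquiv.refl R I) e).length_eq.symm

lemma PP_top : PP (⊤ : Ideal R) := by
  intro x y z _ _ _ _
  have h1 : Wq (⊤ : Ideal R) (Ideal.span {x, y, z}) = ⊥ := by
    rw [eq_bot_iff]
    rintro _ ⟨r, hr, rfl⟩
    have := (mem_colon_iff _ _ _).mp hr 1 trivial
    rw [mul_one] at this
    exact (mkQ_eq_zero_iff _ _).mpr this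
  have : Subsingleton (Wq (⊤ : Ideal R) (Ideal.span {x, y, z})) := by
    rw [h1]; infer_instance
  rw [Module.length_eq_zero, Module.length_eq_zero, mul_zero]

def HS (R : Type*) [CommRing R] [IsLocalRing R] : Prop :=
  ∀ x y z : R, RingTheory.Sequence.IsRegular R [x, y, z] →
    Module.length R (R ⧸ Ideal.span {x, y, z}) ≠ ⊤ ∧
    Module.length R (Wq (IsLocalRing.maximalIdeal R) (Ideal.span {x, y, z})) ≤ 1

lemma PP_link [IsLocalRing R] [IsNoetherianRing R] (hS : HS R) (I J : Ideal R)
    (h : DirectlyLinked I J) (hJ : PP J) : PP I := by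
  obtain ⟨x, y, z, hx, hy, hz, hr, hJ'⟩ := h
  by_cases hI : I = ⊤
  · rw [hI]; exact PP_top
  obtain ⟨hS1, hS2⟩ := hS x y z hr
  set c := Ideal.span {x, y, z} with hc
  have hcI : c ≤ I := by
    rw [hc, Ideal.span_le]
    rintro r (rfl | rfl | rfl) <;> assumption
  have hcJ : c ≤ J := fun r hr => by
    rw [hJ', mem_colon_iff]; exact fun i _ => Ideal.mul_mem_right _ _ hr
  refine PP_of_one I hx hy hz hr ?_ hI
  have hd := gorenstein_double c I hcI hS2 hS1
  rw [← hJ'] at hd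
  have h1 := hJ x y z (hcJ (Ideal.subset_span (by simp))) (hcJ (Ideal.subset_span (by simp)))
    (hcJ (Ideal.subset_span (by simp))) hr
  rw [← hc] at h1
  have e1 : Wq J c = QI c I := by rw [Wq, hd]
  have e2 : Wq I c = QI c J := by rw [Wq, hJ']
  rw [e1] at h1
  rw [← hc, e2]
  have h2 := len_tensor x y z (good_of_regular hr) I J hcI hcJ
  have h3 := len_tensor x y z (good_of_regular hr) J I hcJ hcI
  rw [← hc, WW_comm, h3, h1] at h2
  rw [← hc] at h2
  have h4 := len_QI c I hcI
  have h5 := len_QI c J hcJ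
  rw [← mul_add, ← h5, h4, mul_add, add_comm] at h2
  rw [h4] at hS1
  have hf : 3 * Module.length R (QI c I) ≠ ⊤ :=
    WithTop.mul_ne_top (by decide) (enat_add_ne_top hS1).1
  exact (enat_cancel hf (h2.trans (add_comm _ _))).symm

theorem PP_of_licci [IsLocalRing R] [IsNoetherianRing R] (hS : HS R) (I : Ideal R)
    (h : Licci I) : PP I := by
  obtain ⟨C, hIC, x, y, z, hr, hC⟩ := h
  have hPC : PP C := by
    refine PP_link hS C ⊤ ⟨x, y, z, ?_, ?_, ?_, hr, ?_⟩ PP_top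
    · rw [hC]; exact Ideal.subset_span (by simp)
    · rw [hC]; exact Ideal.subset_span (by simp)
    · rw [hC]; exact Ideal.subset_span (by simp)
    · rw [hC]
      symm
      rw [Ideal.eq_top_iff_one, mem_colon_iff]
      intro i hi
      rwa [one_mul]
  induction hIC using Relation.ReflTransGen.head_induction_on with
  | refl => exact hPC
  | head h _ ih => exact PP_link hS _ _ h ih
end PartE

section PartF
open scoped TensorProduct
variable {R : Type*} [CommRing R]

lemma exists_surj6 [IsLocalRing R] (a b c d f g : R)
    (hm : ∀ w ∈ ({a, b, c, d, f, g} : Set R), w ∈ IsLocalRing.maximalIdeal R)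
    {x y z : R} (hx : x ∈ symI a b c d f g)
    (hy : y ∈ symI a b c d f g) (hz : z ∈ symI a b c d f g)
    (h : GoodSeq [x, y, z] (⊥ : Ideal R)) :
    ∃ F : (symI a b c d f g) →ₗ[R] (Fin 6 → R ⧸ IsLocalRing.maximalIdeal R),
      Function.Surjective F := by
  let p : (Fin 6 → R) →ₗ[R] symI a b c d f g := (symD1 a b c d f g).codRestrict _ (fun s => by
    rw [← range_symD1]; exact ⟨s, rfl⟩)
  have hp : Function.Surjective p := by
    rintro ⟨w, hw⟩
    rw [← range_symD1] at hw
    obtain ⟨s, rfl⟩ := hw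
    exact ⟨s, rfl⟩
  let q : (Fin 6 → R) →ₗ[R] (Fin 6 → R ⧸ IsLocalRing.maximalIdeal R) :=
    LinearMap.pi fun i => (Submodule.mkQ _) ∘ₗ LinearMap.proj i
  obtain ⟨k, hk⟩ := factor_surj p hp q (by
    intro s hs
    obtain ⟨t, rfl⟩ := (symExact a b c d f g hx hy hz h).1 s (congrArg Subtype.val hs)
    funext i
    change Submodule.mkQ _ (symD2 a b c d f g t i) = 0
    rw [mkQ_eq_zero_iff]
    apply symD2_mem <;> exact hm _ (by simp))
  refine ⟨k, fun v => ?_⟩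
  choose s hs using fun i => Submodule.mkQ_surjective _ (v i)
  exact ⟨p s, by rw [hk]; exact funext hs⟩

lemma symI_eq_sq (K : Type*) [Field K] [IsLocalRing R] [Algebra K R] (v : Fin 3 → R)
    (hv : IsLocalRing.maximalIdeal R = Ideal.span (Set.range v)) (a b c d f g : R)
    (hm : ∀ w ∈ ({a, b, c, d, f, g} : Set R), w ∈ Submodule.span K (Set.range v))
    {x y z : R} (hx : x ∈ symI a b c d f g)
    (hy : y ∈ symI a b c d f g) (hz : z ∈ symI a b c d f g)
    (h : GoodSeq [x, y, z] (⊥ : Ideal R)) :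
    symI a b c d f g = IsLocalRing.maximalIdeal R * IsLocalRing.maximalIdeal R := by
  set V := Submodule.span K (Set.range v) with hV
  have hVm : ∀ w ∈ V, w ∈ IsLocalRing.maximalIdeal R := by
    have : V ≤ (IsLocalRing.maximalIdeal R).restrictScalars K := by
      rw [hV, Submodule.span_le, hv]; exact Ideal.subset_span
    exact fun w hw => this hw
  have ha : a ∈ V := hm a (by simp)
  have hb : b ∈ V := hm b (by simp)
  have hc : c ∈ V := hm c (by simp)
  have hd : d ∈ V := hm d (by simp)
  have hf : f ∈ V := hm f (by simp)
  have hg : g ∈ V := hm g (by simp)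
  let Θ : (Fin 6 → K) →ₗ[K] R :=
    ((symD1 a b c d f g).restrictScalars K) ∘ₗ
      (LinearMap.pi fun i => (Algebra.linearMap K R) ∘ₗ LinearMap.proj i)
  have hΘ : ∀ α, Θ α = symD1 a b c d f g (fun i => algebraMap K R (α i)) := fun α => rfl
  have hinj : Function.Injective Θ := by
    rw [injective_iff_map_eq_zero]
    intro α hα
    rw [hΘ] at hα
    obtain ⟨t, ht⟩ := (symExact a b c d f g hx hy hz h).1 _ hα
    funext i
    by_contra hne
    have h1 : algebraMap K R (α i) ∈ IsLocalRing.maximalIdeal R := by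
      have := congrFun ht i
      rw [← this]
      apply symD2_mem <;> apply hVm <;> assumption
    exact (IsLocalRing.mem_maximalIdeal _).mp h1 ((IsUnit.mk0 _ hne).map (algebraMap K R))
  have hle : LinearMap.range Θ ≤ V * V := by
    rintro _ ⟨α, rfl⟩
    rw [hΘ, symD1_apply]
    have L : ∀ {w : R} (_ : w ∈ V * V) (r : K), w * algebraMap K R r ∈ V * V := fun {w} hw r => by
      rw [mul_comm w, ← Algebra.smul_def]; exact Submodule.smul_mem _ _ hw
    refine add_mem (add_mem (add_mem (add_mem (add_mem ?_ ?_) ?_) ?_) ?_) ?_ <;>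
      refine L (sub_mem ?_ ?_) _ <;> apply Submodule.mul_mem_mul <;> assumption
  let w : Fin 6 → R := ![v 0 * v 0, v 0 * v 1, v 0 * v 2, v 1 * v 1, v 1 * v 2, v 2 * v 2]
  have hVw : V * V ≤ Submodule.span K (Set.range w) := by
    rw [hV, Submodule.span_mul_span, Submodule.span_le]
    rintro _ ⟨_, ⟨i, rfl⟩, _, ⟨j, rfl⟩, rfl⟩
    have hw : ∀ i, w i ∈ Submodule.span K (Set.range w) := fun i => Submodule.subset_span ⟨i, rfl⟩
    change v i * v j ∈ Submodule.span K (Set.range w)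
    fin_cases i <;> fin_cases j
    · exact hw 0
    · exact hw 1
    · exact hw 2
    · rw [mul_comm]; exact hw 1
    · exact hw 3
    · exact hw 4
    · rw [mul_comm]; exact hw 2
    · rw [mul_comm]; exact hw 4
    · exact hw 5
  have hfin : Module.Finite K (Submodule.span K (Set.range w)) :=
    FiniteDimensional.span_of_finite K (Set.finite_range w)
  have hr6 : Module.finrank K (LinearMap.range Θ) = 6 := by
    rw [LinearMap.finrank_range_of_inj hinj]; simp
  have hw6 : Module.finrank K (Submodule.span K (Set.range w)) ≤ 6 := by
    have := finrank_range_le_card (R := K) w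
    rw [Fintype.card_fin] at this
    exact this
  have heq : LinearMap.range Θ = Submodule.span K (Set.range w) :=
    Submodule.eq_of_le_of_finrank_le (hle.trans hVw) (by rw [hr6]; exact hw6)
  apply le_antisymm
  · rw [symI, Ideal.span_le]
    have L : ∀ {p q : R}, p ∈ V → q ∈ V → p * q ∈
      IsLocalRing.maximalIdeal R * IsLocalRing.maximalIdeal R := fun hp hq =>
        Ideal.mul_mem_mul (hVm _ hp) (hVm _ hq)
    rintro t ht
    simp only [Set.mem_insert_iff, Set.mem_singleton_iff] at ht
    rcases ht with rfl | rfl | rfl | rfl | rfl | rfl <;> refine sub_mem (L ?_ ?_) (L ?_ ?_) <;>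
      assumption
  · rw [hv, Ideal.span_mul_span, Ideal.span_le]
    intro t ht
    have : t ∈ LinearMap.range Θ := by
      rw [heq]
      apply hVw
      obtain ⟨_, ⟨i, rfl⟩, _, ⟨j, rfl⟩, rfl⟩ := ht
      exact Submodule.mul_mem_mul (Submodule.subset_span ⟨i, rfl⟩) (Submodule.subset_span ⟨j, rfl⟩)
    obtain ⟨α, rfl⟩ := this
    change Θ α ∈ symI a b c d f g
    rw [hΘ, ← range_symD1]
    exact ⟨_, rfl⟩

lemma tensor_surj (I : Ideal R) (m : Ideal R) (F : I →ₗ[R] (Fin 6 → R ⧸ m))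
    (hF : Function.Surjective F) (M : Type*) [AddCommGroup M] [Module R M] :
    6 * Module.length R (M ⧸ (m • (⊤ : Submodule R M))) ≤ Module.length R (I ⊗[R] M) := by
  let β : (R ⧸ m) →ₗ[R] (M →ₗ[R] (M ⧸ (m • (⊤ : Submodule R M)))) :=
    m.liftQ (LinearMap.toSpanSingleton R _ (Submodule.mkQ _)) (by
      intro r hr
      rw [LinearMap.mem_ker]
      ext w
      change r • (m • (⊤ : Submodule R M)).mkQ w = 0
      rw [← map_smul]
      exact (Submodule.Quotient.mk_eq_zero _).mpr (Submodule.smul_mem_smul hr trivial))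
  have hβ : ∀ w, β (m.mkQ 1) w = Submodule.mkQ _ w := by
    intro w
    change (1 : R) • (m • (⊤ : Submodule R M)).mkQ w = _
    rw [one_smul]
  let G : (I ⊗[R] M) →ₗ[R] (Fin 6 → M ⧸ (m • (⊤ : Submodule R M))) :=
    LinearMap.pi fun j => TensorProduct.lift (β ∘ₗ LinearMap.proj j ∘ₗ F)
  have hG : ∀ i w j, G (i ⊗ₜ w) j = β (F i j) w := fun i w j => rfl
  have hGs : Function.Surjective G := by
    rw [← LinearMap.range_eq_top, eq_top_iff]
    intro v _
    rw [← Finset.univ_sum_single v]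
    refine Submodule.sum_mem _ fun j _ => ?_
    obtain ⟨w, hw⟩ := Submodule.mkQ_surjective _ (v j)
    obtain ⟨i, hi⟩ := hF (Pi.single j (m.mkQ 1))
    refine ⟨i ⊗ₜ w, ?_⟩
    funext j'
    rw [hG, hi]
    by_cases hj : j' = j
    · subst hj
      rw [Pi.single_eq_same, Pi.single_eq_same, hβ, hw]
    · rw [Pi.single_eq_of_ne hj, Pi.single_eq_of_ne hj, map_zero]; rfl
  have := Module.length_le_of_surjective G hGs
  rw [Module.length_pi_of_fintype] at this
  simpa using this

lemma quot_max_len [IsLocalRing R] : Module.length R (R ⧸ IsLocalRing.maximalIdeal R) = 1 := by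
  rw [Module.length_eq_one_iff, isSimpleModule_iff_isCoatom]
  exact (IsLocalRing.maximalIdeal.isMaximal R).1

lemma len_sq_ge [IsLocalRing R] [IsNoetherianRing R] (m : Ideal R)
    (hm : m = IsLocalRing.maximalIdeal R)
    (F : ↥(m * m) →ₗ[R]
      (Fin 6 → R ⧸ m)) (hF : Function.Surjective F) :
    3 ≤ Module.length R
      (R ⧸ (m * m : Ideal R)) := by
  have hq1 : Module.length R (R ⧸ m) = 1 := by rw [hm]; exact quot_max_len
  by_contra hcon
  push Not at hcon
  rw [len_QI (m * m) m Ideal.mul_le_right, hq1] at hcon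
  have hQ : Module.length R (QI (m * m) m) ≤ 1 := by
    have hfin := (enat_add_ne_top (ne_top_of_lt hcon)).1
    lift Module.length R (QI (m * m) m) to ℕ using hfin with n
    norm_cast at hcon ⊢
    omega
  have ht : ∃ t ∈ m, m ≤ Ideal.span {t} ⊔ m * m := by
    by_cases hs : m ≤ m * m
    · exact ⟨0, zero_mem _, hs.trans le_sup_right⟩
    · obtain ⟨t, ht, ht2⟩ := SetLike.not_le_iff_exists.mp hs
      refine ⟨t, ht, ?_⟩
      let T : QI (m * m) m := toQI (m * m) m ⟨t, ht⟩
      have hT : T ≠ 0 := fun h => ht2 ((toQI_eq_zero _ _ _).mp h)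
      have hnt : Nontrivial (Submodule.span R {T}) := by
        rw [Submodule.nontrivial_iff_ne_bot]
        rw [Ne, Submodule.span_singleton_eq_bot]; exact hT
      have htop := eq_top_of_len (Submodule.span R {T}) (ne_top_of_le_ne_top (by decide) hQ)
        (hQ.trans (Order.one_le_iff_pos.mpr Module.length_pos))
      intro s hs
      have : toQI (m * m) m ⟨s, hs⟩ ∈ Submodule.span R {T} := by rw [htop]; trivial
      obtain ⟨r, hr⟩ := Submodule.mem_span_singleton.mp this
      have h2 : toQI (m * m) m (⟨s, hs⟩ - r • ⟨t, ht⟩) = 0 := by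
        rw [map_sub, map_smul, sub_eq_zero]; exact hr.symm
      rw [toQI_eq_zero] at h2
      have h3 : s - r * t ∈ m * m := h2
      have : s = r * t + (s - r * t) := by ring
      rw [this]
      exact Submodule.add_mem_sup (Ideal.mul_mem_left _ _ (Ideal.mem_span_singleton_self t)) h3
  obtain ⟨t, htm, ht⟩ := ht
  have hmt : m ≤ Ideal.span {t} :=
    Submodule.le_of_le_smul_of_le_jacobson_bot (I := m) (IsNoetherian.noetherian _) (by
      rw [IsLocalRing.jacobson_eq_maximalIdeal ⊥ bot_ne_top, hm]) ht
  have htt : t * t ∈ m * m := Ideal.mul_mem_mul htm htm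
  let p : R →ₗ[R] ↥(m * m) := LinearMap.toSpanSingleton R _ ⟨t * t, htt⟩
  have hp : Function.Surjective p := by
    rintro ⟨s, hs⟩
    have : m * m ≤ Ideal.span {t * t} := by
      rw [← Ideal.span_singleton_mul_span_singleton]; exact Ideal.mul_mono hmt hmt
    obtain ⟨r, hr⟩ := Ideal.mem_span_singleton'.mp (this hs)
    exact ⟨r, Subtype.ext hr⟩
  obtain ⟨k, hk⟩ := factor_surj m.mkQ m.mkQ_surjective (F ∘ₗ p) (by
    intro r hr
    have hr' : r ∈ m := (mkQ_eq_zero_iff _ _).mp hr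
    have : p r = r • p 1 := by rw [← map_smul, smul_eq_mul, mul_one]
    rw [LinearMap.comp_apply, this, map_smul]
    funext j
    obtain ⟨s, hs⟩ := Submodule.mkQ_surjective _ (F (p 1) j)
    rw [Pi.smul_apply, ← hs, ← map_smul]
    exact (mkQ_eq_zero_iff _ _).mpr (Ideal.mul_mem_right _ _ hr'))
  have hks : Function.Surjective k := by
    intro v
    obtain ⟨i, hi⟩ := hF v
    obtain ⟨r, rfl⟩ := hp i
    exact ⟨m.mkQ r, by rw [hk]; exact hi⟩
  have := Module.length_le_of_surjective k hks
  rw [Module.length_pi_of_fintype, hq1] at this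
  simp at this

theorem final_contra [IsLocalRing R] [IsNoetherianRing R] (hS : HS R) (m : Ideal R)
    (hm : m = IsLocalRing.maximalIdeal R)
    (F : ↥(m * m) →ₗ[R]
      (Fin 6 → R ⧸ m)) (hF : Function.Surjective F)
    {x y z : R} (hx : x ∈ m * m)
    (hy : y ∈ m * m)
    (hz : z ∈ m * m)
    (hr : RingTheory.Sequence.IsRegular R [x, y, z])
    (hP : PP (m * m)) : False := by
  have h1 := hP x y z hx hy hz hr
  obtain ⟨hS1, hS2⟩ := hS x y z hr
  set c := Ideal.span {x, y, z} with hc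
  have hcI : c ≤ m * m := by
    rw [hc, Ideal.span_le]
    rintro r (rfl | rfl | rfl) <;> assumption
  have h2 := (gorenstein_main c (m * m) hcI hS2 hS1).2
  have h3 := tensor_surj (m * m) m F hF (Wq (m * m) c)
  have h4 := len_sq_ge m hm F hF
  have h5 := len_sub_quot (m • (⊤ : Submodule R (Wq (m * m) c)))
  have h6 : Module.length R ↥(m • (⊤ : Submodule R (Wq (m * m) c))) ≤ 1 := by
    rw [← hm] at hS2
    refine le_trans ?_ hS2
    have hmem : ∀ w ∈ m • (⊤ : Submodule R (Wq (m * m) c)), (w : R ⧸ c) ∈ Wq m c := by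
      intro w hw
      induction hw using Submodule.smul_induction_on' with
      | smul r hr n _ =>
        obtain ⟨_, ⟨s, hs, rfl⟩⟩ := n
        change r • c.mkQ s ∈ _
        rw [← map_smul, mk_mem_Wq]
        intro i hi
        rw [smul_eq_mul, mul_comm r, mul_assoc]
        exact (mem_colon_iff _ _ _).mp hs _ (Ideal.mul_mem_mul hr hi)
      | add a _ b _ ha hb => exact add_mem ha hb
    let ι : ↥(m • (⊤ : Submodule R (Wq (m * m) c))) →ₗ[R] Wq m c :=
      ((Wq (m * m) c).subtype ∘ₗ (m • (⊤ : Submodule R (Wq (m * m) c))).subtype).codRestrict _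
        (fun w => hmem w w.2)
    refine Module.length_le_of_injective ι ?_
    intro a b hab
    exact Subtype.ext (Subtype.ext (congrArg (fun t : Wq m c => (t : R ⧸ c)) hab))
  rw [h1, ← h2] at h3
  rw [← h2] at h4
  have hfin : Module.length R (Wq (m * m) c) ≠ ⊤ := by
    rw [h2]
    rw [len_QI c (m * m) hcI] at hS1
    exact (enat_add_ne_top hS1).2
  rw [h5] at h3 h4 hfin
  obtain ⟨f1, f2⟩ := enat_add_ne_top hfin
  generalize Module.length R ↥(m • (⊤ : Submodule R (Wq (m * m) c))) = A at *
  generalize Module.length R (↥(Wq (m * m) c) ⧸ (m • (⊤ : Submodule R (Wq (m * m) c)))) = B at *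
  lift A to ℕ using f1
  lift B to ℕ using f2
  norm_cast at h3 h4 h6
  omega
end PartF

section PartM1
set_option linter.unusedSectionVars false
open RingTheory.Sequence
variable {R : Type*} [CommRing R]

lemma goodSeq_map_surj {S : Type*} [CommRing S] (φ : R →+* S) (hφ : Function.Surjective φ)
    (l : List R) : ∀ I : Ideal S, GoodSeq (l.map φ) I ↔ GoodSeq l (I.comap φ) := by
  induction l with
  | nil => intro I; exact Iff.rfl
  | cons a t ih =>
    intro I
    rw [List.map_cons, GoodSeq, GoodSeq, ih]
    have h1 : (∀ r, φ a * r ∈ I → r ∈ I) ↔ ∀ r, a * r ∈ I.comap φ → r ∈ I.comap φ := by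
      constructor
      · intro h r hr
        rw [Ideal.mem_comap, map_mul] at hr
        exact h _ hr
      · intro h r hr
        obtain ⟨r, rfl⟩ := hφ r
        exact h r (by rw [Ideal.mem_comap, map_mul]; exact hr)
    have h2 : (I ⊔ Ideal.span {φ a}).comap φ = I.comap φ ⊔ Ideal.span {a} := by
      have e : I ⊔ Ideal.span {φ a} = (I.comap φ ⊔ Ideal.span {a}).map φ := by
        rw [Ideal.map_sup, Ideal.map_comap_of_surjective φ hφ, Ideal.map_span, Set.image_singleton]
      rw [e, Ideal.comap_map_of_surjective φ hφ, sup_eq_left]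
      exact (Ideal.comap_mono bot_le).trans le_sup_left
    rw [h1, h2]

lemma goodSeq_quot (L : Ideal R) (l : List R) :
    GoodSeq (l.map (Ideal.Quotient.mk L)) ⊥ ↔ GoodSeq l L := by
  rw [goodSeq_map_surj _ Ideal.Quotient.mk_surjective]
  have : (⊥ : Ideal (R ⧸ L)).comap (Ideal.Quotient.mk L) = L := by
    rw [← RingHom.ker_eq_comap_bot, Ideal.mk_ker]
  rw [this]

lemma regular_mem [IsLocalRing R] {l : List R} (h : IsRegular R l) :
    ∀ r ∈ l, r ∈ IsLocalRing.maximalIdeal R := by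
  intro r hr
  have h1 := h.top_ne_smul
  have h2 : Ideal.ofList l ≠ ⊤ := by
    intro h3
    apply h1
    rw [h3]; simp
  exact IsLocalRing.le_maximalIdeal h2 (Ideal.subset_span hr)

lemma isRegular_of_good [IsLocalRing R] [IsNoetherianRing R] {l : List R} (h : GoodSeq l ⊥)
    (hm : ∀ r ∈ l, r ∈ IsLocalRing.maximalIdeal R) : IsRegular R l :=
  IsRegular.of_isWeaklyRegular_of_mem_maximalIdeal _ hm ((goodSeq_bot l).mp h)

variable [IsLocalRing R] [IsNoetherianRing R] {e : ℕ} (u : Fin e → R)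

structure UHyp : Prop where
  gen : IsLocalRing.maximalIdeal R = Ideal.span (Set.range u)
  good : GoodSeq (List.ofFn u) ⊥

variable {u}

lemma UHyp.ofList (hu : UHyp u) : Ideal.ofList (List.ofFn u) = IsLocalRing.maximalIdeal R := by
  rw [hu.gen, Ideal.ofList]; congr 1; ext; simp [List.mem_ofFn]

lemma UHyp.mem (hu : UHyp u) : ∀ r ∈ List.ofFn u, r ∈ IsLocalRing.maximalIdeal R := by
  intro r hr
  rw [← hu.ofList]; exact Ideal.subset_span hr

lemma UHyp.short (hu : UHyp u) (z : List R) (hz : GoodSeq z ⊥)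
    (hzm : ∀ r ∈ z, r ∈ IsLocalRing.maximalIdeal R) (hlen : z.length < e) (r : R)
    (hr : ∀ p ∈ IsLocalRing.maximalIdeal R, p * r ∈ Ideal.ofList z) : r ∈ Ideal.ofList z := by
  set n := z.length with hn
  set U := List.ofFn u with hU
  have hUl : U.length = e := by simp [hU]
  have hsplit : U = U.take n ++ U.drop n := (List.take_append_drop _ _).symm
  have hdrop : U.drop n = U[n]'(by omega) :: U.drop (n + 1) := List.drop_eq_getElem_cons _
  have hg := hu.good
  rw [← hU, hsplit, goodSeq_append, hdrop] at hg
  obtain ⟨e1⟩ := Wq_equiv (IsLocalRing.maximalIdeal R) le_rfl n ⊥ z (U.take n) hn.symm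
    (by rw [List.length_take]; omega) hzm (fun y hy => hu.mem y (List.mem_of_mem_take hy)) hz hg.1
  rw [bot_sup_eq] at hg
  rw [bot_sup_eq, bot_sup_eq] at e1
  have hbot : Subsingleton (Wq (IsLocalRing.maximalIdeal R) (Ideal.ofList (U.take n))) := by
    refine subsingleton_of_forall_eq 0 ?_
    rintro ⟨_, ⟨s, hs, rfl⟩⟩
    apply Subtype.ext
    refine (mkQ_eq_zero_iff _ _).mpr (hg.2.1 s ?_)
    rw [mul_comm]
    exact (mem_colon_iff _ _ _).mp hs _ (hu.mem _ (List.getElem_mem _))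
  have := e1.toEquiv.subsingleton
  have h0 : (⟨(Ideal.ofList z).mkQ r, (mk_mem_Wq _ _ _).mpr fun i hi => by
    rw [mul_comm]; exact hr i hi⟩ : Wq (IsLocalRing.maximalIdeal R) (Ideal.ofList z)) = 0 :=
    Subsingleton.elim _ _
  exact (mkQ_eq_zero_iff _ _).mp (congrArg Subtype.val h0)

lemma UHyp.full (hu : UHyp u) (z : List R) (hz : GoodSeq z ⊥)
    (hzm : ∀ r ∈ z, r ∈ IsLocalRing.maximalIdeal R) (hlen : z.length = e) :
    Module.length R (R ⧸ Ideal.ofList z) ≠ ⊤ ∧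
    Module.length R (Wq (IsLocalRing.maximalIdeal R) (Ideal.ofList z)) ≤ 1 := by
  constructor
  · have h1 := ringKrullDim_add_length_eq_ringKrullDim_of_isRegular z (isRegular_of_good hz hzm)
    have h2 := ringKrullDim_add_length_eq_ringKrullDim_of_isRegular _
      (isRegular_of_good hu.good hu.mem)
    rw [hu.ofList, ← h1, List.length_ofFn, hlen] at h2
    have hne : Ideal.ofList z ≠ ⊤ := fun h => by
      have : Ideal.ofList z ≤ IsLocalRing.maximalIdeal R := Ideal.span_le.mpr hzm
      rw [h, top_le_iff] at this
      exact (IsLocalRing.maximalIdeal.isMaximal R).ne_top this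
    have : Nontrivial (R ⧸ Ideal.ofList z) := Ideal.Quotient.nontrivial_iff.mpr hne
    have h3 : ringKrullDim (R ⧸ IsLocalRing.maximalIdeal R) = 0 :=
      ringKrullDim_eq_zero_of_field (IsLocalRing.ResidueField R)
    rw [h3] at h2
    have h4 : ringKrullDim (R ⧸ Ideal.ofList z) = 0 := by
      generalize ringKrullDim (R ⧸ Ideal.ofList z) = d at h2
      induction d using WithBot.recBotCoe with
      | bot => rw [WithBot.bot_add] at h2; exact absurd h2 (by rw [zero_add]; exact WithBot.natCast_ne_bot e)
      | coe d =>
        have h5 : (0 : ℕ∞) + (e : ℕ∞) = d + (e : ℕ∞) := by exact_mod_cast h2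
        rw [← enat_cancel (by simp) h5]; rfl
    have h5 : Ring.KrullDimLE 0 (R ⧸ Ideal.ofList z) := by
      rw [Ring.krullDimLE_iff, h4]; rfl
    have h6 : IsArtinianRing (R ⧸ Ideal.ofList z) := 
      isArtinianRing_iff_isNoetherianRing_krullDimLE_zero.mpr ⟨inferInstance, h5⟩
    rw [Module.length_eq_of_surjective (R := R ⧸ Ideal.ofList z) (S := R)
      Ideal.Quotient.mk_surjective]
    exact Module.length_ne_top
  · obtain ⟨e1⟩ := Wq_equiv (IsLocalRing.maximalIdeal R) le_rfl e ⊥ z (List.ofFn u) hlen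
      (by simp) hzm hu.mem hz hu.good
    rw [bot_sup_eq, bot_sup_eq, hu.ofList] at e1
    rw [e1.length_eq, ← quot_max_len (R := R)]
    exact Module.length_le_of_injective (Submodule.subtype _) (Submodule.injective_subtype _)

variable {K : Type*} [Field K] [Infinite K] [Algebra K R]

variable (K) in
def linForm (u : Fin e → R) : (Fin e → K) →ₗ[K] R := Fintype.linearCombination K u

lemma linForm_apply (u : Fin e → R) (α : Fin e → K) : linForm K u α = ∑ i, α i • u i := rfl

lemma linForm_single (u : Fin e → R) (i : Fin e) : linForm K u (Pi.single i 1) = u i := by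
  simp [linForm_apply, Pi.single_apply]

lemma UHyp.linForm_mem (hu : UHyp u) (α : Fin e → K) :
    linForm K u α ∈ IsLocalRing.maximalIdeal R := by
  rw [linForm_apply]
  refine Submodule.sum_mem _ fun i _ => ?_
  rw [Algebra.smul_def]
  exact Ideal.mul_mem_left _ _ (by rw [hu.gen]; exact Ideal.subset_span ⟨i, rfl⟩)

lemma UHyp.choose (hu : UHyp u) (Z : Finset (List R)) (hZ : ∀ z ∈ Z, GoodSeq z ⊥ ∧
    (∀ r ∈ z, r ∈ IsLocalRing.maximalIdeal R) ∧ z.length < e) (C : Submodule K (Fin e → K))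
    (hC : C ≠ ⊤) : ∃ α, α ∉ C ∧ ∀ z ∈ Z, RegMod (linForm K u α) (Ideal.ofList z) := by
  classical
  choose S hS1 hS2 hS3 using fun z : List R => exists_primes_regMod (Ideal.ofList z)
  let pull : Ideal R → Submodule K (Fin e → K) := fun P =>
    (P.restrictScalars K).comap (linForm K u)
  let s : Finset (Submodule K (Fin e → K)) :=
    insert C (Z.biUnion fun z => (hS1 z).toFinset.image pull)
  have hs : ⊤ ∉ s := by
    intro h
    rw [Finset.mem_insert] at h
    rcases h with h | h
    · exact hC h.symm
    · simp only [Finset.mem_biUnion, Finset.mem_image, Set.Finite.mem_toFinset] at h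
      obtain ⟨z, hz, P, hP, hPt⟩ := h
      obtain ⟨hPp, r, hr, hrP⟩ := hS2 z P hP
      obtain ⟨h1, h2, h3⟩ := hZ z hz
      apply hr
      refine hu.short z h1 h2 h3 r fun p hp => hrP p ?_
      have : IsLocalRing.maximalIdeal R ≤ P := by
        rw [hu.gen, Ideal.span_le]
        rintro _ ⟨i, rfl⟩
        have : Pi.single i 1 ∈ pull P := by rw [hPt]; trivial
        have h4 : linForm K u (Pi.single i 1) ∈ P := this
        rwa [linForm_single] at h4
      exact this hp
  have := Subspace.biUnion_ne_univ_of_top_notMem hs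
  rw [Ne, Set.eq_univ_iff_forall] at this
  push Not at this
  obtain ⟨α, hα⟩ := this
  simp only [Set.mem_iUnion, not_exists] at hα
  refine ⟨α, fun h => hα C (Finset.mem_insert_self _ _) h, fun z hz => hS3 z _ fun P hP h => ?_⟩
  refine hα (pull P) (Finset.mem_insert_of_mem ?_) h
  simp only [Finset.mem_biUnion, Finset.mem_image, Set.Finite.mem_toFinset]
  exact ⟨z, hz, P, hP, rfl⟩

lemma UHyp.chooseList (hu : UHyp u) (T : Finset (List R)) (hT : ∀ z ∈ T, GoodSeq z ⊥ ∧
    (∀ r ∈ z, r ∈ IsLocalRing.maximalIdeal R) ∧ z.length = 3) (j : ℕ) (hj : j + 3 ≤ e) :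
    ∃ ls : List R, ls.length = j ∧ (∀ l ∈ ls, l ∈ IsLocalRing.maximalIdeal R) ∧
      (∀ t ∈ T, GoodSeq (t ++ ls) ⊥) ∧
      ∃ C : Submodule K (Fin e → K), Module.finrank K C = j ∧
        ∀ α ∈ C, linForm K u α ∈ Ideal.ofList ls := by
  classical
  induction j with
  | zero =>
    refine ⟨[], rfl, by simp, fun t ht => by rw [List.append_nil]; exact (hT t ht).1, ⊥, by simp, ?_⟩
    intro α hα
    rw [(Submodule.mem_bot K).mp hα, map_zero]; exact zero_mem _
  | succ j ih =>
    obtain ⟨ls, h1, h2, h3, C, h4, h5⟩ := ih (by omega)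
    obtain ⟨α, hα, hα2⟩ := hu.choose (K := K) (T.image (· ++ ls)) (by
      intro z hz
      obtain ⟨t, ht, rfl⟩ := Finset.mem_image.mp hz
      refine ⟨h3 t ht, ?_, ?_⟩
      · intro r hr
        rcases List.mem_append.mp hr with hr | hr
        · exact (hT t ht).2.1 r hr
        · exact h2 r hr
      · rw [List.length_append, (hT t ht).2.2, h1]; omega) C (by
        rintro rfl
        rw [finrank_top] at h4
        simp at h4
        omega)
    refine ⟨ls ++ [linForm K u α], by simp [h1], ?_, ?_, C ⊔ Submodule.span K {α}, ?_, ?_⟩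
    · intro l hl
      rcases List.mem_append.mp hl with hl | hl
      · exact h2 l hl
      · rw [List.mem_singleton.mp hl]; exact hu.linForm_mem α
    · intro t ht
      rw [← List.append_assoc, goodSeq_append, bot_sup_eq]
      exact ⟨h3 t ht, hα2 _ (Finset.mem_image_of_mem _ ht), trivial⟩
    · rw [Submodule.finrank_sup_span_singleton hα, h4]
    · intro β hβ
      obtain ⟨γ, hγ, δ, hδ, rfl⟩ := Submodule.mem_sup.mp hβ
      obtain ⟨k, rfl⟩ := Submodule.mem_span_singleton.mp hδ
      rw [map_add, map_smul, Ideal.ofList_append]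
      refine Submodule.add_mem_sup (h5 γ hγ) ?_
      rw [Algebra.smul_def]
      exact Ideal.mul_mem_left _ _ (Ideal.subset_span (by simp))
end PartM1

section PartM2
set_option linter.unusedSectionVars false
open RingTheory.Sequence
variable {R : Type*} [CommRing R]

lemma symD1_map {S : Type*} [CommRing S] (φ : R →+* S) (a b c d f g : R) (s : Fin 6 → R) :
    φ (symD1 a b c d f g s) = symD1 (φ a) (φ b) (φ c) (φ d) (φ f) (φ g) (fun i => φ (s i)) := by
  simp [symD1_apply]

lemma symD2_map {S : Type*} [CommRing S] (φ : R →+* S) (a b c d f g : R) (s : Fin 8 → R) (i : Fin 6) :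
    φ (symD2 a b c d f g s i) =
      symD2 (φ a) (φ b) (φ c) (φ d) (φ f) (φ g) (fun i => φ (s i)) i := by
  fin_cases i <;> simp [symD2_apply]

lemma symD1_mem_ideal (J : Ideal R) (a b c d f g : R) (s : Fin 6 → R) (h : ∀ i, s i ∈ J) :
    symD1 a b c d f g s ∈ J := by
  rw [← Ideal.Quotient.eq_zero_iff_mem, symD1_map]
  have : (fun i => Ideal.Quotient.mk J (s i)) = 0 := by
    ext i; exact Ideal.Quotient.eq_zero_iff_mem.mpr (h i)
  rw [this, map_zero]

variable [IsLocalRing R] [IsNoetherianRing R]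

lemma symI_regMod (a b c d f g : R) {x y z : R} (hx : x ∈ symI a b c d f g)
    (hy : y ∈ symI a b c d f g) (hz : z ∈ symI a b c d f g) (L : Ideal R) (l : R)
    (hl : RegMod l L) (h : GoodSeq [x, y, z] (L ⊔ Ideal.span {l})) :
    RegMod l (symI a b c d f g ⊔ L) := by
  intro r hr
  obtain ⟨p, hp, q, hq, hpq⟩ := Submodule.mem_sup.mp hr
  rw [← range_symD1] at hp
  obtain ⟨s, rfl⟩ := hp
  set J := L ⊔ Ideal.span {l} with hJ
  let φ := Ideal.Quotient.mk J
  have key : ∀ w, w ∈ symI a b c d f g → φ w ∈ symI (φ a) (φ b) (φ c) (φ d) (φ f) (φ g) := by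
    intro w hw
    rw [← map_symI]
    exact Ideal.mem_map_of_mem _ hw
  have hg : GoodSeq [φ x, φ y, φ z] ⊥ := (goodSeq_quot J [x, y, z]).mpr h
  obtain ⟨E1, -, -⟩ := symExact _ _ _ _ _ _ (key x hx) (key y hy) (key z hz) hg
  have hlJ : l ∈ J := le_sup_right (a := L) (Ideal.mem_span_singleton_self l)
  have hs0 : φ (symD1 a b c d f g s) = 0 := by
    rw [Ideal.Quotient.eq_zero_iff_mem]
    have : symD1 a b c d f g s = l * r - q := by rw [← hpq]; ring
    rw [this]
    exact J.sub_mem (J.mul_mem_right _ hlJ) (le_sup_left (b := Ideal.span {l}) hq)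
  rw [symD1_map] at hs0
  obtain ⟨t, ht⟩ := E1 _ hs0
  choose t' ht' using fun i => Ideal.Quotient.mk_surjective (t i)
  have h2 : ∀ i, s i - symD2 a b c d f g t' i ∈ J := by
    intro i
    rw [← Ideal.Quotient.eq_zero_iff_mem, map_sub]
    change φ _ - φ _ = 0
    rw [symD2_map]
    have : (fun i => φ (t' i)) = t := funext ht'
    rw [this, ht, sub_self]
  choose p' hp' s' hs' using fun i => (mem_sup_span_iff L l _).mp (h2 i)
  have h3 : symD1 a b c d f g s = symD1 a b c d f g p' + l * symD1 a b c d f g s' := by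
    have : s = symD2 a b c d f g t' + (p' + l • s') := by
      ext i
      have := hs' i
      simp only [Pi.add_apply, Pi.smul_apply, smul_eq_mul]
      rw [← this]; ring
    conv_lhs => rw [this]
    rw [map_add, map_add, symD1_D2, map_smul, zero_add, smul_eq_mul]
  have h4 : l * (r - symD1 a b c d f g s') ∈ L := by
    have : l * (r - symD1 a b c d f g s') = symD1 a b c d f g p' + q := by
      rw [mul_sub, ← hpq, h3]; ring
    rw [this]
    exact L.add_mem (symD1_mem_ideal L _ _ _ _ _ _ _ hp') hq
  have h5 := hl _ h4
  have : r = symD1 a b c d f g s' + (r - symD1 a b c d f g s') := by ring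
  rw [this]
  exact Submodule.add_mem_sup (by rw [← range_symD1]; exact ⟨_, rfl⟩) h5

lemma symI_goodSeq (a b c d f g : R) {x y z : R} (hx : x ∈ symI a b c d f g)
    (hy : y ∈ symI a b c d f g) (hz : z ∈ symI a b c d f g)
    (ht : ∀ r ∈ [x, y, z], r ∈ IsLocalRing.maximalIdeal R) (ls : List R)
    (hls : ∀ l ∈ ls, l ∈ IsLocalRing.maximalIdeal R) : ∀ L : Ideal R,
    GoodSeq ([x, y, z] ++ ls) L → GoodSeq ls (symI a b c d f g ⊔ L) := by
  induction ls with
  | nil => intro L _; trivial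
  | cons l t ih =>
    intro L h
    have hm : ∀ r ∈ [x, y, z] ++ l :: t, r ∈ IsLocalRing.maximalIdeal R := by
      intro r hr
      rcases List.mem_append.mp hr with h | h
      · exact ht r h
      · exact hls r h
    have h1 : GoodSeq (l :: ([x, y, z] ++ t)) L := goodSeq_perm L h List.perm_middle hm
    obtain ⟨h2, h3⟩ := h1
    refine ⟨symI_regMod a b c d f g hx hy hz L l h2 ((goodSeq_append _ _ _).mp h3).1, ?_⟩
    rw [sup_assoc]
    exact ih (fun r hr => hls r (List.mem_cons_of_mem _ hr)) _ h3

-- M6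
lemma mem_max_quot (L : Ideal R) [IsLocalRing (R ⧸ L)] (r : R) :
    Ideal.Quotient.mk L r ∈ IsLocalRing.maximalIdeal (R ⧸ L) ↔ r ∈ IsLocalRing.maximalIdeal R := by
  have : IsLocalHom (Ideal.Quotient.mk L) :=
    IsLocalHom.of_surjective _ Ideal.Quotient.mk_surjective
  rw [IsLocalRing.mem_maximalIdeal, IsLocalRing.mem_maximalIdeal, mem_nonunits_iff, mem_nonunits_iff,
    isUnit_map_iff]

lemma span_quot (L : Ideal R) (x y z r : R) :
    Ideal.Quotient.mk L r ∈ Ideal.span {Ideal.Quotient.mk L x, Ideal.Quotient.mk L y,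
      Ideal.Quotient.mk L z} ↔ r ∈ Ideal.span {x, y, z} ⊔ L := by
  have : Ideal.span {Ideal.Quotient.mk L x, Ideal.Quotient.mk L y, Ideal.Quotient.mk L z} =
      (Ideal.span {x, y, z}).map (Ideal.Quotient.mk L) := by
    rw [Ideal.map_span]; simp [Set.image_insert_eq]
  rw [this, Ideal.mem_quotient_iff_mem_sup]

lemma UHyp.HSquot {e : ℕ} {u : Fin e → R} (hu : UHyp u) (ls : List R)
    (hls : ∀ l ∈ ls, l ∈ IsLocalRing.maximalIdeal R) (hlen : ls.length + 3 = e)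
    (hg : GoodSeq ls ⊥) (L : Ideal R) (hL : L = Ideal.ofList ls) [IsLocalRing (R ⧸ L)] :
    HS (R ⧸ L) := by
  intro x y z hr
  obtain ⟨x, rfl⟩ := Ideal.Quotient.mk_surjective x
  obtain ⟨y, rfl⟩ := Ideal.Quotient.mk_surjective y
  obtain ⟨z, rfl⟩ := Ideal.Quotient.mk_surjective z
  have hm := regular_mem hr
  have h1 : GoodSeq (ls ++ [x, y, z]) ⊥ := by
    rw [goodSeq_append]
    refine ⟨hg, ?_⟩
    rw [bot_sup_eq, ← hL, ← goodSeq_quot]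
    exact good_of_regular hr
  have hm2 : ∀ r ∈ ls ++ [x, y, z], r ∈ IsLocalRing.maximalIdeal R := by
    intro r hr
    rcases List.mem_append.mp hr with h | h
    · exact hls r h
    · rw [← mem_max_quot L]
      apply hm
      simp only [List.mem_cons, List.not_mem_nil, or_false] at h ⊢
      rcases h with rfl | rfl | rfl <;> simp
  obtain ⟨f1, f2⟩ := hu.full _ h1 hm2 (by simpa using hlen)
  have hc : Ideal.ofList (ls ++ [x, y, z]) = Ideal.span {x, y, z} ⊔ L := by
    rw [Ideal.ofList_append, ofList3, sup_comm, hL]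
  rw [hc] at f1 f2
  set c := Ideal.span {x, y, z} ⊔ L with hcd
  set c' := Ideal.span {Ideal.Quotient.mk L x, Ideal.Quotient.mk L y, Ideal.Quotient.mk L z} with hc'
  have hmem : ∀ r, Ideal.Quotient.mk L r ∈ c' ↔ r ∈ c := fun r => span_quot L x y z r
  have hsurj : Function.Surjective (algebraMap R (R ⧸ L)) := Ideal.Quotient.mk_surjective
  let ψ : (R ⧸ c) →ₗ[R] ((R ⧸ L) ⧸ c') := Submodule.liftQ c
    ((c'.mkQ.restrictScalars R).comp L.mkQ) (by
      intro r hr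
      change c'.mkQ (L.mkQ r) = 0
      rw [mkQ_eq_zero_iff]
      exact (hmem r).mpr hr)
  have hψ : ∀ r, ψ (c.mkQ r) = c'.mkQ (L.mkQ r) := fun r => rfl
  have hψs : Function.Surjective ψ := by
    intro w
    obtain ⟨w, rfl⟩ := c'.mkQ_surjective w
    obtain ⟨w, rfl⟩ := L.mkQ_surjective w
    exact ⟨c.mkQ w, rfl⟩
  have hψi : Function.Injective ψ := by
    rw [injective_iff_map_eq_zero]
    intro w hw
    obtain ⟨w, rfl⟩ := c.mkQ_surjective w
    rw [hψ, mkQ_eq_zero_iff] at hw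
    rw [mkQ_eq_zero_iff]
    exact (hmem w).mp hw
  constructor
  · rw [← Module.length_eq_of_surjective hsurj]
    rwa [← (LinearEquiv.ofBijective ψ ⟨hψi, hψs⟩).length_eq]
  · rw [← Module.length_eq_of_surjective hsurj]
    refine le_trans ?_ f2
    let θ := (LinearEquiv.ofBijective ψ ⟨hψi, hψs⟩)
    let η : ↥(Wq (IsLocalRing.maximalIdeal (R ⧸ L)) c') →ₗ[R] ↥(Wq (IsLocalRing.maximalIdeal R) c) :=
      (θ.symm.toLinearMap.comp ((Wq (IsLocalRing.maximalIdeal (R ⧸ L)) c').subtype.restrictScalars R)).codRestrict _ (by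
        rintro ⟨w, hw⟩
        obtain ⟨w, rfl⟩ := c'.mkQ_surjective w
        obtain ⟨w, rfl⟩ := L.mkQ_surjective w
        change θ.symm (θ (c.mkQ w)) ∈ _
        rw [θ.symm_apply_apply, mk_mem_Wq]
        rw [mk_mem_Wq] at hw
        intro i hi
        rw [← hmem, map_mul]
        exact hw _ ((mem_max_quot L i).mpr hi))
    apply Module.length_le_of_injective η
    intro p q hpq
    have := congrArg (fun t : Wq (IsLocalRing.maximalIdeal R) c => (t : R ⧸ c)) hpq
    exact Subtype.ext (θ.symm.injective this)

end PartM2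

section PartM3
set_option linter.unusedSectionVars false
open RingTheory.Sequence

lemma exists_span3 {K V : Type*} [Field K] [AddCommGroup V] [Module K V] (W : Submodule K V)
    [FiniteDimensional K W] (h : Module.finrank K W ≤ 3) :
    ∃ v : Fin 3 → V, Submodule.span K (Set.range v) = W := by
  let b := Module.finBasis K W
  refine ⟨fun i => if h : (i : ℕ) < Module.finrank K W then (b ⟨i, h⟩ : V) else 0, ?_⟩
  apply le_antisymm
  · rw [Submodule.span_le]
    rintro _ ⟨i, rfl⟩
    dsimp only
    split_ifs
    · exact (b _).2
    · exact W.zero_mem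
  · intro w hw
    have h1 : (⟨w, hw⟩ : W) ∈ Submodule.span K (Set.range b) := by rw [b.span_eq]; trivial
    have h2 : w ∈ (Submodule.span K (Set.range b)).map W.subtype := ⟨_, h1, rfl⟩
    rw [Submodule.map_span] at h2
    refine Submodule.span_mono ?_ h2
    rintro _ ⟨_, ⟨j, rfl⟩, rfl⟩
    refine ⟨⟨j, lt_of_lt_of_le j.2 h⟩, ?_⟩
    simp

variable {R : Type*} [CommRing R] [IsLocalRing R] [IsNoetherianRing R]

lemma regular_quot (L : Ideal R) [IsLocalRing (R ⧸ L)] (ls : List R) (hL : L = Ideal.ofList ls)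
    (hls : ∀ l ∈ ls, l ∈ IsLocalRing.maximalIdeal R) {x y z : R}
    (ht : ∀ r ∈ [x, y, z], r ∈ IsLocalRing.maximalIdeal R) (h : GoodSeq ([x, y, z] ++ ls) ⊥) :
    GoodSeq ls ⊥ ∧ IsRegular (R ⧸ L) [Ideal.Quotient.mk L x, Ideal.Quotient.mk L y, Ideal.Quotient.mk L z] := by
  have hm : ∀ r ∈ [x, y, z] ++ ls, r ∈ IsLocalRing.maximalIdeal R := by
    intro r hr
    rcases List.mem_append.mp hr with h | h
    · exact ht r h
    · exact hls r h
  have h1 := goodSeq_perm ⊥ h List.perm_append_comm hm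
  rw [goodSeq_append, bot_sup_eq, ← hL] at h1
  refine ⟨h1.1, isRegular_of_good ((goodSeq_quot L [x, y, z]).mpr h1.2) ?_⟩
  intro r hr
  simp only [List.mem_cons, List.not_mem_nil, or_false] at hr
  rcases hr with rfl | rfl | rfl <;> rw [mem_max_quot] <;> apply ht <;> simp

lemma licci_reduce {e : ℕ} {u : Fin e → R} (hu : UHyp u) (A : Ideal R) (hA : Licci A) :
    ∃ T : Finset (List R), (∀ t ∈ T, GoodSeq t ⊥ ∧ (∀ r ∈ t, r ∈ IsLocalRing.maximalIdeal R) ∧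
        t.length = 3) ∧
      ∀ (ls : List R) (L : Ideal R) [IsLocalRing (R ⧸ L)], L = Ideal.ofList ls →
        (∀ l ∈ ls, l ∈ IsLocalRing.maximalIdeal R) →
        ls.length + 3 = e → (∀ t ∈ T, GoodSeq (t ++ ls) ⊥) → GoodSeq ls A →
        Licci (A.map (Ideal.Quotient.mk L)) := by
  classical
  obtain ⟨C, hAC, x, y, z, hr, hC⟩ := hA
  induction hAC using Relation.ReflTransGen.head_induction_on with
  | refl =>
    refine ⟨{[x, y, z]}, ?_, ?_⟩
    · intro t ht
      rw [Finset.mem_singleton] at ht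
      subst ht
      exact ⟨good_of_regular hr, regular_mem hr, rfl⟩
    · intro ls L _ hL hls hlen hT _
      refine ⟨_, Relation.ReflTransGen.refl, Ideal.Quotient.mk L x, Ideal.Quotient.mk L y,
        Ideal.Quotient.mk L z, (regular_quot L ls hL hls (regular_mem hr) (hT _ (by simp))).2, ?_⟩
      rw [hC, Ideal.map_span]; simp [Set.image_insert_eq]
  | @head A B hAB _ ih =>
    obtain ⟨T, hT, ih⟩ := ih
    obtain ⟨p, q, s, hp, hq, hs, hreg, hB⟩ := hAB
    refine ⟨insert [p, q, s] T, ?_, ?_⟩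
    · intro t ht
      rcases Finset.mem_insert.mp ht with rfl | ht
      · exact ⟨good_of_regular hreg, regular_mem hreg, rfl⟩
      · exact hT t ht
    · intro ls L _ hL hls hlen hT' hlsA
      have hg := hT' [p, q, s] (Finset.mem_insert_self _ _)
      have hm : ∀ r ∈ [p, q, s] ++ ls, r ∈ IsLocalRing.maximalIdeal R := by
        intro r hr
        rcases List.mem_append.mp hr with h | h
        · exact regular_mem hreg r h
        · exact hls r h
      obtain ⟨f1, f2⟩ := hu.full _ hg hm (by simp; omega)
      have hcl := ((goodSeq_append _ _ _).mp hg).2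
      rw [bot_sup_eq, ofList3] at hcl
      rw [Ideal.ofList_append, ofList3] at f1 f2
      have hcA : Ideal.span {p, q, s} ≤ A := by
        rw [Ideal.span_le]
        rintro w (rfl | rfl | rfl) <;> assumption
      have hE := (gorenstein_main _ (A ⊔ Ideal.ofList ls) (sup_le_sup_right hcA _) f2 f1).1
      obtain ⟨-, r2, r3⟩ := reduction_list ls hls _ A hcA hcl hlsA hE
      rw [← hB] at r2 r3
      obtain ⟨C', hC', hrest⟩ := ih ls L hL hls hlen
        (fun t ht => hT' t (Finset.mem_insert_of_mem ht)) r3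
      refine ⟨C', Relation.ReflTransGen.head ?_ hC', hrest⟩
      refine ⟨Ideal.Quotient.mk L p, Ideal.Quotient.mk L q, Ideal.Quotient.mk L s,
        Ideal.mem_map_of_mem _ hp, Ideal.mem_map_of_mem _ hq, Ideal.mem_map_of_mem _ hs,
        (regular_quot L ls hL hls (regular_mem hreg) hg).2, ?_⟩
      ext w
      obtain ⟨w, rfl⟩ := Ideal.Quotient.mk_surjective w
      rw [Ideal.mem_quotient_iff_mem_sup, hL, ← r2, ← hL, mem_colon_iff, mem_colon_iff]
      constructor
      · intro h i hi
        obtain ⟨i, rfl⟩ := Ideal.Quotient.mk_surjective i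
        rw [Ideal.mem_quotient_iff_mem_sup] at hi
        rw [← map_mul, span_quot]
        exact h i hi
      · intro h i hi
        rw [← span_quot, map_mul]
        exact h _ ((Ideal.mem_quotient_iff_mem_sup).mpr hi)

theorem theoremM (K : Type*) [Field K] [Infinite K] [Algebra K R] {e : ℕ} (he : 3 ≤ e)
    {u : Fin e → R} (hu : UHyp u) (a b c d f g : R)
    (hl : ∀ w ∈ ({a, b, c, d, f, g} : Set R), w ∈ LinearMap.range (linForm K u))
    {x y z : R} (hx : x ∈ symI a b c d f g)
    (hy : y ∈ symI a b c d f g) (hz : z ∈ symI a b c d f g)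
    (hr : IsRegular R [x, y, z]) : ¬ Licci (symI a b c d f g) := by
  classical
  intro hlic
  obtain ⟨T, hT, hT2⟩ := licci_reduce hu _ hlic
  obtain ⟨ls, hlen, hls, hgood, C, hC, hCL⟩ := hu.chooseList (K := K) (insert [x, y, z] T) (by
    intro t ht
    rcases Finset.mem_insert.mp ht with rfl | ht
    · exact ⟨good_of_regular hr, regular_mem hr, rfl⟩
    · exact hT t ht) (e - 3) (by omega)
  obtain ⟨L, hL⟩ : ∃ L, L = Ideal.ofList ls := ⟨_, rfl⟩
  have hLm : L ≤ IsLocalRing.maximalIdeal R := by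
    rw [hL, Ideal.ofList, Ideal.span_le]; exact hls
  have : Nontrivial (R ⧸ L) := Ideal.Quotient.nontrivial_iff.mpr (by
    intro h; rw [h] at hLm; exact (IsLocalRing.maximalIdeal.isMaximal R).ne_top (top_le_iff.mp hLm))
  have : IsLocalRing (R ⧸ L) := IsLocalRing.of_surjective' (Ideal.Quotient.mk L)
    Ideal.Quotient.mk_surjective
  have hg0 := hgood _ (Finset.mem_insert_self _ _)
  obtain ⟨hgls, hregS⟩ := regular_quot L ls hL hls (regular_mem hr) hg0
  have hlen' : ls.length + 3 = e := by omega
  have hgsym := symI_goodSeq a b c d f g hx hy hz (regular_mem hr) ls hls ⊥ hg0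
  rw [sup_bot_eq] at hgsym
  have hlicS := hT2 ls L hL hls hlen' (fun t ht => hgood t (Finset.mem_insert_of_mem ht)) hgsym
  have hHS := hu.HSquot ls hls hlen' hgls L hL
  let φ := Ideal.Quotient.mk L
  rw [map_symI] at hlicS
  let G : (Fin e → K) →ₗ[K] (R ⧸ L) := (Ideal.Quotient.mkₐ K L).toLinearMap.comp (linForm K u)
  have hG : ∀ α, G α = φ (linForm K u α) := fun α => rfl
  have hCG : C ≤ LinearMap.ker G := by
    intro α hα
    rw [LinearMap.mem_ker, hG]
    exact Ideal.Quotient.eq_zero_iff_mem.mpr (hL ▸ hCL α hα)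
  have hfr : Module.finrank K (LinearMap.range G) ≤ 3 := by
    have h1 := LinearMap.finrank_range_add_finrank_ker G
    have h2 := Submodule.finrank_mono hCG
    rw [Module.finrank_fin_fun] at h1
    omega
  obtain ⟨v, hv⟩ := exists_span3 (LinearMap.range G) hfr
  have hvm : IsLocalRing.maximalIdeal (R ⧸ L) = Ideal.span (Set.range v) := by
    apply le_antisymm
    · intro w hw
      obtain ⟨w, rfl⟩ := Ideal.Quotient.mk_surjective w
      rw [mem_max_quot, hu.gen] at hw
      have h1 := Ideal.mem_map_of_mem φ hw
      rw [Ideal.map_span] at h1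
      refine (Ideal.span_le.mpr ?_) h1
      rintro _ ⟨_, ⟨i, rfl⟩, rfl⟩
      have h2 : φ (u i) ∈ Submodule.span K (Set.range v) := by
        rw [hv]; exact ⟨Pi.single i 1, by rw [hG, linForm_single]⟩
      exact Submodule.span_le_restrictScalars K (R ⧸ L) (Set.range v) h2
    · rw [Ideal.span_le]
      rintro _ ⟨i, rfl⟩
      have h2 : v i ∈ LinearMap.range G := by rw [← hv]; exact Submodule.subset_span ⟨i, rfl⟩
      obtain ⟨α, hα⟩ := h2
      rw [← hα, hG]
      exact (mem_max_quot L _).mpr (hu.linForm_mem α)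
  have hspan : ∀ w ∈ ({φ a, φ b, φ c, φ d, φ f, φ g} : Set (R ⧸ L)),
      w ∈ Submodule.span K (Set.range v) := by
    have key : ∀ w ∈ ({a, b, c, d, f, g} : Set R), φ w ∈ Submodule.span K (Set.range v) := by
      intro w hw
      obtain ⟨α, rfl⟩ := hl w hw
      rw [hv]; exact ⟨α, rfl⟩
    rintro w (rfl | rfl | rfl | rfl | rfl | rfl) <;> apply key <;> simp
  have hmax : ∀ w ∈ ({φ a, φ b, φ c, φ d, φ f, φ g} : Set (R ⧸ L)),
      w ∈ IsLocalRing.maximalIdeal (R ⧸ L) := by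
    intro w hw
    rw [hvm]
    exact Submodule.span_le_restrictScalars K (R ⧸ L) (Set.range v) (hspan w hw)
  have key : ∀ w, w ∈ symI a b c d f g → φ w ∈ symI (φ a) (φ b) (φ c) (φ d) (φ f) (φ g) := by
    intro w hw
    rw [← map_symI]
    exact Ideal.mem_map_of_mem _ hw
  have hsq := symI_eq_sq K v hvm _ _ _ _ _ _ hspan (key x hx) (key y hy) (key z hz)
    (good_of_regular hregS)
  obtain ⟨F, hF⟩ := exists_surj6 _ _ _ _ _ _ hmax (key x hx) (key y hy) (key z hz)
    (good_of_regular hregS)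
  have hPP := PP_of_licci hHS _ hlicS
  have kx := key x hx
  have ky := key y hy
  have kz := key z hz
  change PP (symI (φ a) (φ b) (φ c) (φ d) (φ f) (φ g)) at hPP
  generalize symI (φ a) (φ b) (φ c) (φ d) (φ f) (φ g) = J at *
  subst hsq
  exact final_contra hHS _ rfl F hF kx ky kz hregS hPP

end PartM3

section PartH
set_option linter.unusedSectionVars false
open RingTheory.Sequence

lemma map_colon_flat {A B : Type*} [CommRing A] [CommRing B] [Algebra A B] [Module.Flat A B]
    [IsNoetherianRing A] (I : Ideal A) (x : Fin 3 → A) (c : Ideal A)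
    (hc : c = Ideal.span (Set.range x)) :
    (Submodule.colon c (I : Set A)).map (algebraMap A B) =
      Submodule.colon (c.map (algebraMap A B)) ((I.map (algebraMap A B) : Ideal B) : Set B) := by
  apply le_antisymm
  · rw [Ideal.map_le_iff_le_comap]
    intro r hr
    rw [mem_colon_iff] at hr
    rw [Ideal.mem_comap, mem_colon_iff]
    intro i hi
    have : I.map (algebraMap A B) ≤ (Submodule.colon (c.map (algebraMap A B)) {algebraMap A B r}) := by
      rw [Ideal.map_le_iff_le_comap]
      intro j hj
      rw [Ideal.mem_comap, Submodule.mem_colon_singleton, smul_eq_mul, ← map_mul, mul_comm]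
      exact Ideal.mem_map_of_mem _ (hr j hj)
    have := this hi
    rwa [Submodule.mem_colon_singleton, smul_eq_mul, mul_comm] at this
  · intro b hb
    rw [mem_colon_iff] at hb
    obtain ⟨s, hs⟩ := (isNoetherianRing_iff_ideal_fg A).mp inferInstance I
    have hb' : ∀ j : s, ∃ β : Fin 3 → B, b * algebraMap A B j = ∑ k, β k * algebraMap A B (x k) := by
      intro j
      have h1 := hb (algebraMap A B j) (Ideal.mem_map_of_mem _ (by rw [← hs]; exact Ideal.subset_span j.2))
      rw [hc, Ideal.map_span, ← Set.range_comp] at h1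
      obtain ⟨β, hβ⟩ := (Ideal.mem_span_range_iff_exists_fun).mp h1
      exact ⟨β, hβ.symm⟩
    choose β hβ using hb'
    classical
    let f : (s → A) →ₗ[A] (A × ((s × Fin 3) → A)) :=
      LinearMap.prod (∑ j : s, (j : A) • LinearMap.proj j)
        (LinearMap.pi fun jk => (- x jk.2) • LinearMap.proj jk.1)
    let X : (A × ((s × Fin 3) → A)) →ₗ[A] B :=
      LinearMap.coprod (LinearMap.toSpanSingleton A B b) (Fintype.linearCombination A (fun jk : s × Fin 3 => β jk.1 jk.2))
    have hf2 : ∀ j : s, f (Pi.single j 1) = (j : A) • (1, 0) -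
        ∑ k, x k • ((0 : A), (Pi.single (j, k) 1 : s × Fin 3 → A)) := by
      intro j
      ext jk
      · simp [f, Prod.fst_sum, Pi.single_apply]
      · obtain ⟨j', k⟩ := jk
        simp [f, Prod.snd_sum, Pi.single_apply, Finset.sum_apply]
        by_cases hj' : j' = j <;> simp [hj']
    have hX2 : ∀ jk : s × Fin 3, X (0, Pi.single jk 1) = β jk.1 jk.2 := by
      intro jk
      simp [X, Fintype.linearCombination_apply, Pi.single_apply]
    have hX1 : X (1, 0) = b := by simp [X]
    have hXf : X ∘ₗ f = 0 := by
      apply LinearMap.pi_ext'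
      intro j
      ext
      simp only [LinearMap.comp_apply, LinearMap.single_apply, LinearMap.zero_apply]
      rw [hf2]
      simp only [map_sub, map_smul, map_sum, hX1, hX2]
      rw [Algebra.smul_def, mul_comm, hβ, sub_eq_zero]
      refine Finset.sum_congr rfl fun k _ => ?_
      rw [Algebra.smul_def, mul_comm]
    obtain ⟨n, a, y, hxy, haf⟩ := Module.Flat.exists_factorization_of_comp_eq_zero_of_free hXf
    have hbX : b = X (1, 0) := hX1.symm
    rw [hbX, hxy, LinearMap.comp_apply]
    have hsum : a (1, 0) = ∑ l, (a (1, 0) l) • Finsupp.single l (1 : A) := by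
      ext l
      simp [Finsupp.finsetSum_apply, Finsupp.single_apply]
    rw [hsum, map_sum]
    refine Submodule.sum_mem _ fun l _ => ?_
    rw [map_smul, Algebra.smul_def]
    refine Ideal.mul_mem_right _ _ (Ideal.mem_map_of_mem _ ?_)
    rw [mem_colon_iff]
    intro i hi
    have hle : I ≤ Submodule.colon c {a (1, 0) l} := by
      rw [← hs]
      refine Ideal.span_le.mpr ?_
      intro j hj
      change j ∈ Submodule.colon c {a (1, 0) l}
      rw [Submodule.mem_colon_singleton]
      have h1 := congrArg (fun w => w (Pi.single ⟨j, hj⟩ 1) l) haf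
      simp only [LinearMap.comp_apply] at h1
      rw [hf2] at h1
      simp only [map_sub, map_smul, map_sum, Finsupp.sub_apply, Finsupp.smul_apply, smul_eq_mul,
        LinearMap.zero_apply, Finsupp.zero_apply, Finsupp.finsetSum_apply] at h1
      rw [sub_eq_zero] at h1
      rw [smul_eq_mul, h1]
      refine Submodule.sum_mem _ fun k _ => ?_
      exact Ideal.mul_mem_right _ _ (by rw [hc]; exact Ideal.subset_span ⟨k, rfl⟩)
    have := hle hi
    rwa [Submodule.mem_colon_singleton, smul_eq_mul, mul_comm] at this

lemma map_span3 {A B : Type*} [CommRing A] [CommRing B] (φ : A →+* B) (x y z : A) :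
    (Ideal.span {x, y, z}).map φ = Ideal.span {φ x, φ y, φ z} := by
  rw [Ideal.map_span]; simp [Set.image_insert_eq]

lemma licci_map {A B : Type*} [CommRing A] [CommRing B] [Algebra A B] [Module.FaithfullyFlat A B]
    [IsNoetherianRing A] (I : Ideal A) (h : Licci I) : Licci (I.map (algebraMap A B)) := by
  obtain ⟨C, hIC, x, y, z, hr, hC⟩ := h
  refine ⟨C.map (algebraMap A B), ?_, algebraMap A B x, algebraMap A B y, algebraMap A B z,
    hr.of_faithfullyFlat, by rw [hC, map_span3]⟩
  refine Relation.ReflTransGen.lift (fun J : Ideal A => J.map (algebraMap A B)) ?_ _ _ hIC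
  rintro P Q ⟨p, q, s, hp, hq, hs, hreg, hQ⟩
  refine ⟨algebraMap A B p, algebraMap A B q, algebraMap A B s, Ideal.mem_map_of_mem _ hp,
    Ideal.mem_map_of_mem _ hq, Ideal.mem_map_of_mem _ hs, hreg.of_faithfullyFlat, ?_⟩
  rw [hQ]
  dsimp only
  rw [map_colon_flat P (B := B) ![p, q, s] _ (by
    congr 1; simp only [Matrix.range_cons, Matrix.range_empty, Set.union_empty]; rfl), map_span3]

lemma mem_spanX {k : Type*} [Field k] {e : ℕ} (r : MvPolynomial (Fin e) k) :
    r ∈ Ideal.span (Set.range (MvPolynomial.X : Fin e → MvPolynomial (Fin e) k)) ↔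
      MvPolynomial.constantCoeff r = 0 := by
  rw [← Set.image_univ, MvPolynomial.mem_ideal_span_X_image, MvPolynomial.constantCoeff_eq]
  constructor
  · intro h
    by_contra h0
    obtain ⟨i, -, hi⟩ := h 0 (MvPolynomial.mem_support_iff.mpr h0)
    exact hi rfl
  · intro h m hm
    have : m ≠ 0 := by
      rintro rfl
      exact MvPolynomial.mem_support_iff.mp hm h
    obtain ⟨i, hi⟩ := Finsupp.ne_iff.mp this
    exact ⟨i, trivial, hi⟩

lemma spanX_eq {k : Type*} [Field k] {e : ℕ} :
    Ideal.span (Set.range (MvPolynomial.X : Fin e → MvPolynomial (Fin e) k)) =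
      RingHom.ker (MvPolynomial.constantCoeff : MvPolynomial (Fin e) k →+* k) := by
  ext r; rw [mem_spanX, RingHom.mem_ker]

lemma goodSeq_X {k : Type*} [Field k] {e : ℕ} (l : List (Fin e)) : ∀ s : Set (Fin e), l.Nodup →
    (∀ i ∈ l, i ∉ s) → GoodSeq (l.map (MvPolynomial.X : Fin e → MvPolynomial (Fin e) k))
      (Ideal.span (MvPolynomial.X '' s)) := by
  induction l with
  | nil => intros; trivial
  | cons i t ih =>
    intro s hn hs
    rw [List.nodup_cons] at hn
    rw [List.map_cons]
    refine ⟨?_, ?_⟩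
    · intro r hr
      rw [MvPolynomial.mem_ideal_span_X_image] at hr ⊢
      intro m hm
      have : Finsupp.single i 1 + m ∈ (MvPolynomial.X i * r).support := by
        rw [MvPolynomial.mem_support_iff, MvPolynomial.coeff_X_mul]
        exact MvPolynomial.mem_support_iff.mp hm
      obtain ⟨j, hj, hj2⟩ := hr _ this
      refine ⟨j, hj, ?_⟩
      have hij : i ≠ j := by rintro rfl; exact hs i (by simp) hj
      simpa [Finsupp.single_apply, hij] using hj2
    · have := ih (insert i s) hn.2 (by
        intro j hj hj2
        rcases hj2 with rfl | h
        · exact hn.1 hj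
        · exact hs j (by simp [hj]) h)
      rwa [Set.image_insert_eq, Ideal.span_insert, sup_comm] at this

end PartH

section PartH2
set_option linter.unusedSectionVars false
open RingTheory.Sequence

attribute [local instance] MvPolynomial.algebraMvPolynomial

lemma flat_mvPoly (k K : Type*) [Field k] [Field K] [Algebra k K] (e : ℕ) :
    Module.Flat (MvPolynomial (Fin e) k) (MvPolynomial (Fin e) K) :=
  Module.Flat.isBaseChange k (MvPolynomial (Fin e) k) K (MvPolynomial (Fin e) K)
    (Algebra.IsPushout.out (R := k) (S := MvPolynomial (Fin e) k) (R' := K)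
      (S' := MvPolynomial (Fin e) K))

lemma linear_span {K : Type*} [Field K] {e : ℕ} (p : MvPolynomial (Fin e) K)
    (hp : p.IsHomogeneous 1) : p ∈ LinearMap.range (linForm K (MvPolynomial.X : Fin e → MvPolynomial (Fin e) K)) := by
  have h : p ∈ MvPolynomial.homogeneousSubmodule (Fin e) K 1 := hp
  rw [MvPolynomial.homogeneousSubmodule_one_eq_span_X] at h
  rw [linForm, Fintype.range_linearCombination]
  exact h

lemma linForm_alg {K P R : Type*} [Field K] [CommRing P] [CommRing R] [Algebra K P] [Algebra P R]
    [Algebra K R] [IsScalarTower K P R] {e : ℕ} (u : Fin e → P) (p : P)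
    (hp : p ∈ LinearMap.range (linForm K u)) :
    algebraMap P R p ∈ LinearMap.range (linForm K (fun i => algebraMap P R (u i))) := by
  obtain ⟨α, rfl⟩ := hp
  refine ⟨α, ?_⟩
  change ∑ i, α i • algebraMap P R (u i) = algebraMap P R (∑ i, α i • u i)
  rw [map_sum]
  refine Finset.sum_congr rfl fun i _ => ?_
  rw [Algebra.smul_def, Algebra.smul_def, map_mul, ← IsScalarTower.algebraMap_apply]

lemma uhyp_X {K : Type*} [Field K] {e : ℕ} (M : Ideal (MvPolynomial (Fin e) K)) [M.IsPrime]
    (hM : M = Ideal.span (Set.range MvPolynomial.X)) :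
    UHyp (fun i => algebraMap (MvPolynomial (Fin e) K) (Localization.AtPrime M) (MvPolynomial.X i)) := by
  constructor
  · rw [← Localization.AtPrime.map_eq_maximalIdeal]
    have h : ∀ J : Ideal (MvPolynomial (Fin e) K), J = Ideal.span (Set.range MvPolynomial.X) →
        J.map (algebraMap (MvPolynomial (Fin e) K) (Localization.AtPrime M)) =
        Ideal.span (Set.range fun i => algebraMap (MvPolynomial (Fin e) K) (Localization.AtPrime M) (MvPolynomial.X i)) := by
      rintro J rfl
      rw [Ideal.map_span, ← Set.range_comp]
      rfl
    exact h M hM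
  · have h := goodSeq_X (k := K) (List.finRange e) ∅ (List.nodup_finRange e) (by simp)
    rw [Set.image_empty, Ideal.span_empty, goodSeq_bot] at h
    have h2 := h.of_isLocalization (Localization.AtPrime M) M.primeCompl
    rw [← goodSeq_bot] at h2
    rw [List.ofFn_eq_map]
    rwa [List.map_map] at h2

end PartH2

/-- **Proposition 2.4 (second case).** Let `k` be a field, `e ≥ 3`, `𝓠 = k[X₁, …, X_e]`,
and `Q` the localization of `𝓠` at the maximal ideal `𝔪 = (X₁, …, X_e)`.  Let `Φ` be a
`3 × 3` symmetric matrix of linear forms in `𝓠` and `𝓘` the ideal of `2 × 2` minors of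
`Φ`, and assume `𝓘` contains a `𝓠`-regular sequence of length `3`.  Then the extension
`I` of `𝓘` to `Q` is a grade `3` perfect ideal of resolution format `(1, 6, 8, 3)` and
`I` is not licci.  (The hypothesis `𝔪.IsPrime` is a consequence of `h𝔪`.) -/
theorem stmt_10 (k : Type*) [Field k] (e : ℕ) (he : 3 ≤ e)
    (𝔪 : Ideal (MvPolynomial (Fin e) k))
    (h𝔪 : 𝔪 = Ideal.span (Set.range MvPolynomial.X)) [𝔪.IsPrime]
    (Φ : Matrix (Fin 3) (Fin 3) (MvPolynomial (Fin e) k))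
    (hsymm : Φ.IsSymm)
    (hΦ : ∀ i j, (Φ i j).IsHomogeneous 1)
    (𝓘 : Ideal (MvPolynomial (Fin e) k)) (h𝓘 : 𝓘 = minors2 Φ)
    (hreg : ∃ x y z : MvPolynomial (Fin e) k, x ∈ 𝓘 ∧ y ∈ 𝓘 ∧ z ∈ 𝓘 ∧
      RingTheory.Sequence.IsRegular (MvPolynomial (Fin e) k) [x, y, z]) :
    IsGrade3PerfectOfFormat
        (𝓘.map (algebraMap (MvPolynomial (Fin e) k) (Localization.AtPrime 𝔪))) 6 3 ∧
      ¬ Licci (𝓘.map (algebraMap (MvPolynomial (Fin e) k) (Localization.AtPrime 𝔪))) := by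
  classical
  obtain ⟨x, y, z, hx, hy, hz, hr⟩ := hreg
  rw [h𝓘, minors2_eq_symI Φ hsymm] at hx hy hz ⊢
  have hlin : ∀ w ∈ ({Φ 0 0, Φ 0 1, Φ 0 2, Φ 1 1, Φ 1 2, Φ 2 2} :
      Set (MvPolynomial (Fin e) k)), w.IsHomogeneous 1 := by
    rintro w (rfl | rfl | rfl | rfl | rfl | rfl) <;> apply hΦ
  generalize Φ 0 0 = a, Φ 0 1 = b, Φ 0 2 = c, Φ 1 1 = d, Φ 1 2 = f, Φ 2 2 = g at *
  have hlm : ∀ w ∈ ({a, b, c, d, f, g} : Set (MvPolynomial (Fin e) k)), w ∈ 𝔪 := by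
    intro w hw
    rw [h𝔪, mem_spanX]
    have := (hlin w hw).coeff_eq_zero (d := 0) (by simp)
    rwa [MvPolynomial.constantCoeff_eq]
  set Q := Localization.AtPrime 𝔪 with hQ
  let ι := algebraMap (MvPolynomial (Fin e) k) Q
  have hIm : symI a b c d f g ≤ 𝔪 := by
    have ha : a ∈ 𝔪 := hlm a (by simp)
    have hb : b ∈ 𝔪 := hlm b (by simp)
    have hc : c ∈ 𝔪 := hlm c (by simp)
    have hd : d ∈ 𝔪 := hlm d (by simp)
    have hf : f ∈ 𝔪 := hlm f (by simp)
    have hg : g ∈ 𝔪 := hlm g (by simp)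
    have e0 : Ideal.Quotient.mk 𝔪 a = 0 := Ideal.Quotient.eq_zero_iff_mem.mpr ha
    have e1 : Ideal.Quotient.mk 𝔪 b = 0 := Ideal.Quotient.eq_zero_iff_mem.mpr hb
    have e2 : Ideal.Quotient.mk 𝔪 c = 0 := Ideal.Quotient.eq_zero_iff_mem.mpr hc
    have e3 : Ideal.Quotient.mk 𝔪 d = 0 := Ideal.Quotient.eq_zero_iff_mem.mpr hd
    have e4 : Ideal.Quotient.mk 𝔪 f = 0 := Ideal.Quotient.eq_zero_iff_mem.mpr hf
    have e5 : Ideal.Quotient.mk 𝔪 g = 0 := Ideal.Quotient.eq_zero_iff_mem.mpr hg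
    rw [← range_symD1]
    rintro _ ⟨s, rfl⟩
    rw [← Ideal.Quotient.eq_zero_iff_mem, symD1_map, e0, e1, e2, e3, e4, e5]
    simp [symD1_apply]
  have hrQ : RingTheory.Sequence.IsRegular Q [ι x, ι y, ι z] :=
    hr.toIsWeaklyRegular.isRegular_of_isLocalization_of_mem Q 𝔪 (by
      intro r hr
      simp only [List.mem_cons, List.not_mem_nil, or_false] at hr
      rcases hr with rfl | rfl | rfl <;> apply hIm <;> assumption)
  have hlQ : ∀ w ∈ ({ι a, ι b, ι c, ι d, ι f, ι g} : Set Q), w ∈ IsLocalRing.maximalIdeal Q := by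
    have key : ∀ w ∈ ({a, b, c, d, f, g} : Set (MvPolynomial (Fin e) k)),
        ι w ∈ IsLocalRing.maximalIdeal Q := by
      intro w hw
      rw [← Localization.AtPrime.map_eq_maximalIdeal]
      exact Ideal.mem_map_of_mem _ (hlm w hw)
    rintro w (rfl | rfl | rfl | rfl | rfl | rfl) <;> apply key <;> simp
  have kQ : ∀ w ∈ symI a b c d f g, ι w ∈ symI (ι a) (ι b) (ι c) (ι d) (ι f) (ι g) := by
    intro w hw
    rw [← map_symI]
    exact Ideal.mem_map_of_mem _ hw
  rw [map_symI]
  refine ⟨symI_format (ι a) (ι b) (ι c) (ι d) (ι f) (ι g) hlQ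
    ⟨_, _, _, kQ x hx, kQ y hy, kQ z hz, hrQ⟩, ?_⟩
  intro hlic
  let K := AlgebraicClosure k
  letI algP : Algebra (MvPolynomial (Fin e) k) (MvPolynomial (Fin e) K) :=
    MvPolynomial.algebraMvPolynomial
  let M : Ideal (MvPolynomial (Fin e) K) := Ideal.span (Set.range MvPolynomial.X)
  haveI hMp : M.IsPrime := by
    change (Ideal.span (Set.range MvPolynomial.X)).IsPrime
    rw [spanX_eq]
    exact RingHom.ker_isPrime _
  have hcomap : 𝔪 = M.comap (algebraMap (MvPolynomial (Fin e) k) (MvPolynomial (Fin e) K)) := by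
    ext r
    rw [h𝔪, Ideal.mem_comap, mem_spanX, mem_spanX, MvPolynomial.algebraMap_def,
      MvPolynomial.constantCoeff_map]
    simp
  let R := Localization.AtPrime M
  let ψ : Q →+* R := Localization.localRingHom 𝔪 M
    (algebraMap (MvPolynomial (Fin e) k) (MvPolynomial (Fin e) K)) hcomap
  letI algQ : Algebra Q R := ψ.toAlgebra
  haveI hlocal : IsLocalHom (algebraMap Q R) := Localization.isLocalHom_localRingHom 𝔪 M _ hcomap
  have hflat0 : (algebraMap (MvPolynomial (Fin e) k) (MvPolynomial (Fin e) K)).Flat :=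
    RingHom.flat_algebraMap_iff.mpr (flat_mvPoly k K e)
  haveI hflat : Module.Flat Q R := hflat0.localRingHom M 𝔪 hcomap
  haveI : Module.FaithfullyFlat Q R := Module.FaithfullyFlat.of_flat_of_isLocalHom
  haveI : IsNoetherianRing Q := IsLocalization.isNoetherianRing 𝔪.primeCompl Q inferInstance
  haveI : IsNoetherianRing R := IsLocalization.isNoetherianRing M.primeCompl R inferInstance
  have hlicR := licci_map (B := R) _ hlic
  rw [map_symI] at hlicR
  let κ := algebraMap Q R
  have hκ : ∀ w, κ (ι w) = algebraMap (MvPolynomial (Fin e) K) R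
      (MvPolynomial.map (algebraMap k K) w) := fun w => Localization.localRingHom_to_map 𝔪 M _ hcomap w
  have hrR : RingTheory.Sequence.IsRegular R [κ (ι x), κ (ι y), κ (ι z)] := hrQ.of_faithfullyFlat
  have kR : ∀ w ∈ symI a b c d f g, κ (ι w) ∈
      symI (κ (ι a)) (κ (ι b)) (κ (ι c)) (κ (ι d)) (κ (ι f)) (κ (ι g)) := by
    intro w hw
    rw [← map_symI]
    exact Ideal.mem_map_of_mem _ (kQ w hw)
  haveI : Infinite K := IsAlgClosed.instInfinite
  refine theoremM K he (uhyp_X M rfl) _ _ _ _ _ _ ?_ (kR x hx) (kR y hy) (kR z hz) hrR hlicR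
  have key : ∀ w ∈ ({a, b, c, d, f, g} : Set (MvPolynomial (Fin e) k)), κ (ι w) ∈
      LinearMap.range (linForm K (fun i => algebraMap (MvPolynomial (Fin e) K) R (MvPolynomial.X i))) := by
    intro w hw
    rw [hκ]
    exact linForm_alg _ _ (linear_span _ ((hlin w hw).map _))
  rintro w (rfl | rfl | rfl | rfl | rfl | rfl) <;> apply key <;> simp
end

section
/- Let k be a field and 𝓠 = k[X, Y, Z] the polynomial ring in three variables, and let 𝓘 = (X², Y², XYZ, XZ², YZ², Z³). Then the colon ideal (X³ − YZ², Y³ − XZ², Z³) : 𝓘 equals the ideal (X³ − YZ², Y³ − XZ², Z³, X²Y², X²YZ, XY²Z, XYZ²). -/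
open MvPolynomial

section helpers
variable {k : Type*} [Field k]

lemma mon_eq (e : Fin 3 →₀ ℕ) : (monomial e (1:k)) = X 0 ^ e 0 * X 1 ^ e 1 * X 2 ^ e 2 := by
  rw [monomial_eq, Finsupp.prod_fintype _ _ (by simp), Fin.prod_univ_three]; simp

/-- exponent vector -/
noncomputable def ev (a b c : ℕ) : Fin 3 →₀ ℕ := Finsupp.equivFunOnFinite.symm ![a, b, c]

@[simp] lemma ev0 (a b c : ℕ) : ev a b c 0 = a := rfl
@[simp] lemma ev1 (a b c : ℕ) : ev a b c 1 = b := rfl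
@[simp] lemma ev2 (a b c : ℕ) : ev a b c 2 = c := rfl

lemma ev_le (e : Fin 3 →₀ ℕ) (a b c : ℕ) :
    e ≤ ev a b c ↔ e 0 ≤ a ∧ e 1 ≤ b ∧ e 2 ≤ c := by
  rw [Finsupp.le_def, Fin.forall_fin_succ, Fin.forall_fin_succ, Fin.forall_fin_succ]; simp

lemma ev_eq (e : Fin 3 →₀ ℕ) (a b c : ℕ) :
    e = ev a b c ↔ e 0 = a ∧ e 1 = b ∧ e 2 = c := by
  rw [Finsupp.ext_iff, Fin.forall_fin_succ, Fin.forall_fin_succ, Fin.forall_fin_succ]; simp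

/-- the socle functional -/
noncomputable def phi (f : MvPolynomial (Fin 3) k) : k :=
  coeff (ev 2 2 2) f + coeff (ev 5 1 0) f + coeff (ev 1 5 0) f

lemma phi_add (f g : MvPolynomial (Fin 3) k) : phi (f + g) = phi f + phi g := by
  simp [phi]; ring

lemma phi_mul (f : MvPolynomial (Fin 3) k) (a b c : ℕ) : phi (f * (X 0 ^ a * X 1 ^ b * X 2 ^ c)) =
    (if a ≤ 2 ∧ b ≤ 2 ∧ c ≤ 2 then coeff (ev (2-a) (2-b) (2-c)) f else 0)
    + (if a ≤ 5 ∧ b ≤ 1 ∧ c ≤ 0 then coeff (ev (5-a) (1-b) (0-c)) f else 0)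
    + (if a ≤ 1 ∧ b ≤ 5 ∧ c ≤ 0 then coeff (ev (1-a) (5-b) (0-c)) f else 0) := by
  have h := mon_eq (k := k) (ev a b c)
  simp only [ev0, ev1, ev2] at h
  have s (p q r : ℕ) : ev p q r - ev a b c = ev (p-a) (q-b) (r-c) := by
    rw [ev_eq]; simp
  rw [← h, phi, coeff_mul_monomial', coeff_mul_monomial', coeff_mul_monomial']
  simp only [ev_le, ev0, ev1, ev2, s, mul_one]

lemma phi_J (f : MvPolynomial (Fin 3) k)
    (hf : f ∈ Ideal.span {(X 0 : MvPolynomial (Fin 3) k) ^ 3 - X 1 * X 2 ^ 2,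
          X 1 ^ 3 - X 0 * X 2 ^ 2, X 2 ^ 3}) : phi f = 0 := by
  simp only [Ideal.mem_span_insert, Ideal.mem_span_singleton'] at hf
  obtain ⟨a, _, ⟨b, _, ⟨c, rfl⟩, rfl⟩, rfl⟩ := hf
  have e : a * (X 0 ^ 3 - X 1 * X 2 ^ 2) + (b * (X 1 ^ 3 - X 0 * X 2 ^ 2) + c * X 2 ^ 3)
    = a * (X 0 ^ 3 * X 1 ^ 0 * X 2 ^ 0) + (-a) * (X 0 ^ 0 * X 1 ^ 1 * X 2 ^ 2)
     + b * (X 0 ^ 0 * X 1 ^ 3 * X 2 ^ 0) + (-b) * (X 0 ^ 1 * X 1 ^ 0 * X 2 ^ 2)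
     + c * (X 0 ^ 0 * X 1 ^ 0 * X 2 ^ 3) := by ring
  rw [e]
  simp only [phi_add, phi_mul]
  simp

/-- normal monomials -/
def E : Set (Fin 3 →₀ ℕ) := {e | e 0 ≤ 2 ∧ e 1 ≤ 2 ∧ e 2 ≤ 2 ∧ ¬ (2 ≤ e 0 ∧ 2 ≤ e 1) ∧
  ¬ (2 ≤ e 0 ∧ 1 ≤ e 1 ∧ 1 ≤ e 2) ∧ ¬ (1 ≤ e 0 ∧ 2 ≤ e 1 ∧ 1 ≤ e 2) ∧
  ¬ (1 ≤ e 0 ∧ 1 ≤ e 1 ∧ 2 ≤ e 2)}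

lemma mon_red (K : Ideal (MvPolynomial (Fin 3) k))
    (h1 : (X 0 : MvPolynomial (Fin 3) k) ^ 3 - X 1 * X 2 ^ 2 ∈ K)
    (h2 : (X 1 : MvPolynomial (Fin 3) k) ^ 3 - X 0 * X 2 ^ 2 ∈ K)
    (h3 : (X 2 : MvPolynomial (Fin 3) k) ^ 3 ∈ K)
    (h4 : (X 0 : MvPolynomial (Fin 3) k) ^ 2 * X 1 ^ 2 ∈ K)
    (h5 : (X 0 : MvPolynomial (Fin 3) k) ^ 2 * X 1 * X 2 ∈ K)
    (h6 : (X 0 : MvPolynomial (Fin 3) k) * X 1 ^ 2 * X 2 ∈ K)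
    (h7 : (X 0 : MvPolynomial (Fin 3) k) * X 1 * X 2 ^ 2 ∈ K)
    (e : Fin 3 →₀ ℕ) : ∃ g ∈ restrictSupport k E, monomial e (1:k) - g ∈ K := by
  have zero (h : monomial e (1:k) ∈ K) : ∃ g ∈ restrictSupport k E, monomial e (1:k) - g ∈ K :=
    ⟨0, Submodule.zero_mem _, by simpa using h⟩
  have inE (e' : Fin 3 →₀ ℕ) (h : e' ∈ E) (h' : monomial e (1:k) - monomial e' (1:k) ∈ K) :
      ∃ g ∈ restrictSupport k E, monomial e (1:k) - g ∈ K := by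
    refine ⟨_, ?_, h'⟩
    rw [mem_restrictSupport_iff]
    exact (Finset.coe_subset.2 support_monomial_subset).trans (by simpa using h)
  by_cases he : e ∈ E
  · exact inE e he (by simp)
  simp only [mon_eq] at zero inE ⊢
  generalize ha : e 0 = a at *
  generalize hb : e 1 = b at *
  generalize hc : e 2 = c at *
  simp only [E, Set.mem_ofPred_eq, ha, hb, hc] at he
  by_cases c3 : 3 ≤ c
  · obtain ⟨c, rfl⟩ := Nat.exists_eq_add_of_le c3
    apply zero
    convert K.mul_mem_left (X 0 ^ a * X 1 ^ b * X 2 ^ c) h3 using 1; ring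
  by_cases q : 2 ≤ a ∧ 2 ≤ b
  · obtain ⟨a, rfl⟩ := Nat.exists_eq_add_of_le q.1
    obtain ⟨b, rfl⟩ := Nat.exists_eq_add_of_le q.2
    apply zero
    convert K.mul_mem_left (X 0 ^ a * X 1 ^ b * X 2 ^ c) h4 using 1; ring
  by_cases q : 2 ≤ a ∧ 1 ≤ b ∧ 1 ≤ c
  · obtain ⟨a, rfl⟩ := Nat.exists_eq_add_of_le q.1
    obtain ⟨b, rfl⟩ := Nat.exists_eq_add_of_le q.2.1
    obtain ⟨c, rfl⟩ := Nat.exists_eq_add_of_le q.2.2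
    apply zero
    convert K.mul_mem_left (X 0 ^ a * X 1 ^ b * X 2 ^ c) h5 using 1; ring
  by_cases q : 1 ≤ a ∧ 2 ≤ b ∧ 1 ≤ c
  · obtain ⟨a, rfl⟩ := Nat.exists_eq_add_of_le q.1
    obtain ⟨b, rfl⟩ := Nat.exists_eq_add_of_le q.2.1
    obtain ⟨c, rfl⟩ := Nat.exists_eq_add_of_le q.2.2
    apply zero
    convert K.mul_mem_left (X 0 ^ a * X 1 ^ b * X 2 ^ c) h6 using 1; ring
  by_cases q : 1 ≤ a ∧ 1 ≤ b ∧ 2 ≤ c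
  · obtain ⟨a, rfl⟩ := Nat.exists_eq_add_of_le q.1
    obtain ⟨b, rfl⟩ := Nat.exists_eq_add_of_le q.2.1
    obtain ⟨c, rfl⟩ := Nat.exists_eq_add_of_le q.2.2
    apply zero
    convert K.mul_mem_left (X 0 ^ a * X 1 ^ b * X 2 ^ c) h7 using 1; ring
  by_cases q : 3 ≤ a
  · have hb' : b ≤ 1 := by omega
    obtain ⟨a, rfl⟩ := Nat.exists_eq_add_of_le q
    have key := K.mul_mem_left (X 0 ^ a * X 1 ^ b * X 2 ^ c) h1
    rcases Nat.eq_zero_or_pos c with rfl | hc0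
    · rcases Nat.eq_zero_or_pos a with rfl | ha0
      · apply inE (ev 0 (b+1) 2)
        · simp [E]; omega
        · convert key using 1; simp; ring
      · apply zero
        obtain ⟨a, rfl⟩ := Nat.exists_eq_add_of_le ha0
        convert K.add_mem key (K.mul_mem_left (X 0 ^ a * X 1 ^ b) h7) using 1; ring
    · apply zero
      obtain ⟨c, rfl⟩ := Nat.exists_eq_add_of_le hc0
      convert K.add_mem key (K.mul_mem_left (X 0 ^ a * X 1 ^ (b+1) * X 2 ^ c) h3) using 1; ring
  by_cases q : 3 ≤ b
  · have ha' : a ≤ 1 := by omega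
    obtain ⟨b, rfl⟩ := Nat.exists_eq_add_of_le q
    have key := K.mul_mem_left (X 0 ^ a * X 1 ^ b * X 2 ^ c) h2
    rcases Nat.eq_zero_or_pos c with rfl | hc0
    · rcases Nat.eq_zero_or_pos b with rfl | hb0
      · apply inE (ev (a+1) 0 2)
        · simp [E]; omega
        · convert key using 1; simp; ring
      · apply zero
        obtain ⟨b, rfl⟩ := Nat.exists_eq_add_of_le hb0
        convert K.add_mem key (K.mul_mem_left (X 0 ^ a * X 1 ^ b) h7) using 1; ring
    · apply zero
      obtain ⟨c, rfl⟩ := Nat.exists_eq_add_of_le hc0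
      convert K.add_mem key (K.mul_mem_left (X 0 ^ (a+1) * X 1 ^ b * X 2 ^ c) h3) using 1; ring
  exact absurd ⟨by omega, by omega, by omega, by omega, by omega, by omega, by omega⟩ he

lemma pol_red (K : Ideal (MvPolynomial (Fin 3) k))
    (h : ∀ e : Fin 3 →₀ ℕ, ∃ g ∈ restrictSupport k E, monomial e (1:k) - g ∈ K)
    (f : MvPolynomial (Fin 3) k) : ∃ g ∈ restrictSupport k E, f - g ∈ K := by
  induction f using MvPolynomial.induction_on' with
  | monomial e c =>
    obtain ⟨g, hg, h⟩ := h e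
    refine ⟨c • g, Submodule.smul_mem _ _ hg, ?_⟩
    convert K.mul_mem_left (C c) h using 1
    rw [mul_sub, C_mul_monomial, mul_one, C_mul']
  | add p q hp hq =>
    obtain ⟨a, ha, ha'⟩ := hp
    obtain ⟨b, hb, hb'⟩ := hq
    exact ⟨a + b, Submodule.add_mem _ ha hb, by
      convert K.add_mem ha' hb' using 1; ring⟩

lemma mon_I (I : Ideal (MvPolynomial (Fin 3) k))
    (h1 : (X 0 : MvPolynomial (Fin 3) k) ^ 2 ∈ I)
    (h2 : (X 1 : MvPolynomial (Fin 3) k) ^ 2 ∈ I)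
    (h3 : (X 0 : MvPolynomial (Fin 3) k) * X 1 * X 2 ∈ I)
    (h4 : (X 0 : MvPolynomial (Fin 3) k) * X 2 ^ 2 ∈ I)
    (h5 : (X 1 : MvPolynomial (Fin 3) k) * X 2 ^ 2 ∈ I)
    (a b c : ℕ) (h : 2 ≤ a ∨ 2 ≤ b ∨ (1 ≤ a ∧ 1 ≤ b ∧ 1 ≤ c) ∨ (1 ≤ a ∧ 2 ≤ c) ∨
      (1 ≤ b ∧ 2 ≤ c)) :
    (X 0 : MvPolynomial (Fin 3) k) ^ a * X 1 ^ b * X 2 ^ c ∈ I := by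
  rcases h with h | h | ⟨h, h', h''⟩ | ⟨h, h'⟩ | ⟨h, h'⟩ <;>
    obtain ⟨u, rfl⟩ := Nat.exists_eq_add_of_le h
  · convert I.mul_mem_left (X 0 ^ u * X 1 ^ b * X 2 ^ c) h1 using 1; ring
  · convert I.mul_mem_left (X 0 ^ a * X 1 ^ u * X 2 ^ c) h2 using 1; ring
  · obtain ⟨v, rfl⟩ := Nat.exists_eq_add_of_le h'
    obtain ⟨w, rfl⟩ := Nat.exists_eq_add_of_le h''
    convert I.mul_mem_left (X 0 ^ u * X 1 ^ v * X 2 ^ w) h3 using 1; ring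
  · obtain ⟨w, rfl⟩ := Nat.exists_eq_add_of_le h'
    convert I.mul_mem_left (X 0 ^ u * X 1 ^ b * X 2 ^ w) h4 using 1; ring
  · obtain ⟨w, rfl⟩ := Nat.exists_eq_add_of_le h'
    convert I.mul_mem_left (X 0 ^ a * X 1 ^ u * X 2 ^ w) h5 using 1; ring

lemma ring_aux {A : Type*} [CommRing A] (x y z : A) (r1 : x ^ 3 - y * z ^ 2 = 0)
    (r2 : y ^ 3 - x * z ^ 2 = 0) (r3 : z ^ 3 = 0) (q : A)
    (hq : q = x ^ 2 ∨ q = y ^ 2 ∨ q = x * y * z ∨ q = x * z ^ 2 ∨ q = y * z ^ 2 ∨ q = z ^ 3) :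
    x ^ 2 * y ^ 2 * q = 0 ∧ x ^ 2 * y * z * q = 0 ∧ x * y ^ 2 * z * q = 0 ∧
      x * y * z ^ 2 * q = 0 := by
  rcases hq with rfl | rfl | rfl | rfl | rfl | rfl <;> refine ⟨?_, ?_, ?_, ?_⟩ <;> grind

lemma easy (J I : Ideal (MvPolynomial (Fin 3) k))
    (hJ : J = Ideal.span {(X 0 : MvPolynomial (Fin 3) k) ^ 3 - X 1 * X 2 ^ 2,
          X 1 ^ 3 - X 0 * X 2 ^ 2, X 2 ^ 3})
    (hI : I = Ideal.span {(X 0 : MvPolynomial (Fin 3) k) ^ 2, X 1 ^ 2,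
      X 0 * X 1 * X 2, X 0 * X 2 ^ 2, X 1 * X 2 ^ 2, X 2 ^ 3}) :
    Ideal.span {(X 0 : MvPolynomial (Fin 3) k) ^ 3 - X 1 * X 2 ^ 2,
        X 1 ^ 3 - X 0 * X 2 ^ 2, X 2 ^ 3,
        X 0 ^ 2 * X 1 ^ 2, X 0 ^ 2 * X 1 * X 2, X 0 * X 1 ^ 2 * X 2,
        X 0 * X 1 * X 2 ^ 2} * I ≤ J := by
  have r1 : (X 0 : MvPolynomial (Fin 3) k) ^ 3 - X 1 * X 2 ^ 2 ∈ J :=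
    hJ ▸ Ideal.subset_span (by simp)
  have r2 : (X 1 : MvPolynomial (Fin 3) k) ^ 3 - X 0 * X 2 ^ 2 ∈ J :=
    hJ ▸ Ideal.subset_span (by simp)
  have r3 : (X 2 : MvPolynomial (Fin 3) k) ^ 3 ∈ J :=
    hJ ▸ Ideal.subset_span (by simp)
  rw [hI, Ideal.span_mul_span', Ideal.span_le]
  rintro _ ⟨p, hp, q, hq, rfl⟩
  rw [SetLike.mem_coe]
  simp only [Set.mem_insert_iff, Set.mem_singleton_iff] at hp hq
  clear hJ hI
  have hq' : Ideal.Quotient.mk J q = Ideal.Quotient.mk J (X 0) ^ 2 ∨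
      Ideal.Quotient.mk J q = Ideal.Quotient.mk J (X 1) ^ 2 ∨
      Ideal.Quotient.mk J q = Ideal.Quotient.mk J (X 0) * Ideal.Quotient.mk J (X 1)
        * Ideal.Quotient.mk J (X 2) ∨
      Ideal.Quotient.mk J q = Ideal.Quotient.mk J (X 0) * Ideal.Quotient.mk J (X 2) ^ 2 ∨
      Ideal.Quotient.mk J q = Ideal.Quotient.mk J (X 1) * Ideal.Quotient.mk J (X 2) ^ 2 ∨
      Ideal.Quotient.mk J q = Ideal.Quotient.mk J (X 2) ^ 3 := by
    simp only [← map_pow, ← map_mul]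
    exact hq.imp (congrArg _) (Or.imp (congrArg _) (Or.imp (congrArg _)
      (Or.imp (congrArg _) (Or.imp (congrArg _) (congrArg _)))))
  have r1' : Ideal.Quotient.mk J (X 0) ^ 3 -
      Ideal.Quotient.mk J (X 1) * Ideal.Quotient.mk J (X 2) ^ 2 = 0 := by
    simpa only [map_sub, map_mul, map_pow] using Ideal.Quotient.eq_zero_iff_mem.2 r1
  have r2' : Ideal.Quotient.mk J (X 1) ^ 3 -
      Ideal.Quotient.mk J (X 0) * Ideal.Quotient.mk J (X 2) ^ 2 = 0 := by
    simpa only [map_sub, map_mul, map_pow] using Ideal.Quotient.eq_zero_iff_mem.2 r2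
  have r3' : Ideal.Quotient.mk J (X 2) ^ 3 = 0 := by
    simpa only [map_pow] using Ideal.Quotient.eq_zero_iff_mem.2 r3
  obtain ⟨a1, a2, a3, a4⟩ := ring_aux _ _ _ r1' r2' r3' _ hq'
  simp only [← map_pow, ← map_mul, Ideal.Quotient.eq_zero_iff_mem] at a1 a2 a3 a4
  rcases hp with h | h | h | h | h | h | h
  · exact h ▸ J.mul_mem_right _ r1
  · exact h ▸ J.mul_mem_right _ r2
  · exact h ▸ J.mul_mem_right _ r3
  · exact h ▸ a1
  · exact h ▸ a2
  · exact h ▸ a3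
  · exact h ▸ a4

end helpers

/-- **Example 2.5 (second link).** Let `k` be a field, `𝓠 = k[X, Y, Z]`, and
`𝓘 = (X², Y², XYZ, XZ², YZ², Z³)`.  Then
`(X³ − YZ², Y³ − XZ², Z³) : 𝓘 = (X³ − YZ², Y³ − XZ², Z³, X²Y², X²YZ, XY²Z, XYZ²)`.
Here `X = X 0`, `Y = X 1`, `Z = X 2` in `MvPolynomial (Fin 3) k`. -/
theorem stmt_13 (k : Type*) [Field k]
    (𝓘 : Ideal (MvPolynomial (Fin 3) k))
    (h𝓘 : 𝓘 = Ideal.span {(X 0 : MvPolynomial (Fin 3) k) ^ 2, X 1 ^ 2,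
      X 0 * X 1 * X 2, X 0 * X 2 ^ 2, X 1 * X 2 ^ 2, X 2 ^ 3}) :
    Submodule.colon
        (Ideal.span {(X 0 : MvPolynomial (Fin 3) k) ^ 3 - X 1 * X 2 ^ 2,
          X 1 ^ 3 - X 0 * X 2 ^ 2, X 2 ^ 3}) 𝓘 =
      Ideal.span {(X 0 : MvPolynomial (Fin 3) k) ^ 3 - X 1 * X 2 ^ 2,
        X 1 ^ 3 - X 0 * X 2 ^ 2, X 2 ^ 3,
        X 0 ^ 2 * X 1 ^ 2, X 0 ^ 2 * X 1 * X 2, X 0 * X 1 ^ 2 * X 2,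
        X 0 * X 1 * X 2 ^ 2} := by
  have hle := easy _ 𝓘 rfl h𝓘
  refine le_antisymm ?_ ?_
  · intro f hf
    obtain ⟨g, hg, hfg⟩ := pol_red _ (mon_red (k := k) (Ideal.span {(X 0 : MvPolynomial (Fin 3) k) ^ 3 - X 1 * X 2 ^ 2,
        X 1 ^ 3 - X 0 * X 2 ^ 2, X 2 ^ 3,
        X 0 ^ 2 * X 1 ^ 2, X 0 ^ 2 * X 1 * X 2, X 0 * X 1 ^ 2 * X 2,
        X 0 * X 1 * X 2 ^ 2}) (Ideal.subset_span (by simp)) (Ideal.subset_span (by simp))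
        (Ideal.subset_span (by simp)) (Ideal.subset_span (by simp)) (Ideal.subset_span (by simp))
        (Ideal.subset_span (by simp)) (Ideal.subset_span (by simp))) f
    suffices g = 0 by simpa [this] using hfg
    rw [mem_restrictSupport_iff] at hg
    have hg' (e : Fin 3 →₀ ℕ) (he : e ∉ E) : coeff e g = 0 := by
      by_contra h
      exact he (hg (by simpa using h))
    ext e
    rw [coeff_zero]
    by_cases he : e ∈ E
    swap
    · exact hg' e he
    have hm := mon_I 𝓘 (h𝓘 ▸ Ideal.subset_span (by simp)) (h𝓘 ▸ Ideal.subset_span (by simp))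
      (h𝓘 ▸ Ideal.subset_span (by simp)) (h𝓘 ▸ Ideal.subset_span (by simp))
      (h𝓘 ▸ Ideal.subset_span (by simp)) (2 - e 0) (2 - e 1) (2 - e 2)
      (by simp only [E, Set.mem_ofPred_eq] at he; omega)
    have h1 := Submodule.mem_colon.1 hf _ hm
    have h2 := hle (Ideal.mul_mem_mul hfg hm)
    have h3 := phi_J _ (Ideal.sub_mem _ h1 h2)
    rw [smul_eq_mul, ← sub_mul, sub_sub_cancel, phi_mul, if_pos (by omega)] at h3
    obtain ⟨e0, e1, e2, -⟩ := he
    rw [hg' (ev (5 - _) _ _) (by simp [E]; omega), hg' (ev _ (5 - _) _) (by simp [E]; omega)] at h3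
    have : e = ev (2 - (2 - e 0)) (2 - (2 - e 1)) (2 - (2 - e 2)) := by
      rw [ev_eq]; omega
    rw [this]
    simpa using h3
  · intro f hf
    exact Submodule.mem_colon.2 fun p hp => hle (Ideal.mul_mem_mul hf hp)
end
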